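/- arXiv:1603.07718 — 3 statements merged into one kernel-verified Lean document; each statement's English description precedes it below -/
import Mathlib

section
/- Let k ⊆ K ⊆ L be a tower of fields with [L:K] = [K:k] = 2 and L/k separable, and suppose K is the unique field strictly between k and L. Then for every β ∈ Kˣ there exists a finite separable field extension F/k such that (i) the image β ⊗ 1 of β in (K ⊗_k F)ˣ is a norm from (L ⊗_k F)ˣ, and (ii) for every finite separable field extension F'/k such that the image of β in (K ⊗_k F')ˣ is a norm from (L ⊗_k F')ˣ, the degree [F:k] divides [F':k]. -/
open TensorProduct

/-- `β ∈ Kˣ` becomes a norm from `(L ⊗[k] F)ˣ` to `(K ⊗[k] F)ˣ`, where `L ⊗[k] F` is a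
`(K ⊗[k] F)`-algebra via the map induced by the inclusion `K ⊆ L`. -/
def IsNormFrom (k K L F : Type) [Field k] [Field K] [Field L] [Field F]
    [Algebra k K] [Algebra k L] [Algebra K L] [IsScalarTower k K L] [Algebra k F]
    (β : K) : Prop :=
  letI : Algebra (K ⊗[k] F) (L ⊗[k] F) :=
    ((Algebra.TensorProduct.map (IsScalarTower.toAlgHom k K L) (AlgHom.id k F)).toRingHom).toAlgebra
  ∃ x : (L ⊗[k] F)ˣ,
    Algebra.norm (K ⊗[k] F) (x : L ⊗[k] F) = (β : K) ⊗ₜ[k] (1 : F)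

open Polynomial in
lemma exists_odd_irreducible_factor {k : Type*} [Field k] :
    ∀ (n : ℕ) (h : k[X]), h.natDegree = n → Odd n →
      ∃ r : k[X], Irreducible r ∧ Odd r.natDegree ∧ r ∣ h := by
  intro n
  induction n using Nat.strong_induction_on with
  | _ n ih =>
    intro h hn hodd
    have h0 : h ≠ 0 := by
      rintro rfl
      simp only [natDegree_zero] at hn
      subst hn
      exact absurd hodd (by decide)
    have hu : ¬ IsUnit h := fun hu => by
      rw [natDegree_eq_zero_of_isUnit hu] at hn
      subst hn
      exact absurd hodd (by decide)
    obtain ⟨r, hr, g, rfl⟩ := WfDvdMonoid.exists_irreducible_factor hu h0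
    have hg0 : g ≠ 0 := right_ne_zero_of_mul h0
    rw [natDegree_mul hr.ne_zero hg0] at hn
    by_cases hro : Odd r.natDegree
    · exact ⟨r, hr, hro, dvd_mul_right _ _⟩
    · have hpos : 0 < r.natDegree := hr.natDegree_pos
      obtain ⟨q, hq, hqo, hqd⟩ := ih g.natDegree (by omega) g rfl (by
        rw [Nat.odd_iff] at *
        omega)
      exact ⟨q, hq, hqo, hqd.mul_left r⟩

/-- The value at `x` of the quadratic form with coefficient matrix `a`. -/
def quadVal {k R ι : Type*} [CommRing k] [CommRing R] [Algebra k R] [Fintype ι]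
    (a : ι → ι → k) (x : ι → R) : R :=
  ∑ i, ∑ j, algebraMap k R (a i j) * x i * x j

lemma map_quadVal {k R S ι : Type*} [CommRing k] [CommRing R] [CommRing S] [Algebra k R]
    [Algebra k S] [Fintype ι] (a : ι → ι → k) (φ : R →ₐ[k] S) (x : ι → R) :
    φ (quadVal a x) = quadVal a (fun i => φ (x i)) := by
  simp [quadVal, map_sum]

lemma quadVal_mul {k R ι : Type*} [CommRing k] [CommRing R] [Algebra k R] [Fintype ι]
    (a : ι → ι → k) (g : R) (x : ι → R) :
    quadVal a (fun i => g * x i) = g ^ 2 * quadVal a x := by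
  simp only [quadVal, Finset.mul_sum]
  exact Finset.sum_congr rfl fun i _ => Finset.sum_congr rfl fun j _ => by ring

open Polynomial in
lemma coeff_quadVal {k ι : Type*} [Field k] [Fintype ι] (a : ι → ι → k) (f : ι → k[X]) (D : ℕ)
    (hf : ∀ i, (f i).natDegree ≤ D) :
    (quadVal a f).coeff (D + D) = quadVal a (fun i => (f i).coeff D) := by
  simp only [quadVal, finsetSum_coeff]
  refine Finset.sum_congr rfl fun i _ => Finset.sum_congr rfl fun j _ => ?_
  rw [mul_assoc, Polynomial.algebraMap_apply, coeff_C_mul,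
    coeff_mul_add_eq_of_natDegree_le (hf i) (hf j), mul_assoc]

open Polynomial in
lemma natDegree_quadVal_le {k ι : Type*} [Field k] [Fintype ι] (a : ι → ι → k) (f : ι → k[X])
    (D : ℕ) (hf : ∀ i, (f i).natDegree ≤ D) : (quadVal a f).natDegree ≤ D + D := by
  refine natDegree_sum_le_of_forall_le _ _ fun i _ =>
    natDegree_sum_le_of_forall_le _ _ fun j _ => ?_
  rw [mul_assoc, Polynomial.algebraMap_apply]
  exact (natDegree_C_mul_le _ _).trans (natDegree_mul_le_of_le (hf i) (hf j))

open Polynomial in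
/-- Polynomial form of Springer's theorem: a quadratic form with a nontrivial zero modulo an
irreducible polynomial of odd degree has a nontrivial zero. -/
lemma exists_quadVal_eq_zero_of_dvd {k ι : Type*} [Field k] [Fintype ι] (a : ι → ι → k) :
    ∀ (n : ℕ) (p : k[X]), Irreducible p → p.natDegree = n → Odd n →
      ∀ f : ι → k[X], (∃ i, ¬ p ∣ f i) → p ∣ quadVal a f →
        ∃ v : ι → k, v ≠ 0 ∧ quadVal a v = 0 := by
  classical
  intro n
  induction n using Nat.strong_induction_on with
  | _ n ih =>
    intro p hp hpn hodd f ⟨i₀, hi₀⟩ hdvd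
    by_contra! hanis
    let _ : NormalizedGCDMonoid k[X] := UniqueFactorizationMonoid.toNormalizedGCDMonoid _
    set f' : ι → k[X] := fun i => f i % p with hf'
    have hdiff : ∀ i, p ∣ f i - f' i := fun i => by
      change p ∣ f i - f i % p
      rw [EuclideanDomain.mod_eq_sub_mul_div]
      simp
    have hf'0 : f' i₀ ≠ 0 := fun h => hi₀ (by simpa [h] using hdiff i₀)
    have hdvd' : p ∣ quadVal a f' := by
      have : (Ideal.Quotient.mkₐ k (Ideal.span {p})) (quadVal a f')
          = (Ideal.Quotient.mkₐ k (Ideal.span {p})) (quadVal a f) := by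
        rw [map_quadVal, map_quadVal]
        congr 1
        funext i
        symm
        rw [Ideal.Quotient.mkₐ_eq_mk, Ideal.Quotient.eq, Ideal.mem_span_singleton]
        exact hdiff i
      rw [← Ideal.mem_span_singleton, ← Ideal.Quotient.eq_zero_iff_mem] at hdvd ⊢
      rw [← hdvd]
      simpa using this
    obtain ⟨g, hg, hg1⟩ := Finset.extract_gcd f' (s := Finset.univ) ⟨i₀, Finset.mem_univ _⟩
    set G := Finset.univ.gcd f' with hG
    have hfg : f' = fun i => G * g i := funext fun i => hg i (Finset.mem_univ i)
    have hG0 : G ≠ 0 := fun h => hf'0 (by rw [hfg]; simp [h])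
    have hdeg : ∀ i, (g i).natDegree ≤ n - 1 := fun i => by
      by_cases hgi : g i = 0
      · simp [hgi]
      · have h1 : (f' i).natDegree < n := by
          rw [← hpn]
          exact natDegree_mod_lt _ (by rw [hpn]; rintro rfl; exact absurd hodd (by decide))
        rw [hfg] at h1
        simp only at h1
        rw [natDegree_mul hG0 hgi] at h1
        omega
    have hpG : ¬ p ∣ G := fun h => by
      have h1 : p ∣ f' i₀ := by rw [hfg]; exact h.mul_right _
      exact hi₀ ((dvd_sub_left h1).1 (hdiff i₀))
    have hpg : p ∣ quadVal a g := by
      rw [hfg, quadVal_mul] at hdvd'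
      exact (hp.prime.dvd_or_dvd hdvd').resolve_left fun h => hpG (hp.prime.dvd_of_dvd_pow h)
    have hne : (Finset.univ : Finset ι).Nonempty := ⟨i₀, Finset.mem_univ _⟩
    obtain ⟨i₁, -, hi₁⟩ := Finset.exists_max_image Finset.univ (fun i => (g i).natDegree) hne
    set D := (g i₁).natDegree with hD
    have hgi₁ : g i₁ ≠ 0 := fun h => by
      have hz : ∀ i, (g i).natDegree = 0 := fun i => by
        have := hi₁ i (Finset.mem_univ i)
        rw [hD, h] at this
        simpa using this
      have hlead : (fun i => (g i).coeff 0) = 0 := by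
        by_contra hne0
        refine hanis _ hne0 ?_
        have h2 := coeff_quadVal a g 0 (fun i => (hz i).le)
        rw [← h2]
        have h3 := natDegree_quadVal_le a g 0 (fun i => (hz i).le)
        by_contra h4
        have h5 : quadVal a g ≠ 0 := fun h => h4 (by rw [h]; simp)
        have h6 := natDegree_le_of_dvd hpg h5
        have : 0 < p.natDegree := hp.natDegree_pos
        omega
      apply hf'0
      rw [hfg]
      have h7 := eq_C_of_natDegree_eq_zero (hz i₀)
      have h8 := congrFun hlead i₀
      simp only [Pi.zero_apply] at h8
      simp only
      rw [h7, h8]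
      simp
    have hlead : (quadVal a g).coeff (D + D) ≠ 0 := by
      rw [coeff_quadVal a g D fun i => hi₁ i (Finset.mem_univ i)]
      refine hanis _ fun h => hgi₁ ?_
      simpa [hD] using congrFun h i₁
    have hdegq : (quadVal a g).natDegree = D + D :=
      le_antisymm (natDegree_quadVal_le a g D fun i => hi₁ i (Finset.mem_univ i))
        (le_natDegree_of_ne_zero hlead)
    obtain ⟨h, hh⟩ := hpg
    have hq0 : quadVal a g ≠ 0 := fun h0 => hlead (by rw [h0]; simp)
    have hh0 : h ≠ 0 := fun h0 => hq0 (by rw [hh, h0, mul_zero])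
    have hdegh : n + h.natDegree = D + D := by
      rw [← hdegq, hh, natDegree_mul hp.ne_zero hh0, hpn]
    have hDn : D ≤ n - 1 := hdeg i₁
    have hho : Odd h.natDegree := by
      rw [Nat.odd_iff] at *
      omega
    obtain ⟨r, hr, hro, hrd⟩ := exists_odd_irreducible_factor _ h rfl hho
    have hrn : r.natDegree ≤ h.natDegree := natDegree_le_of_dvd hrd hh0
    have hnpos : 0 < n := hodd.pos
    obtain ⟨v, hv, hv0⟩ := ih r.natDegree (by omega) r hr rfl hro g (by
      by_contra! hall
      have : r ∣ Finset.univ.gcd g := Finset.dvd_gcd fun i _ => hall i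
      rw [hg1] at this
      exact hr.not_isUnit (isUnit_of_dvd_one this)) (hh ▸ hrd.mul_left p)
    exact hanis v hv hv0

open Polynomial in
/-- Springer's theorem for finite separable extensions of odd degree. -/
theorem exists_quadVal_eq_zero_of_odd {k M ι : Type*} [Field k] [Field M] [Algebra k M]
    [FiniteDimensional k M] [Algebra.IsSeparable k M] [Fintype ι]
    (hodd : Odd (Module.finrank k M)) (a : ι → ι → k) (v : ι → M) (hv : v ≠ 0)
    (hav : quadVal a v = 0) : ∃ w : ι → k, w ≠ 0 ∧ quadVal a w = 0 := by
  obtain ⟨α, hα⟩ := Field.exists_primitive_element k M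
  have halg : IsIntegral k α := Algebra.IsIntegral.isIntegral α
  have hsurj : ∀ x : M, ∃ f : k[X], aeval α f = x := fun x => by
    have hx : x ∈ (⊤ : IntermediateField k M) := trivial
    rw [← hα, ← IntermediateField.mem_toSubalgebra,
      IntermediateField.adjoin_simple_toSubalgebra_of_isAlgebraic halg.isAlgebraic,
      Algebra.adjoin_singleton_eq_range_aeval] at hx
    exact hx
  choose f hf using fun i => hsurj (v i)
  refine exists_quadVal_eq_zero_of_dvd a _ (minpoly k α) (minpoly.irreducible halg) rfl ?_ f ?_ ?_
  · rwa [← IntermediateField.adjoin.finrank halg, hα, IntermediateField.finrank_top']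
  · by_contra! h
    exact hv (funext fun i => by rw [← hf i]; exact (minpoly.dvd_iff).1 (h i))
  · rw [minpoly.dvd_iff, map_quadVal]
    simpa [hf] using hav

/-- `1, w` is a basis of `S` over `R` and `w ^ 2 = w - m`. -/
structure IsQuadGen {R S : Type*} [CommRing R] [CommRing S] [Algebra R S] (w : S) (m : R) :
    Prop where
  sq : w * w = w - algebraMap R S m
  exists_eq : ∀ z : S, ∃ c d : R, z = algebraMap R S c + algebraMap R S d * w
  indep : ∀ c d : R, algebraMap R S c + algebraMap R S d * w = 0 → c = 0 ∧ d = 0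

/-- The norm of `a + b u` when `u ^ 2 = u - n`. -/
def quadNorm {R : Type*} [CommRing R] (n a b : R) : R := a * a + a * b + n * (b * b)

lemma map_quadNorm {R S : Type*} [CommRing R] [CommRing S] (φ : R →+* S) (n a b : R) :
    φ (quadNorm n a b) = quadNorm (φ n) (φ a) (φ b) := by
  simp [quadNorm]

namespace IsQuadGen

section Basic

variable {R S : Type*} [CommRing R] [CommRing S] [Algebra R S] {w : S} {m : R}

lemma ext (h : IsQuadGen w m) {a b c d : R}
    (he : algebraMap R S a + algebraMap R S b * w = algebraMap R S c + algebraMap R S d * w) :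
    a = c ∧ b = d := by
  have := h.indep (a - c) (b - d) (by
    rw [map_sub, map_sub]
    linear_combination he)
  exact ⟨sub_eq_zero.1 this.1, sub_eq_zero.1 this.2⟩

lemma linearIndependent (h : IsQuadGen w m) : LinearIndependent R ![1, w] := by
  rw [LinearIndependent.pair_iff]
  intro s t hst
  exact h.indep s t (by simpa [Algebra.smul_def] using hst)

lemma span_eq_top (h : IsQuadGen w m) : Submodule.span R (Set.range ![1, w]) = ⊤ := by
  rw [eq_top_iff]
  rintro z -
  obtain ⟨c, d, rfl⟩ := h.exists_eq z
  have h1 : (1 : S) ∈ Submodule.span R (Set.range ![1, w]) := Submodule.subset_span ⟨0, rfl⟩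
  have h2 : w ∈ Submodule.span R (Set.range ![1, w]) := Submodule.subset_span ⟨1, rfl⟩
  have := add_mem (Submodule.smul_mem _ c h1) (Submodule.smul_mem _ d h2)
  simpa [Algebra.smul_def] using this

/-- The basis `1, w`. -/
noncomputable def basis (h : IsQuadGen w m) : Module.Basis (Fin 2) R S :=
  Module.Basis.mk h.linearIndependent h.span_eq_top.ge

lemma basis_zero (h : IsQuadGen w m) : h.basis 0 = 1 := by simp [basis]

lemma basis_one (h : IsQuadGen w m) : h.basis 1 = w := by simp [basis]

lemma repr_eq (h : IsQuadGen w m) (c d : R) :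
    h.basis.repr (algebraMap R S c + algebraMap R S d * w) =
      Finsupp.single 0 c + Finsupp.single 1 d := by
  have : algebraMap R S c + algebraMap R S d * w = c • h.basis 0 + d • h.basis 1 := by
    rw [h.basis_zero, h.basis_one]
    simp [Algebra.smul_def]
  rw [this]
  simp

lemma norm_eq (h : IsQuadGen w m) (a b : R) :
    Algebra.norm R (algebraMap R S a + algebraMap R S b * w) = quadNorm m a b := by
  rw [Algebra.norm_eq_matrix_det h.basis, Matrix.det_fin_two]
  simp only [Algebra.leftMulMatrix_eq_repr_mul, h.basis_zero, h.basis_one]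
  have h2 : (algebraMap R S a + algebraMap R S b * w) * w =
      algebraMap R S (-(b * m)) + algebraMap R S (a + b) * w := by
    simp only [map_neg, map_mul, map_add]
    linear_combination algebraMap R S b * h.sq
  rw [h2, mul_one, h.repr_eq, h.repr_eq]
  simp [quadNorm]
  ring

lemma mul_conj_eq (h : IsQuadGen w m) (a b : R) :
    (algebraMap R S a + algebraMap R S b * w) *
      (algebraMap R S (a + b) + algebraMap R S (-b) * w) = algebraMap R S (quadNorm m a b) := by
  simp only [quadNorm, map_neg, map_mul, map_add]
  linear_combination -(algebraMap R S b) ^ 2 * h.sq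

lemma exists_unit_norm_eq_iff (h : IsQuadGen w m) {β : R} (hβ : IsUnit β) :
    (∃ x : Sˣ, Algebra.norm R (x : S) = β) ↔ ∃ a b : R, quadNorm m a b = β := by
  constructor
  · rintro ⟨x, hx⟩
    obtain ⟨a, b, hab⟩ := h.exists_eq x
    exact ⟨a, b, by rw [← hx, hab, h.norm_eq]⟩
  · rintro ⟨a, b, hab⟩
    have hu : IsUnit (algebraMap R S a + algebraMap R S b * w) := by
      refine isUnit_of_mul_isUnit_left (y := algebraMap R S (a + b) + algebraMap R S (-b) * w) ?_
      rw [h.mul_conj_eq, hab]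
      exact hβ.map _
    exact ⟨hu.unit, by rw [IsUnit.unit_spec, h.norm_eq, hab]⟩

end Basic

section Field

variable {k K : Type*} [Field k] [Field K] [Algebra k K] {w : K} {m : k}

/-- The norm form of a quadratic field extension is anisotropic. -/
lemma eq_zero_of_quadNorm_eq_zero (h : IsQuadGen w m) {a b : k} (hab : quadNorm m a b = 0) :
    a = 0 ∧ b = 0 := by
  have h1 := h.mul_conj_eq a b
  rw [hab, map_zero, mul_eq_zero] at h1
  rcases h1 with h1 | h1
  · exact h.indep _ _ h1
  · obtain ⟨h2, h3⟩ := h.indep _ _ h1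
    have hb : b = 0 := by simpa using h3
    exact ⟨by simpa [hb] using h2, hb⟩

lemma disc_ne_zero (h : IsQuadGen w m) : 1 - 4 * m ≠ 0 := by
  intro h0
  have := h.eq_zero_of_quadNorm_eq_zero (a := -1) (b := 2) (by
    rw [quadNorm]
    linear_combination -h0)
  simpa using this.1

end Field

end IsQuadGen

lemma exists_isQuadGen (k K : Type*) [Field k] [Field K] [Algebra k K] [Algebra.IsSeparable k K]
    (hK : Module.finrank k K = 2) : ∃ (w : K) (m : k), IsQuadGen w m := by
  have : FiniteDimensional k K := Module.finite_of_finrank_pos (by omega)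
  obtain ⟨x, hx⟩ : ∃ x : K, ∀ c : k, algebraMap k K c ≠ x := by
    by_contra! hall
    have hle : Module.finrank k K ≤ 1 :=
      finrank_le_one (1 : K) fun z => by
        obtain ⟨c, hc⟩ := hall z
        exact ⟨c, by rw [Algebra.smul_def, mul_one, hc]⟩
    omega
  have hgen : ∀ y : K, (∀ c : k, algebraMap k K c ≠ y) →
      (∀ c d : k, algebraMap k K c + algebraMap k K d * y = 0 → c = 0 ∧ d = 0) ∧
        ∀ z : K, ∃ c d : k, z = algebraMap k K c + algebraMap k K d * y := by
    intro y hy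
    have hind : ∀ c d : k, algebraMap k K c + algebraMap k K d * y = 0 → c = 0 ∧ d = 0 := by
      intro c d hcd
      have hd : d = 0 := by
        by_contra hd
        refine hy (-c / d) ?_
        have hd' : algebraMap k K d ≠ 0 := by simpa using hd
        rw [map_div₀, map_neg, div_eq_iff hd']
        linear_combination -hcd
      subst hd
      simpa using hcd
    refine ⟨hind, fun z => ?_⟩
    have hli : LinearIndependent k ![1, y] := by
      rw [LinearIndependent.pair_iff]
      intro s t hst
      exact hind s t (by simpa [Algebra.smul_def] using hst)
    have hspan := hli.span_eq_top_of_card_eq_finrank (by simp [hK])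
    have hz : z ∈ Submodule.span k (Set.range ![1, y]) := hspan ▸ Submodule.mem_top
    rw [Matrix.range_cons, Matrix.range_cons, Matrix.range_empty, Set.union_empty,
      Set.singleton_union, Submodule.mem_span_pair] at hz
    obtain ⟨c, d, h⟩ := hz
    exact ⟨c, d, by rw [← h]; simp [Algebra.smul_def]⟩
  suffices ∃ (w : K) (m : k), (∀ c : k, algebraMap k K c ≠ w) ∧ w * w = w - algebraMap k K m by
    obtain ⟨w, m, hw, hm⟩ := this
    exact ⟨w, m, hm, (hgen w hw).2, (hgen w hw).1⟩
  obtain ⟨c, d, hcd⟩ := (hgen x hx).2 (x * x)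
  by_cases hd : d = 0
  · have h2 : (2 : k) ≠ 0 := by
      intro h2
      have hsep := Algebra.IsSeparable.isSeparable k x
      have halg : IsIntegral k x := Algebra.IsIntegral.isIntegral x
      have hdvd : minpoly k x ∣ Polynomial.X ^ 2 - Polynomial.C c := by
        rw [minpoly.dvd_iff]
        simp only [map_sub, map_pow, Polynomial.aeval_X, Polynomial.aeval_C]
        rw [hd] at hcd
        simp only [map_zero, zero_mul] at hcd
        linear_combination hcd
      have hdeg : 2 ≤ (minpoly k x).natDegree := by
        rw [minpoly.two_le_natDegree_iff halg]
        rintro ⟨c, hc⟩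
        exact hx c hc
      have heq : minpoly k x = Polynomial.X ^ 2 - Polynomial.C c :=
        (Polynomial.eq_of_monic_of_dvd_of_natDegree_le (minpoly.monic halg)
          (Polynomial.monic_X_pow_sub_C c two_ne_zero) hdvd (by
            rw [Polynomial.natDegree_X_pow_sub_C]; exact hdeg)).symm
      rw [IsSeparable, heq, Polynomial.separable_def] at hsep
      have hder : Polynomial.derivative (Polynomial.X ^ 2 - Polynomial.C c) = 0 := by
        rw [Polynomial.derivative_sub, Polynomial.derivative_C, sub_zero,
          Polynomial.derivative_X_sq, h2]
        simp
      rw [hder, isCoprime_zero_right] at hsep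
      have := Polynomial.natDegree_eq_zero_of_isUnit hsep
      rw [Polynomial.natDegree_X_pow_sub_C] at this
      omega
    refine ⟨x + algebraMap k K (1 / 2), 1 / 4 - c, fun e he => hx (e - 1 / 2) ?_, ?_⟩
    · rw [map_sub, he]
      ring
    · have h3 : (2 : K) * algebraMap k K (1 / 2) = 1 := by
        rw [← map_ofNat (algebraMap k K) 2, ← map_mul, mul_one_div_cancel h2, map_one]
      have h4 : algebraMap k K (1 / 4) = algebraMap k K (1 / 2) * algebraMap k K (1 / 2) := by
        rw [← map_mul]
        congr 1
        have h5 : (4 : k) = 2 * 2 := by norm_num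
        rw [h5]
        field_simp
      rw [hd] at hcd
      simp only [map_zero, zero_mul] at hcd
      rw [map_sub, h4]
      linear_combination hcd + (x + algebraMap k K (1 / 2)) * h3
  · have hd' : algebraMap k K d ≠ 0 := by simpa using hd
    refine ⟨x / algebraMap k K d, -(c / (d * d)), fun e he => hx (e * d) ?_, ?_⟩
    · rw [map_mul, he, div_mul_cancel₀ _ hd']
    · rw [map_neg, map_div₀, map_mul]
      field_simp
      linear_combination hcd

attribute [local instance] Algebra.TensorProduct.rightAlgebra

lemma algebraMap_tensor_comm {k K : Type*} [Field k] [Field K] [Algebra k K] (F : Type*) [Field F]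
    [Algebra k F] (c : k) :
    algebraMap K (K ⊗[k] F) (algebraMap k K c) = algebraMap F (K ⊗[k] F) (algebraMap k F c) := by
  change algebraMap k K c ⊗ₜ[k] (1 : F) = 1 ⊗ₜ[k] algebraMap k F c
  rw [Algebra.algebraMap_eq_smul_one, Algebra.algebraMap_eq_smul_one, TensorProduct.smul_tmul]

/-- `1, w` is an `F`-basis of `K ⊗[k] F`. -/
lemma IsQuadGen.baseChange {k K : Type*} [Field k] [Field K] [Algebra k K] {w : K} {m : k}
    (h : IsQuadGen w m) (F : Type*) [Field F] [Algebra k F] :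
    IsQuadGen (algebraMap K (K ⊗[k] F) w) (algebraMap k F m) := by
  have hmap : ∀ c : F, algebraMap F (K ⊗[k] F) c = 1 ⊗ₜ[k] c := fun c => rfl
  have hmapK : ∀ c : K, algebraMap K (K ⊗[k] F) c = c ⊗ₜ[k] 1 := fun c => rfl
  refine ⟨?_, fun z => ?_, fun c d hcd => ?_⟩
  · rw [← map_mul, h.sq, map_sub, hmap, hmapK (algebraMap k K m),
      Algebra.algebraMap_eq_smul_one m, Algebra.algebraMap_eq_smul_one m,
      TensorProduct.smul_tmul]
  · induction z using TensorProduct.induction_on with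
    | zero => exact ⟨0, 0, by simp⟩
    | tmul x y =>
      obtain ⟨c, d, rfl⟩ := h.exists_eq x
      refine ⟨c • y, d • y, ?_⟩
      rw [hmap, hmap, hmapK, Algebra.TensorProduct.tmul_mul_tmul, one_mul, mul_one,
        TensorProduct.add_tmul, ← Algebra.smul_def, ← TensorProduct.smul_tmul,
        ← TensorProduct.smul_tmul, Algebra.algebraMap_eq_smul_one]
    | add x y hx hy =>
      obtain ⟨c, d, rfl⟩ := hx
      obtain ⟨c', d', rfl⟩ := hy
      exact ⟨c + c', d + d', by simp only [map_add]; ring⟩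
  · rw [hmap, hmap, hmapK, Algebra.TensorProduct.tmul_mul_tmul, one_mul, mul_one] at hcd
    have hcoord : ∀ i, (TensorProduct.lid k F)
        ((h.basis.coord i).rTensor F (1 ⊗ₜ[k] c + w ⊗ₜ[k] d)) = 0 := fun i => by
      rw [hcd, map_zero, map_zero]
    have h0 : h.basis.repr 1 = Finsupp.single 0 1 := by simpa using h.repr_eq 1 0
    have h1 : h.basis.repr w = Finsupp.single 1 1 := by simpa using h.repr_eq 0 1
    have e0 := hcoord 0
    have e1 := hcoord 1
    simp only [map_add, LinearMap.rTensor_tmul, TensorProduct.lid_tmul, Module.Basis.coord_apply,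
      h0, h1] at e0 e1
    exact ⟨by simpa using e0, by simpa using e1⟩

/-- `1, u` is a `K ⊗[k] F`-basis of `L ⊗[k] F`. -/
lemma IsQuadGen.tensor {k K L : Type*} [Field k] [Field K] [Field L] [Algebra k K] [Algebra k L]
    [Algebra K L] [IsScalarTower k K L] {u : L} {n : K} (h : IsQuadGen u n) (F : Type*) [Field F]
    [Algebra k F] :
    letI : Algebra (K ⊗[k] F) (L ⊗[k] F) :=
      ((Algebra.TensorProduct.map (IsScalarTower.toAlgHom k K L)
        (AlgHom.id k F)).toRingHom).toAlgebra
    IsQuadGen (u ⊗ₜ[k] (1 : F)) (n ⊗ₜ[k] (1 : F)) := by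
  let _ : Algebra (K ⊗[k] F) (L ⊗[k] F) :=
    ((Algebra.TensorProduct.map (IsScalarTower.toAlgHom k K L)
      (AlgHom.id k F)).toRingHom).toAlgebra
  have hmap : ∀ (c : K) (y : F), algebraMap (K ⊗[k] F) (L ⊗[k] F) (c ⊗ₜ y) =
      algebraMap K L c ⊗ₜ[k] y := fun c y => rfl
  refine ⟨?_, fun z => ?_, fun c d hcd => ?_⟩
  · rw [hmap, Algebra.TensorProduct.tmul_mul_tmul, h.sq, TensorProduct.sub_tmul, one_mul]
  · induction z using TensorProduct.induction_on with
    | zero => exact ⟨0, 0, by simp⟩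
    | tmul x y =>
      obtain ⟨c, d, rfl⟩ := h.exists_eq x
      refine ⟨c ⊗ₜ y, d ⊗ₜ y, ?_⟩
      rw [hmap, hmap, Algebra.TensorProduct.tmul_mul_tmul, mul_one, TensorProduct.add_tmul]
    | add x y hx hy =>
      obtain ⟨c, d, rfl⟩ := hx
      obtain ⟨c', d', rfl⟩ := hy
      exact ⟨c + c', d + d', by simp only [map_add]; ring⟩
  · let f : Fin 2 → L →ₗ[k] K := fun i => (h.basis.coord i).restrictScalars k
    have key : ∀ i, ∀ x : K ⊗[k] F,
        (f i).rTensor F (algebraMap (K ⊗[k] F) (L ⊗[k] F) x) = if i = 0 then x else 0 := by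
      intro i x
      induction x using TensorProduct.induction_on with
      | zero => simp
      | tmul x y =>
        rw [hmap, LinearMap.rTensor_tmul]
        have : f i (algebraMap K L x) = if i = 0 then x else 0 := by
          have h3 := h.repr_eq x 0
          rw [map_zero, zero_mul, add_zero] at h3
          change h.basis.repr (algebraMap K L x) i = _
          rw [h3]
          fin_cases i <;> simp
        rw [this]
        split_ifs <;> simp
      | add x y hx hy =>
        rw [map_add, map_add, hx, hy]
        split_ifs <;> simp
    have key' : ∀ i, ∀ x : K ⊗[k] F,
        (f i).rTensor F (algebraMap (K ⊗[k] F) (L ⊗[k] F) x * u ⊗ₜ[k] (1 : F)) =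
          if i = 1 then x else 0 := by
      intro i x
      induction x using TensorProduct.induction_on with
      | zero => simp
      | tmul x y =>
        rw [hmap, Algebra.TensorProduct.tmul_mul_tmul, LinearMap.rTensor_tmul, mul_one]
        have : f i (algebraMap K L x * u) = if i = 1 then x else 0 := by
          have h3 := h.repr_eq 0 x
          rw [map_zero, zero_add] at h3
          change h.basis.repr (algebraMap K L x * u) i = _
          rw [h3]
          fin_cases i <;> simp
        rw [this]
        split_ifs <;> simp
      | add x y hx hy =>
        rw [map_add, add_mul, map_add, hx, hy]
        split_ifs <;> simp
    have e : ∀ i, (f i).rTensor F (algebraMap (K ⊗[k] F) (L ⊗[k] F) c +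
        algebraMap (K ⊗[k] F) (L ⊗[k] F) d * u ⊗ₜ[k] (1 : F)) = 0 := fun i => by
      rw [hcd, map_zero]
    have e0 := e 0
    have e1 := e 1
    rw [map_add, key, key'] at e0 e1
    exact ⟨by simpa using e0, by simpa using e1⟩

lemma isNormFrom_iff {k K L F : Type} [Field k] [Field K] [Field L] [Field F]
    [Algebra k K] [Algebra k L] [Algebra K L] [IsScalarTower k K L] [Algebra k F]
    {u : L} {n : K} (h : IsQuadGen u n) {β : K} (hβ : β ≠ 0) :
    IsNormFrom k K L F β ↔
      ∃ a b : K ⊗[k] F, quadNorm (algebraMap K _ n) a b = algebraMap K (K ⊗[k] F) β := by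
  let _ : Algebra (K ⊗[k] F) (L ⊗[k] F) :=
    ((Algebra.TensorProduct.map (IsScalarTower.toAlgHom k K L)
      (AlgHom.id k F)).toRingHom).toAlgebra
  exact (h.tensor F).exists_unit_norm_eq_iff
    (β := algebraMap K (K ⊗[k] F) β) ((isUnit_iff_ne_zero.2 hβ).map _)

lemma quadNorm_anisotropic_of_odd {k M : Type*} [Field k] [Field M] [Algebra k M]
    [FiniteDimensional k M] [Algebra.IsSeparable k M] (hodd : Odd (Module.finrank k M)) {m : k}
    (hm : ∀ a b : k, quadNorm m a b = 0 → a = 0 ∧ b = 0) (a b : M)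
    (hab : quadNorm (algebraMap k M m) a b = 0) : a = 0 ∧ b = 0 := by
  have hval : ∀ {R : Type _} [CommRing R] [Algebra k R] (x : Fin 2 → R),
      quadVal ![![1, 1], ![0, m]] x = quadNorm (algebraMap k R m) (x 0) (x 1) := by
    intro R _ _ x
    simp only [quadVal, quadNorm, Fin.sum_univ_two, Matrix.cons_val_zero, Matrix.cons_val_one,
      map_one, map_zero]
    ring
  have hval' : ∀ x : Fin 2 → k,
      quadVal ![![1, 1], ![0, m]] x = quadNorm m (x 0) (x 1) := by
    intro x
    simp only [quadVal, quadNorm, Fin.sum_univ_two, Matrix.cons_val_zero, Matrix.cons_val_one,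
      Algebra.algebraMap_self, RingHom.id_apply]
    ring
  by_contra hne
  obtain ⟨w, hw, hw0⟩ := exists_quadVal_eq_zero_of_odd hodd ![![1, 1], ![0, m]] ![a, b]
    (fun h => hne ⟨congrFun h 0, congrFun h 1⟩) (by rw [hval]; simpa using hab)
  rw [hval'] at hw0
  obtain ⟨h0, h1⟩ := hm _ _ hw0
  exact hw (funext fun i => by fin_cases i <;> assumption)

lemma IsQuadGen.isField {F C : Type*} [Field F] [CommRing C] [Algebra F C] {w : C}
    {m : F} (h : IsQuadGen w m) (hm : ∀ a b : F, quadNorm m a b = 0 → a = 0 ∧ b = 0) :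
    IsField C := by
  have : Nontrivial C := by
    refine ⟨⟨w, 0, fun hw => ?_⟩⟩
    have := h.indep 0 1 (by simp [hw])
    exact one_ne_zero this.2
  refine ⟨exists_pair_ne C, mul_comm, fun {z} hz => ?_⟩
  obtain ⟨c, d, rfl⟩ := h.exists_eq z
  have hne : quadNorm m c d ≠ 0 := fun h0 => hz (by
    obtain ⟨rfl, rfl⟩ := hm _ _ h0
    simp)
  refine ⟨(algebraMap F C (c + d) + algebraMap F C (-d) * w) *
    algebraMap F C (quadNorm m c d)⁻¹, ?_⟩
  rw [← mul_assoc, h.mul_conj_eq, ← map_mul, mul_inv_cancel₀ hne, map_one]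

lemma isField_tensor_of_odd {k K : Type*} [Field k] [Field K] [Algebra k K] {w : K} {m : k}
    (hw : IsQuadGen w m) {M : Type*} [Field M] [Algebra k M] [FiniteDimensional k M]
    [Algebra.IsSeparable k M] (hodd : Odd (Module.finrank k M)) :
    IsField (K ⊗[k] M) :=
  (hw.baseChange M).isField
    (quadNorm_anisotropic_of_odd hodd fun _ _ => hw.eq_zero_of_quadNorm_eq_zero)

/-- Springer's theorem for the extension `K ⊗[k] M` of `K`. -/
lemma exists_quadVal_eq_zero_of_tensor {k K : Type*} [Field k] [Field K] [Algebra k K]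
    {w : K} {m : k} (hw : IsQuadGen w m) {M : Type*} [Field M] [Algebra k M] [FiniteDimensional k M]
    [Algebra.IsSeparable k M] (hodd : Odd (Module.finrank k M))
    {ι : Type*} [Fintype ι] (a : ι → ι → K)
    (v : ι → K ⊗[k] M) (hv : v ≠ 0) (hav : quadVal a v = 0) :
    ∃ x : ι → K, x ≠ 0 ∧ quadVal a x = 0 := by
  let _ : Field (K ⊗[k] M) := (isField_tensor_of_odd hw hodd).toField
  have : Algebra.FormallyEtale k M := (Algebra.FormallyEtale.iff_isSeparable k M).2 inferInstance
  have : Algebra.IsSeparable K (K ⊗[k] M) :=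
    (Algebra.FormallyEtale.iff_isSeparable K (K ⊗[k] M)).1 inferInstance
  exact exists_quadVal_eq_zero_of_odd (by rwa [Module.finrank_baseChange]) a v hv hav

lemma quadNorm_tensor_anisotropic {k K : Type*} [Field k] [Field K] [Algebra k K] {w : K} {m : k}
    (hw : IsQuadGen w m) {M : Type*} [Field M] [Algebra k M] [FiniteDimensional k M]
    [Algebra.IsSeparable k M] (hodd : Odd (Module.finrank k M))
    {n : K} (hn : ∀ a b : K, quadNorm n a b = 0 → a = 0 ∧ b = 0)
    (a b : K ⊗[k] M) (hab : quadNorm (algebraMap K _ n) a b = 0) : a = 0 ∧ b = 0 := by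
  let _ : Field (K ⊗[k] M) := (isField_tensor_of_odd hw hodd).toField
  have : Algebra.FormallyEtale k M := (Algebra.FormallyEtale.iff_isSeparable k M).2 inferInstance
  have : Algebra.IsSeparable K (K ⊗[k] M) :=
    (Algebra.FormallyEtale.iff_isSeparable K (K ⊗[k] M)).1 inferInstance
  exact quadNorm_anisotropic_of_odd (by rwa [Module.finrank_baseChange]) hn a b hab

/-- An element which becomes a norm in odd degree is a norm. -/
lemma exists_quadNorm_eq_of_odd {k K : Type*} [Field k] [Field K] [Algebra k K] {w : K} {m : k}
    (hw : IsQuadGen w m) {M : Type*} [Field M] [Algebra k M] [FiniteDimensional k M]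
    [Algebra.IsSeparable k M] (hodd : Odd (Module.finrank k M))
    {n β : K}
    (hn : ∀ a b : K, quadNorm n a b = 0 → a = 0 ∧ b = 0)
    (h : ∃ a b : K ⊗[k] M, quadNorm (algebraMap K _ n) a b = algebraMap K _ β) :
    ∃ a b : K, quadNorm n a b = β := by
  obtain ⟨a, b, hab⟩ := h
  have hnt : Nontrivial (K ⊗[k] M) := (isField_tensor_of_odd hw hodd).nontrivial
  obtain ⟨x, hx, hx0⟩ := exists_quadVal_eq_zero_of_tensor hw hodd
    ![![1, 1, 0], ![0, n, 0], ![0, 0, -β]] ![a, b, (1 : K ⊗[k] M)]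
    (fun h => one_ne_zero (congrFun h 2)) (by
      simp only [quadVal, quadNorm, Fin.sum_univ_three, Matrix.cons_val, map_one, map_zero,
        map_neg] at hab ⊢
      linear_combination hab)
  have hx1 : quadNorm n (x 0) (x 1) = β * (x 2 * x 2) := by
    simp only [quadVal, quadNorm, Fin.sum_univ_three, Matrix.cons_val,
      Algebra.algebraMap_self, RingHom.id_apply] at hx0 ⊢
    linear_combination hx0
  by_cases h2 : x 2 = 0
  · rw [h2, mul_zero, mul_zero] at hx1
    obtain ⟨h0, h1⟩ := hn _ _ hx1
    exact absurd (funext fun i => by fin_cases i <;> assumption) hx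
  · refine ⟨x 0 / x 2, x 1 / x 2, ?_⟩
    rw [quadNorm] at hx1 ⊢
    field_simp
    linear_combination hx1

/-- The reduced norm of the element `p w (1 - 2 u) + s u + (y₀ + y₁ u) j` of the quaternion algebra
generated by `u` and `j` with `u ^ 2 = u - n`, `j ^ 2 = β`. -/
def albertVal {C : Type*} [CommRing C] (w n β p s y₀ y₁ : C) : C :=
  quadNorm n (p * w) (s - 2 * (p * w)) - β * quadNorm n y₀ y₁

/-- The coefficient matrix of the Albert form. -/
def albertMatrix {k : Type*} [CommRing k] (m n₀ n₁ b₀ b₁ : k) : Fin 6 → Fin 6 → k :=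
  ![![4 * n₀ - 1 - 4 * n₁ * m + 4 * n₁, -(4 * n₀ - 1) - 4 * n₁, 0, 0, 0, 0],
    ![0, n₁, 0, 0, 0, 0],
    ![0, 0, -b₁, -(2 * b₀ + 2 * b₁), -b₁, -(b₀ + b₁)],
    ![0, 0, 0, -(b₀ - m * b₁ + b₁), -(b₀ + b₁), -(b₀ - m * b₁ + b₁)],
    ![0, 0, 0, 0, -(b₀ * n₁ + b₁ * n₀ + b₁ * n₁),
      -(2 * (b₀ * n₀ - m * (b₁ * n₁)) + 2 * (b₀ * n₁ + b₁ * n₀ + b₁ * n₁))],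
    ![0, 0, 0, 0, 0, -(b₀ * n₀ - m * (b₁ * n₁) - m * (b₀ * n₁ + b₁ * n₀ + b₁ * n₁)
      + (b₀ * n₁ + b₁ * n₀ + b₁ * n₁))]]

/-- The constant coordinate of the reduced norm. -/
def albertConst {F : Type*} [CommRing F] (m n₀ n₁ b₀ b₁ : F) (x : Fin 6 → F) : F :=
  (4 * n₀ - 1) * (-(m * x 0 ^ 2)) - m * (4 * n₁) * (x 0 ^ 2 - x 0 * x 1) + x 1 ^ 2 * n₀
    - (b₀ * (x 2 ^ 2 - m * x 3 ^ 2) - m * b₁ * (2 * x 2 * x 3 + x 3 ^ 2))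
    - (b₀ * (x 2 * x 4 - m * (x 3 * x 5)) - m * b₁ * (x 2 * x 5 + x 4 * x 3 + x 3 * x 5))
    - ((b₀ * n₀ - m * (b₁ * n₁)) * (x 4 ^ 2 - m * x 5 ^ 2)
      - m * (b₀ * n₁ + b₁ * n₀ + b₁ * n₁) * (2 * x 4 * x 5 + x 5 ^ 2))

lemma albertVal_eq {k F C : Type*} [CommRing k] [CommRing F] [CommRing C] [Algebra k F]
    [Algebra F C] {w : C} {m : k} (hw : w * w = w - algebraMap F C (algebraMap k F m))
    (n₀ n₁ b₀ b₁ : k) (x : Fin 6 → F) :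
    albertVal w
      (algebraMap F C (algebraMap k F n₀) + algebraMap F C (algebraMap k F n₁) * w)
      (algebraMap F C (algebraMap k F b₀) + algebraMap F C (algebraMap k F b₁) * w)
      (algebraMap F C (x 0)) (algebraMap F C (x 1))
      (algebraMap F C (x 2) + algebraMap F C (x 3) * w)
      (algebraMap F C (x 4) + algebraMap F C (x 5) * w) =
    algebraMap F C (albertConst (algebraMap k F m) (algebraMap k F n₀) (algebraMap k F n₁)
      (algebraMap k F b₀) (algebraMap k F b₁) x) +
      algebraMap F C (quadVal (albertMatrix m n₀ n₁ b₀ b₁) x) * w := by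
  simp only [albertVal, quadNorm, albertConst, quadVal, albertMatrix, Fin.sum_univ_six,
    Matrix.cons_val, map_add, map_sub, map_mul, map_neg, map_pow, map_ofNat, map_zero, map_one]
  generalize algebraMap F C (algebraMap k F m) = M at *
  generalize algebraMap F C (algebraMap k F n₀) = N0 at *
  generalize algebraMap F C (algebraMap k F n₁) = N1 at *
  generalize algebraMap F C (algebraMap k F b₀) = B0 at *
  generalize algebraMap F C (algebraMap k F b₁) = B1 at *
  generalize algebraMap F C (x 0) = p at *
  generalize algebraMap F C (x 1) = s at *
  generalize algebraMap F C (x 2) = c0 at *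
  generalize algebraMap F C (x 3) = d0 at *
  generalize algebraMap F C (x 4) = c1 at *
  generalize algebraMap F C (x 5) = d1 at *
  linear_combination ((4 * (N0 + N1 * w) - 1) * p ^ 2 + 4 * N1 * (p ^ 2 - p * s)
    - ((B0 + B1 * w) * d0 ^ 2 + B1 * (2 * c0 * d0 + d0 ^ 2))
    - ((B0 + B1 * w) * (d0 * d1) + B1 * (c0 * d1 + c1 * d0 + d0 * d1))
    - ((B0 + B1 * w) * (N0 + N1 * w) * d1 ^ 2
      + B1 * N1 * (c1 ^ 2 - M * d1 ^ 2 + (2 * c1 * d1 + d1 ^ 2) * w)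
      + (B0 * N1 + B1 * N0 + B1 * N1) * (2 * c1 * d1 + d1 ^ 2))) * hw

/-- The Albert form of the quaternion algebra `(n, β)` has a nontrivial zero over `F`. -/
def AlbertIsotropic (F : Type*) {C : Type*} [CommRing F] [CommRing C] [Algebra F C]
    (w n β : C) : Prop :=
  ∃ (p s ν : F) (y₀ y₁ : C), ¬ (p = 0 ∧ s = 0 ∧ y₀ = 0 ∧ y₁ = 0) ∧
    albertVal w n β (algebraMap F C p) (algebraMap F C s) y₀ y₁ = algebraMap F C ν

lemma albertIsotropic_of_odd {k K : Type*} [Field k] [Field K] [Algebra k K] {w : K} {m : k}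
    (hw : IsQuadGen w m) {M : Type*} [Field M] [Algebra k M] [FiniteDimensional k M]
    [Algebra.IsSeparable k M] (hodd : Odd (Module.finrank k M)) (n β : K)
    (h : AlbertIsotropic M (algebraMap K (K ⊗[k] M) w) (algebraMap K _ n) (algebraMap K _ β)) :
    AlbertIsotropic k w n β := by
  obtain ⟨p, s, ν, y₀, y₁, hne, hval⟩ := h
  have hw' := hw.baseChange M
  obtain ⟨n₀, n₁, rfl⟩ := hw.exists_eq n
  obtain ⟨b₀, b₁, rfl⟩ := hw.exists_eq β
  obtain ⟨c₀, d₀, rfl⟩ := hw'.exists_eq y₀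
  obtain ⟨c₁, d₁, rfl⟩ := hw'.exists_eq y₁
  have hexp := albertVal_eq hw'.sq n₀ n₁ b₀ b₁ ![p, s, c₀, d₀, c₁, d₁]
  simp only [map_add, map_mul, algebraMap_tensor_comm] at hval
  simp only [Matrix.cons_val] at hexp
  rw [hexp] at hval
  have hz := (hw'.ext (c := ν) (d := 0) (by rw [hval]; simp)).2
  obtain ⟨x, hx, hx0⟩ := exists_quadVal_eq_zero_of_odd hodd _ _ (fun h0 => hne (by
    have e := congrFun h0
    have e0 := e 0
    have e1 := e 1
    have e2 := e 2
    have e3 := e 3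
    have e4 := e 4
    have e5 := e 5
    simp only [Matrix.cons_val, Pi.zero_apply] at e0 e1 e2 e3 e4 e5
    simp [e0, e1, e2, e3, e4, e5])) hz
  have hexp' := albertVal_eq (k := k) (F := k) hw.sq n₀ n₁ b₀ b₁ x
  rw [hx0, map_zero, zero_mul, add_zero] at hexp'
  refine ⟨x 0, x 1, _, _, _, fun ⟨h0, h1, h23, h45⟩ => hx ?_, hexp'⟩
  obtain ⟨h2, h3⟩ := hw.indep _ _ h23
  obtain ⟨h4, h5⟩ := hw.indep _ _ h45
  exact funext fun i => by fin_cases i <;> assumption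

/-- If `β` becomes a norm over a quadratic extension `E` of an extension `M` of odd degree, and is
not a norm, then the Albert form is isotropic over `M`. -/
lemma albertIsotropic_of_quadratic {k K M E : Type*} [Field k] [Field K] [Field M] [Field E]
    [Algebra k K] [Algebra k M] [Algebra k E] [Algebra M E] [IsScalarTower k M E]
    [FiniteDimensional k M] [Algebra.IsSeparable k M] {w : K} {m : k} (hw : IsQuadGen w m)
    (hodd : Odd (Module.finrank k M)) {θ : E} {ν : M} (hθ : IsQuadGen θ ν) {n β : K}
    (hn : ∀ a b : K, quadNorm n a b = 0 → a = 0 ∧ b = 0)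
    (hβ : ¬ ∃ a b : K, quadNorm n a b = β)
    (h : ∃ a b : K ⊗[k] E, quadNorm (algebraMap K _ n) a b = algebraMap K _ β) :
    AlbertIsotropic M (algebraMap K (K ⊗[k] M) w) (algebraMap K _ n) (algebraMap K _ β) := by
  obtain ⟨a, b, hab⟩ := h
  let ψ : K ⊗[k] M →ₐ[K] K ⊗[k] E :=
    Algebra.TensorProduct.map (AlgHom.id K K) (IsScalarTower.toAlgHom k M E)
  have hψM : ∀ c : M, ψ (algebraMap M _ c) = algebraMap E _ (algebraMap M E c) := fun c => by
    change ψ (1 ⊗ₜ c) = 1 ⊗ₜ algebraMap M E c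
    simp [ψ]
  have hψK : ∀ c : K, ψ (algebraMap K _ c) = algebraMap K _ c := fun c => ψ.commutes c
  have hwM := hw.baseChange M
  have hwE := hw.baseChange E
  set Θ : K ⊗[k] E := algebraMap E _ θ with hΘ
  have hΘsq : Θ * Θ = Θ - ψ (algebraMap M _ ν) := by
    rw [hΘ, ← map_mul, hθ.sq, map_sub, hψM]
  have hdecomp : ∀ z : K ⊗[k] E, ∃ x y : K ⊗[k] M, z = ψ x + ψ y * Θ := fun z => by
    obtain ⟨e, e', rfl⟩ := hwE.exists_eq z
    obtain ⟨c, d, rfl⟩ := hθ.exists_eq e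
    obtain ⟨c', d', rfl⟩ := hθ.exists_eq e'
    refine ⟨algebraMap M _ c + algebraMap M _ c' * algebraMap K _ w,
      algebraMap M _ d + algebraMap M _ d' * algebraMap K _ w, ?_⟩
    simp only [map_add, map_mul, hψM, hψK]
    ring
  have hindep : ∀ x y : K ⊗[k] M, ψ x + ψ y * Θ = 0 → x = 0 ∧ y = 0 := fun x y hxy => by
    obtain ⟨c, c', rfl⟩ := hwM.exists_eq x
    obtain ⟨d, d', rfl⟩ := hwM.exists_eq y
    have := hwE.indep (algebraMap M E c + algebraMap M E d * θ)
      (algebraMap M E c' + algebraMap M E d' * θ) (by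
        rw [← hxy]
        simp only [map_add, map_mul, hψM, hψK]
        ring)
    obtain ⟨rfl, rfl⟩ := hθ.indep _ _ this.1
    obtain ⟨rfl, rfl⟩ := hθ.indep _ _ this.2
    simp
  obtain ⟨a₀, a₁, rfl⟩ := hdecomp a
  obtain ⟨b₀, b₁, rfl⟩ := hdecomp b
  set N := algebraMap K (K ⊗[k] M) n with hN
  set B := algebraMap K (K ⊗[k] M) β with hB
  set V := algebraMap M (K ⊗[k] M) ν with hV
  obtain ⟨h0, h1⟩ := hindep
    (quadNorm N a₀ b₀ - V * quadNorm N a₁ b₁ - B)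
    (2 * a₀ * a₁ + a₀ * b₁ + a₁ * b₀ + 2 * N * b₀ * b₁ + quadNorm N a₁ b₁) (by
      rw [← hψK n, ← hψK β, ← hN, ← hB] at hab
      simp only [quadNorm, map_add, map_sub, map_mul, map_ofNat] at hab ⊢
      linear_combination hab - (ψ a₁ * ψ a₁ + ψ a₁ * ψ b₁ + ψ N * (ψ b₁ * ψ b₁)) * hΘsq)
  let _ : Field (K ⊗[k] M) := (isField_tensor_of_odd hw hodd).toField
  by_cases hz : a₁ = 0 ∧ b₁ = 0
  · obtain ⟨rfl, rfl⟩ := hz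
    refine absurd (exists_quadNorm_eq_of_odd hw hodd hn ⟨a₀, b₀, ?_⟩) hβ
    simp only [quadNorm] at h0 ⊢
    linear_combination h0
  · have hD : quadNorm N a₁ b₁ ≠ 0 := fun hD => hz (quadNorm_tensor_anisotropic hw hodd hn _ _ hD)
    set D := quadNorm N a₁ b₁ with hDdef
    have hDe : D = a₁ * a₁ + a₁ * b₁ + N * (b₁ * b₁) := hDdef
    obtain ⟨i, hi⟩ : ∃ i, D * i = 1 := ⟨D⁻¹, mul_inv_cancel₀ hD⟩
    obtain ⟨c, p, hcp⟩ := hwM.exists_eq ((a₀ * a₁ + a₀ * b₁ + N * b₀ * b₁) * i)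
    have htr : 2 * ((a₀ * a₁ + a₀ * b₁ + N * b₀ * b₁) * i) + (a₁ * b₀ - a₀ * b₁) * i = -1 := by
      linear_combination i * h1 - hi
    refine ⟨p, -1 - 2 * c, ν + c + c * c, (a₁ + b₁) * i, -b₁ * i, fun ⟨_, _, hy₀, hy₁⟩ => hz ?_, ?_⟩
    · have hi0 : i ≠ 0 := right_ne_zero_of_mul (hi.trans_ne one_ne_zero)
      have hb : b₁ = 0 := by simpa [hi0] using hy₁
      exact ⟨by simpa [hi0, hb] using hy₀, hb⟩
    · have hx₀ : algebraMap M (K ⊗[k] M) p * algebraMap K _ w =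
          (a₀ * a₁ + a₀ * b₁ + N * b₀ * b₁) * i - algebraMap M _ c := by
        linear_combination -hcp
      have hx₁ : algebraMap M (K ⊗[k] M) (-1 - 2 * c) -
          2 * (algebraMap M (K ⊗[k] M) p * algebraMap K _ w) = (a₁ * b₀ - a₀ * b₁) * i := by
        rw [hx₀]
        simp only [map_sub, map_neg, map_one, map_mul, map_ofNat]
        linear_combination -htr
      have hmulN : quadNorm N ((a₀ * a₁ + a₀ * b₁ + N * b₀ * b₁) * i)
          ((a₁ * b₀ - a₀ * b₁) * i) = quadNorm N a₀ b₀ * D * i ^ 2 := by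
        rw [hDe, quadNorm, quadNorm]
        ring
      have hyN : quadNorm N ((a₁ + b₁) * i) (-b₁ * i) = D * i ^ 2 := by
        rw [hDe, quadNorm]
        ring
      have hshift : quadNorm N ((a₀ * a₁ + a₀ * b₁ + N * b₀ * b₁) * i - algebraMap M _ c)
          ((a₁ * b₀ - a₀ * b₁) * i) = quadNorm N ((a₀ * a₁ + a₀ * b₁ + N * b₀ * b₁) * i)
          ((a₁ * b₀ - a₀ * b₁) * i) + algebraMap M _ c + algebraMap M _ c ^ 2 := by
        simp only [quadNorm]
        linear_combination -(algebraMap M (K ⊗[k] M) c) * htr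
      rw [albertVal, hx₁, hx₀, hshift, hmulN, hyN]
      simp only [map_add, map_mul]
      linear_combination (D * i ^ 2) * h0 + V * (D * i + 1) * hi

/-- If `X ^ 2 - X + n` has a root in `C`, then every element of `K` is a norm over `C`. -/
lemma exists_quadNorm_eq_of_root {K C : Type*} [Field K] [CommRing C] [Algebra K C] {n : K}
    (hn : 1 - 4 * n ≠ 0) (r : C) (hr : r * r - r + algebraMap K C n = 0) (β : K) :
    ∃ a b : C, quadNorm (algebraMap K C n) a b = algebraMap K C β := by
  have hi : algebraMap K C (1 - 4 * n)⁻¹ * (1 - 4 * algebraMap K C n) = 1 := by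
    have h4 : (4 : C) = algebraMap K C 4 := (map_ofNat _ 4).symm
    rw [h4, ← map_one (algebraMap K C), ← map_mul, ← map_sub, ← map_mul, inv_mul_cancel₀ hn]
  generalize algebraMap K C (1 - 4 * n)⁻¹ = i at hi
  generalize algebraMap K C n = N at *
  generalize algebraMap K C β = B at *
  obtain ⟨b, hb⟩ : ∃ b, b = (B - 1) * (2 * r - 1) * i := ⟨_, rfl⟩
  have hb' : b * (2 * r - 1) = B - 1 := by
    rw [hb]
    linear_combination (B - 1) * hi + 4 * (B - 1) * i * hr
  refine ⟨1 - b * (1 - r), b, ?_⟩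
  rw [quadNorm]
  linear_combination hb' + b ^ 2 * hr

lemma quadNorm_mul_conj {C : Type*} [CommRing C] (n a b c d : C) :
    quadNorm n (a * (c + d) + n * b * d) (b * c - a * d) = quadNorm n a b * quadNorm n c d := by
  simp only [quadNorm]
  ring

/-- An isotropic vector of the Albert form makes `β` a norm over each field containing a root of its
reduced characteristic polynomial. -/
lemma exists_quadNorm_eq_of_albertVal {k K F : Type*} [Field k] [Field K] [Field F] [Algebra k K]
    [Algebra k F] {w : K} {m : k} (hw : IsQuadGen w m) {n β : K} (hdisc : 1 - 4 * n ≠ 0)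
    (hn : ∀ a b : K, quadNorm n a b = 0 → a = 0 ∧ b = 0) {p s ν : k} {y₀ y₁ : K}
    (hne : ¬ (p = 0 ∧ s = 0 ∧ y₀ = 0 ∧ y₁ = 0))
    (hval : albertVal w n β (algebraMap k K p) (algebraMap k K s) y₀ y₁ = algebraMap k K ν)
    (θ : F) (hθ : θ * θ - algebraMap k F s * θ + algebraMap k F ν = 0) :
    ∃ a b : K ⊗[k] F, quadNorm (algebraMap K _ n) a b = algebraMap K _ β := by
  obtain ⟨x₀, hx₀⟩ : ∃ x₀, x₀ = algebraMap k K p * w := ⟨_, rfl⟩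
  obtain ⟨x₁, hx₁⟩ : ∃ x₁, x₁ = algebraMap k K s - 2 * x₀ := ⟨_, rfl⟩
  set κ := algebraMap K (K ⊗[k] F)
  set Θ := algebraMap F (K ⊗[k] F) θ with hΘ
  have hnorm : quadNorm n x₀ x₁ = algebraMap k K ν + β * quadNorm n y₀ y₁ := by
    rw [albertVal, ← hx₀, ← hx₁] at hval
    linear_combination hval
  have hΘsq : Θ * Θ - κ (algebraMap k K s) * Θ + κ (algebraMap k K ν) = 0 := by
    rw [algebraMap_tensor_comm, algebraMap_tensor_comm, hΘ, ← map_mul, ← map_mul, ← map_sub,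
      ← map_add, hθ, map_zero]
  have hkey : quadNorm (κ n) (κ x₀ - Θ) (κ x₁) = κ β * quadNorm (κ n) (κ y₀) (κ y₁) := by
    have h1 := congrArg κ hnorm
    have h2 := congrArg κ hx₁
    simp only [quadNorm, map_add, map_sub, map_mul, map_ofNat] at h1 h2 ⊢
    linear_combination h1 + hΘsq - Θ * h2
  by_cases hy : y₀ = 0 ∧ y₁ = 0
  · have hx : x₁ ≠ 0 := by
      intro hx
      obtain ⟨rfl, rfl⟩ := hy
      obtain ⟨hs, -⟩ := hw.indep s (-(2 * p)) (by
        simp only [map_neg, map_mul, map_ofNat]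
        linear_combination hx - hx₁ + 2 * hx₀)
      obtain ⟨-, hp⟩ := hw.indep (-(p * p * m) - ν) (p * p) (by
        rw [hx] at hnorm
        simp only [quadNorm, hx₀] at hnorm
        simp only [map_sub, map_neg, map_mul]
        linear_combination hnorm - (algebraMap k K p) ^ 2 * hw.sq)
      exact hne ⟨mul_self_eq_zero.1 hp, hs, rfl, rfl⟩
    have hi : κ x₁ * κ x₁⁻¹ = 1 := by rw [← map_mul, mul_inv_cancel₀ hx, map_one]
    refine exists_quadNorm_eq_of_root hdisc ((Θ - κ x₀) * κ x₁⁻¹) ?_ β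
    rw [hy.1, hy.2] at hkey
    simp only [quadNorm, map_zero] at hkey
    linear_combination (κ x₁⁻¹) ^ 2 * hkey -
      (κ x₁⁻¹ * (κ x₀ - Θ) + κ n * (κ x₁ * κ x₁⁻¹ + 1)) * hi
  · have hy0 : quadNorm n y₀ y₁ ≠ 0 := fun h => hy (hn _ _ h)
    have hi : quadNorm (κ n) (κ y₀) (κ y₁) * κ (quadNorm n y₀ y₁)⁻¹ = 1 := by
      rw [← map_quadNorm, ← map_mul, mul_inv_cancel₀ hy0, map_one]
    generalize κ (quadNorm n y₀ y₁)⁻¹ = i at hi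
    refine ⟨((κ x₀ - Θ) * (κ y₀ + κ y₁) + κ n * κ x₁ * κ y₁) * i,
      (κ x₁ * κ y₀ - (κ x₀ - Θ) * κ y₁) * i, ?_⟩
    have hmul := quadNorm_mul_conj (κ n) (κ x₀ - Θ) (κ x₁) (κ y₀) (κ y₁)
    have hsc : ∀ a b : K ⊗[k] F, quadNorm (κ n) (a * i) (b * i) = quadNorm (κ n) a b * i ^ 2 :=
      fun a b => by simp only [quadNorm]; ring
    rw [hsc, hmul, hkey]
    linear_combination κ β * (quadNorm (κ n) (κ y₀) (κ y₁) * i + 1) * hi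

/-- Zeros of the Albert form can be chosen with separable reduced characteristic polynomial. -/
lemma exists_separable_albertVal {k K : Type*} [Field k] [Field K] [Algebra k K]
    {w : K} {m : k} (hw : IsQuadGen w m) {n β : K} (hβ0 : β ≠ 0) (h : AlbertIsotropic k w n β) :
    ∃ (p s ν : k) (y₀ y₁ : K), ¬ (p = 0 ∧ s = 0 ∧ y₀ = 0 ∧ y₁ = 0) ∧
      albertVal w n β (algebraMap k K p) (algebraMap k K s) y₀ y₁ = algebraMap k K ν ∧
      ¬ ((2 : k) = 0 ∧ s = 0) := by
  obtain ⟨p, s, ν, y₀, y₁, hne, hval⟩ := h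
  by_cases h2 : (2 : k) = 0 ∧ s = 0
  swap
  · exact ⟨p, s, ν, y₀, y₁, hne, hval, h2⟩
  obtain ⟨h2, rfl⟩ := h2
  have h2K : (2 : K) = 0 := by rw [← map_ofNat (algebraMap k K) 2, h2, map_zero]
  obtain ⟨b, v₀, v₁, hb, hB⟩ : ∃ (b : k) (v₀ v₁ : K), b ≠ 0 ∧
      algebraMap k K p * w - β * (y₀ * v₁ + v₀ * y₁) = algebraMap k K b * w := by
    by_cases hp : p = 0
    · subst hp
      by_cases hy : y₀ = 0
      · subst hy
        have hy₁ : y₁ ≠ 0 := fun h => hne ⟨rfl, rfl, rfl, h⟩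
        refine ⟨1, -w / (β * y₁), 0, one_ne_zero, ?_⟩
        simp only [map_zero, map_one]
        field_simp
        ring
      · refine ⟨1, 0, -w / (β * y₀), one_ne_zero, ?_⟩
        simp only [map_zero, map_one]
        field_simp
        ring
    · exact ⟨p, 0, 0, hp, by simp⟩
  obtain ⟨q₀, q₁, hq⟩ := hw.exists_eq (n - β * quadNorm n v₀ v₁)
  have hval2 : ∀ p s y₀ y₁ : K, albertVal w n β p s y₀ y₁ =
      p * w * (p * w) + p * w * s + n * (s * s) - β * quadNorm n y₀ y₁ := fun p s y₀ y₁ => by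
    rw [albertVal, h2K, zero_mul, sub_zero, quadNorm]
  refine ⟨-q₁ * p, b, q₁ ^ 2 * ν + b ^ 2 * q₀, -algebraMap k K q₁ * y₀ + algebraMap k K b * v₀,
    -algebraMap k K q₁ * y₁ + algebraMap k K b * v₁, fun h => hb h.2.1, ?_, fun h => hb h.2⟩
  rw [hval2] at hval ⊢
  simp only [quadNorm, map_add, map_mul, map_neg, map_pow, map_zero] at hval hq ⊢
  linear_combination (algebraMap k K q₁) ^ 2 * hval - algebraMap k K q₁ * algebraMap k K b * hB
    + (algebraMap k K b) ^ 2 * hq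
    + β * algebraMap k K q₁ * algebraMap k K b * (y₀ * v₀ + n * y₁ * v₁) * h2K

lemma exists_quadratic_of_albertIsotropic {k K : Type} [Field k] [Field K] [Algebra k K]
    {w : K} {m : k} (hw : IsQuadGen w m) {n β : K} (hdisc : 1 - 4 * n ≠ 0) (hβ0 : β ≠ 0)
    (hn : ∀ a b : K, quadNorm n a b = 0 → a = 0 ∧ b = 0)
    (hβ : ¬ ∃ a b : K, quadNorm n a b = β) (h : AlbertIsotropic k w n β) :
    ∃ (F : Type) (_ : Field F) (_ : Algebra k F), FiniteDimensional k F ∧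
      Algebra.IsSeparable k F ∧ Module.finrank k F = 2 ∧
      ∃ a b : K ⊗[k] F, quadNorm (algebraMap K _ n) a b = algebraMap K _ β := by
  obtain ⟨p, s, ν, y₀, y₁, hne, hval, hsep⟩ := exists_separable_albertVal hw hβ0 h
  let f : Polynomial k := Polynomial.X ^ 2 + (Polynomial.C (-s) * Polynomial.X + Polynomial.C ν)
  have hlt : (Polynomial.C (-s) * Polynomial.X + Polynomial.C ν).degree < 2 :=
    lt_of_le_of_lt Polynomial.degree_linear_le (by norm_num)
  have hmonic : f.Monic := Polynomial.monic_X_pow_add hlt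
  have hdeg : f.natDegree = 2 := by
    simp only [f]
    compute_degree!
  have hroot : ∀ c : k, f.eval c ≠ 0 := fun c hc => by
    refine hβ (exists_quadNorm_eq_of_odd (M := k) hw (by simp) hn
      (exists_quadNorm_eq_of_albertVal hw hdisc hn hne hval c ?_))
    simp only [f, Polynomial.eval_add, Polynomial.eval_pow, Polynomial.eval_X, Polynomial.eval_mul,
      Polynomial.eval_C] at hc
    simp only [Algebra.algebraMap_self, RingHom.id_apply]
    linear_combination hc
  have hirr : Irreducible f := by
    rw [hmonic.irreducible_iff_roots_eq_zero_of_degree_le_three (by omega) (by omega)]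
    refine Multiset.eq_zero_of_forall_notMem fun c hc => ?_
    exact hroot c (Polynomial.isRoot_of_mem_roots hc)
  have hfsep : f.Separable := by
    rw [Polynomial.separable_iff_derivative_ne_zero hirr]
    intro h0
    have hder : Polynomial.derivative f = Polynomial.C 2 * Polynomial.X + Polynomial.C (-s) := by
      simp only [f, Polynomial.derivative_add, Polynomial.derivative_X_sq,
        Polynomial.derivative_C_mul, Polynomial.derivative_X, Polynomial.derivative_C, mul_one,
        add_zero]
    rw [hder] at h0
    have e0 := congrArg (Polynomial.coeff · 0) h0
    have e1 := congrArg (Polynomial.coeff · 1) h0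
    simp at e0 e1
    exact hsep ⟨e1, e0⟩
  obtain ⟨θ, hθ⟩ := IsAlgClosed.exists_aeval_eq_zero (AlgebraicClosure k) f
    (by rw [Polynomial.degree_eq_natDegree hirr.ne_zero, hdeg]; norm_num)
  have hmin : minpoly k θ = f := (minpoly.eq_of_irreducible_of_monic hirr hθ hmonic).symm
  have hθint : IsIntegral k θ := ⟨f, hmonic, hθ⟩
  refine ⟨IntermediateField.adjoin k {θ}, inferInstance, inferInstance,
    IntermediateField.adjoin.finiteDimensional hθint, ?_, ?_,
    exists_quadNorm_eq_of_albertVal hw hdisc hn hne hval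
      (IntermediateField.AdjoinSimple.gen k θ) ?_⟩
  · rw [IntermediateField.isSeparable_adjoin_simple_iff_isSeparable, IsSeparable, hmin]
    exact hfsep
  · rw [IntermediateField.adjoin.finrank hθint, hmin, hdeg]
  · apply Subtype.ext
    simp only [f, map_add, map_mul, map_pow, Polynomial.aeval_X, Polynomial.aeval_C, map_neg] at hθ
    push_cast
    rw [IntermediateField.AdjoinSimple.coe_gen]
    linear_combination hθ

/-- A Sylow `2`-subgroup of a subgroup of index `2` modulo `4` has index two in a Sylow
`2`-subgroup. -/
lemma exists_sylow_pair {G : Type*} [Group G] [Finite G] (H : Subgroup G) (hH : H.index % 4 = 2) :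
    ∃ P Q : Subgroup G, Q ≤ H ∧ Q ≤ P ∧ Odd P.index ∧ Q.relIndex P = 2 := by
  have : Fact (Nat.Prime 2) := ⟨Nat.prime_two⟩
  obtain ⟨S⟩ : Nonempty (Sylow 2 H) := inferInstance
  obtain ⟨P, hQP⟩ := (S.isPGroup'.map H.subtype).exists_le_sylow
  have hQH : S.map H.subtype ≤ H := Subgroup.map_subtype_le _
  refine ⟨P, S.map H.subtype, hQH, hQP, ?_, ?_⟩
  · rw [← Nat.not_even_iff_odd, even_iff_two_dvd]
    exact P.not_dvd_index
  · have h1 : ((S : Subgroup H).map H.subtype).relIndex H = (S : Subgroup H).index := by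
      rw [Subgroup.relIndex, Subgroup.subgroupOf,
        Subgroup.comap_map_eq_self_of_injective H.subtype_injective]
    have h2 := Subgroup.relIndex_mul_index hQH
    have h3 := Subgroup.relIndex_mul_index hQP
    have h4 : ¬ 2 ∣ (S : Subgroup H).index := S.not_dvd_index
    have h5 : ¬ 2 ∣ (P : Subgroup G).index := P.not_dvd_index
    obtain ⟨a, ha⟩ := P.isPGroup'.exists_card_eq
    obtain ⟨j, -, hj⟩ := (Nat.dvd_prime_pow Nat.prime_two).1
      (ha ▸ Subgroup.relIndex_dvd_card ((S : Subgroup H).map H.subtype) (P : Subgroup G))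
    rw [hj] at h3 ⊢
    rw [h1, ← h3] at h2
    generalize (S : Subgroup H).index = x at *
    generalize (P : Subgroup G).index = y at *
    generalize H.index = z at *
    match j, h2 with
    | 0, h2 =>
      rw [pow_zero, one_mul] at h2
      exact absurd (h2 ▸ (show 2 ∣ z by omega).mul_left x) h5
    | 1, _ => rfl
    | j + 2, h2 =>
      have h6 : 2 ^ 2 ∣ x * z := h2 ▸ ⟨2 ^ j * y, by ring⟩
      have h7 := (Nat.Coprime.pow_left 2
        ((Nat.Prime.coprime_iff_not_dvd Nat.prime_two).2 h4)).dvd_of_dvd_mul_left h6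
      omega

lemma exists_odd_quadratic_tower_of_isGalois {k F N : Type} [Field k] [Field F] [Field N]
    [Algebra k F] [Algebra k N] [FiniteDimensional k N] [IsGalois k N] (ι : F →ₐ[k] N)
    (h : Module.finrank k F % 4 = 2) :
    ∃ (M E : Type) (_ : Field M) (_ : Field E) (_ : Algebra k M) (_ : Algebra k E)
      (_ : Algebra M E), IsScalarTower k M E ∧ FiniteDimensional k M ∧ Algebra.IsSeparable k M ∧
      Odd (Module.finrank k M) ∧ Module.finrank M E = 2 ∧ Algebra.IsSeparable M E ∧
      Nonempty (F →ₐ[k] E) := by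
  obtain ⟨P, Q, hQH, hQP, hP, hQ⟩ := exists_sylow_pair ι.fieldRange.fixingSubgroup (by
    rw [← IntermediateField.finrank_eq_fixingSubgroup_index]
    exact (AlgEquiv.ofInjectiveField ι).toLinearEquiv.finrank_eq ▸ h)
  have hME : IntermediateField.fixedField P ≤ IntermediateField.fixedField Q :=
    IntermediateField.fixedField_antitone hQP
  have hFE : ι.fieldRange ≤ IntermediateField.fixedField Q :=
    (IntermediateField.le_iff_le Q _).2 hQH
  have hdeg : ∀ R : Subgroup (N ≃ₐ[k] N),
      Module.finrank k (IntermediateField.fixedField R) = R.index := fun R => by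
    rw [IntermediateField.finrank_eq_fixingSubgroup_index,
      IntermediateField.fixingSubgroup_fixedField]
  let _ : Algebra (IntermediateField.fixedField P) (IntermediateField.fixedField Q) :=
    (IntermediateField.inclusion hME).toAlgebra
  have htower : IsScalarTower k (IntermediateField.fixedField P) (IntermediateField.fixedField Q) :=
    IsScalarTower.of_algebraMap_eq fun _ => rfl
  refine ⟨IntermediateField.fixedField P, IntermediateField.fixedField Q, inferInstance,
    inferInstance, inferInstance, inferInstance, inferInstance, htower, inferInstance,
    inferInstance, hdeg P ▸ hP, ?_,
    Algebra.isSeparable_tower_top_of_isSeparable k _ _,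
    ⟨(IntermediateField.inclusion hFE).comp ι.rangeRestrict⟩⟩
  have h1 := Module.finrank_mul_finrank k (IntermediateField.fixedField P)
    (IntermediateField.fixedField Q)
  rw [hdeg, hdeg, ← Subgroup.relIndex_mul_index hQP, hQ, mul_comm 2] at h1
  exact Nat.eq_of_mul_eq_mul_left hP.pos h1

/-- A finite separable extension of degree `2` modulo `4` embeds into a quadratic extension of an
extension of odd degree. -/
lemma exists_odd_quadratic_tower {k F : Type} [Field k] [Field F] [Algebra k F]
    [FiniteDimensional k F] [Algebra.IsSeparable k F] (h : Module.finrank k F % 4 = 2) :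
    ∃ (M E : Type) (_ : Field M) (_ : Field E) (_ : Algebra k M) (_ : Algebra k E)
      (_ : Algebra M E), IsScalarTower k M E ∧ FiniteDimensional k M ∧ Algebra.IsSeparable k M ∧
      Odd (Module.finrank k M) ∧ Module.finrank M E = 2 ∧ Algebra.IsSeparable M E ∧
      Nonempty (F →ₐ[k] E) := by
  let φ : F →ₐ[k] SeparableClosure k := IsSepClosed.lift
  let _ : Algebra F (SeparableClosure k) := φ.toAlgebra
  have : IsScalarTower k F (SeparableClosure k) :=
    IsScalarTower.of_algebraMap_eq fun x => (φ.commutes x).symm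
  exact exists_odd_quadratic_tower_of_isGalois
    (IsScalarTower.toAlgHom k F (IntermediateField.normalClosure k F (SeparableClosure k))) h

open Polynomial in
lemma exists_root_of_isSepClosed {Ω : Type*} [Field Ω] [IsSepClosed Ω] {c : Ω}
    (hc : 1 - 4 * c ≠ 0) : ∃ x, x * x - x + c = 0 := by
  let f : Polynomial Ω := X ^ 2 - X + C c
  have hdeg : f.degree = 2 := by
    simp only [f]
    compute_degree!
  have hder : derivative f = 2 * X - 1 := by
    simp only [f, derivative_add, derivative_sub, derivative_X_sq, derivative_X, derivative_C,
      add_zero, map_ofNat]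
  have hsep : f.Separable := by
    refine ⟨-4 * C (1 - 4 * c)⁻¹, C (1 - 4 * c)⁻¹ * (2 * X - 1), ?_⟩
    have hi : C (1 - 4 * c)⁻¹ * (1 - 4 * C c) = 1 := by
      rw [← map_ofNat C 4, ← map_one C, ← map_mul, ← map_sub, ← map_mul, inv_mul_cancel₀ hc]
    rw [hder]
    simp only [f]
    linear_combination hi
  obtain ⟨x, hx⟩ := IsSepClosed.exists_root f (by rw [hdeg]; norm_num) hsep
  refine ⟨x, ?_⟩
  simp only [f, IsRoot, eval_add, eval_sub, eval_pow, eval_X, eval_C] at hx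
  linear_combination hx

/-- The fields generated by the coordinates of a root of `X ^ 2 - X + n` have degree at most
four. -/
lemma finrank_adjoin_pair_le_four {k Ω : Type*} [Field k] [Field Ω] [Algebra k Ω]
    [Algebra.IsSeparable k Ω] [IsSepClosed Ω] {m n₀ n₁ : k} {w c d : Ω} (hw2 : 2 * w - 1 ≠ 0)
    (hw : w * w = w - algebraMap k Ω m)
    (hA : c * c - algebraMap k Ω m * (d * d) - c + algebraMap k Ω n₀ = 0)
    (hB : 2 * c * d + d * d - d + algebraMap k Ω n₁ = 0) :
    Module.finrank k (IntermediateField.adjoin k {c, d}) ≤ 4 := by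
  have : FiniteDimensional k (IntermediateField.adjoin k {c, d}) :=
    IntermediateField.finiteDimensional_adjoin fun x _ => Algebra.IsIntegral.isIntegral x
  let c' : IntermediateField.adjoin k {c, d} :=
    ⟨c, IntermediateField.subset_adjoin _ _ (by simp)⟩
  let d' : IntermediateField.adjoin k {c, d} :=
    ⟨d, IntermediateField.subset_adjoin _ _ (by simp)⟩
  have hA' : c' * c' - algebraMap k _ m * (d' * d') - c' + algebraMap k _ n₀ = 0 := Subtype.ext hA
  have hB' : 2 * c' * d' + d' * d' - d' + algebraMap k _ n₁ = 0 := Subtype.ext hB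
  have hroot : ∀ φ : IntermediateField.adjoin k {c, d} →ₐ[k] Ω,
      (φ c' + w * φ d' = c + w * d ∨ φ c' + w * φ d' = 1 - (c + w * d)) ∧
      (φ c' + (1 - w) * φ d' = c + (1 - w) * d ∨
        φ c' + (1 - w) * φ d' = 1 - (c + (1 - w) * d)) := fun φ => by
    have hφA := congrArg φ hA'
    have hφB := congrArg φ hB'
    simp only [map_add, map_sub, map_mul, map_ofNat, AlgHom.commutes, map_zero] at hφA hφB
    constructor
    · refine (mul_eq_zero.1 (?_ : (φ c' + w * φ d' - (c + w * d)) *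
        (φ c' + w * φ d' - (1 - (c + w * d))) = 0)).imp sub_eq_zero.1 sub_eq_zero.1
      linear_combination hφA - hA + w * (hφB - hB) + (φ d' * φ d' - d * d) * hw
    · refine (mul_eq_zero.1 (?_ : (φ c' + (1 - w) * φ d' - (c + (1 - w) * d)) *
        (φ c' + (1 - w) * φ d' - (1 - (c + (1 - w) * d))) = 0)).imp sub_eq_zero.1 sub_eq_zero.1
      linear_combination hφA - hA + (1 - w) * (hφB - hB) + (φ d' * φ d' - d * d) * hw
  let g : (IntermediateField.adjoin k {c, d} →ₐ[k] Ω) → Prop × Prop := fun φ =>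
    (φ c' + w * φ d' = c + w * d, φ c' + (1 - w) * φ d' = c + (1 - w) * d)
  have hg : Function.Injective g := fun φ ψ h => by
    have h1 : φ c' + w * φ d' = ψ c' + w * ψ d' := by
      have := congrArg Prod.fst h
      simp only [g, eq_iff_iff] at this
      rcases (hroot φ).1 with e | e <;> rcases (hroot ψ).1 with e' | e' <;> grind
    have h2 : φ c' + (1 - w) * φ d' = ψ c' + (1 - w) * ψ d' := by
      have := congrArg Prod.snd h
      simp only [g, eq_iff_iff] at this
      rcases (hroot φ).2 with e | e <;> rcases (hroot ψ).2 with e' | e' <;> grind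
    have hd : φ d' = ψ d' := by
      refine mul_left_cancel₀ hw2 ?_
      linear_combination h1 - h2
    have hc : φ c' = ψ c' := by
      rw [hd] at h1
      exact add_right_cancel h1
    refine IntermediateField.algHom_ext_of_eq_adjoin _ rfl fun x hx => ?_
    rcases hx with rfl | rfl
    · exact hc
    · exact hd
  rw [← AlgHom.natCard_of_splits k (IntermediateField.adjoin k {c, d}) Ω fun x =>
    IsSepClosed.splits_codomain _ (Algebra.IsSeparable.isSeparable k x)]
  exact (Nat.card_le_card_of_injective g hg).trans (by simp)

lemma IsQuadGen.exists_root_tensor {k K F : Type*} [Field k] [Field K] [Field F] [Algebra k K]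
    [Algebra k F] {w : K} {m : k} (hw : IsQuadGen w m) {n₀ n₁ : k} {c d : F}
    (hA : c * c - algebraMap k F m * (d * d) - c + algebraMap k F n₀ = 0)
    (hB : 2 * c * d + d * d - d + algebraMap k F n₁ = 0) :
    ∃ r : K ⊗[k] F,
      r * r - r + algebraMap K _ (algebraMap k K n₀ + algebraMap k K n₁ * w) = 0 := by
  refine ⟨algebraMap F _ c + algebraMap F _ d * algebraMap K _ w, ?_⟩
  have hA' := congrArg (algebraMap F (K ⊗[k] F)) hA
  have hB' := congrArg (algebraMap F (K ⊗[k] F)) hB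
  have hwF := (hw.baseChange F).sq
  simp only [map_add, map_sub, map_mul, map_zero, map_ofNat] at hA' hB'
  simp only [map_add, map_mul, algebraMap_tensor_comm]
  linear_combination hA' + algebraMap K (K ⊗[k] F) w * hB' + (algebraMap F (K ⊗[k] F) d) ^ 2 * hwF

/-- `X ^ 2 - X + n` acquires a root in `K ⊗[k] F` for some extension `F` of degree two or four. -/
lemma exists_quartic_root_tensor {k K : Type} [Field k] [Field K] [Algebra k K]
    [Algebra.IsSeparable k K] {w : K} {m : k} (hw : IsQuadGen w m) {n : K} (hdisc : 1 - 4 * n ≠ 0)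
    (hn : ∀ a b : K, quadNorm n a b = 0 → a = 0 ∧ b = 0) :
    ∃ (F : Type) (_ : Field F) (_ : Algebra k F), FiniteDimensional k F ∧
      Algebra.IsSeparable k F ∧ Module.finrank k F ∣ 4 ∧
      ∃ r : K ⊗[k] F, r * r - r + algebraMap K _ n = 0 := by
  let σ : K →ₐ[k] SeparableClosure k := IsSepClosed.lift
  obtain ⟨n₀, n₁, hn01⟩ := hw.exists_eq n
  have hdisc' : 1 - 4 * (algebraMap k K n₀ + algebraMap k K n₁ * (1 - w)) ≠ 0 := fun h => by
    obtain ⟨h1, h2⟩ := hw.indep (1 - 4 * (n₀ + n₁)) (4 * n₁) (by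
      simp only [map_sub, map_add, map_mul, map_one, map_ofNat]
      linear_combination h)
    refine hdisc ?_
    have h1' := congrArg (algebraMap k K) h1
    have h2' := congrArg (algebraMap k K) h2
    simp only [map_sub, map_add, map_mul, map_one, map_ofNat, map_zero] at h1' h2'
    rw [hn01]
    linear_combination h1' + (1 - w) * h2'
  have hw2 : 2 * w - 1 ≠ 0 := fun h => by
    obtain ⟨h1, -⟩ := hw.indep (-1) 2 (by
      simp only [map_neg, map_one, map_ofNat]
      linear_combination h)
    simp at h1
  have hσ4 : ∀ x : K, 1 - 4 * x ≠ 0 → 1 - 4 * σ x ≠ 0 := fun x hx h => hx ((map_eq_zero σ).1 (by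
    simpa only [map_sub, map_one, map_mul, map_ofNat, map_zero] using h))
  have hσw2 : 2 * σ w - 1 ≠ 0 := fun h => hw2 ((map_eq_zero σ).1 (by
    simpa only [map_sub, map_one, map_mul, map_ofNat, map_zero] using h))
  have hσw : σ w * σ w = σ w - algebraMap k _ m := by
    rw [← map_mul, hw.sq, map_sub, AlgHom.commutes]
  obtain ⟨u, hu⟩ := exists_root_of_isSepClosed (hσ4 _ hdisc)
  obtain ⟨v, hv⟩ := exists_root_of_isSepClosed (hσ4 _ hdisc')
  rw [hn01] at hu
  simp only [map_add, map_mul, map_sub, map_one, AlgHom.commutes] at hu hv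
  obtain ⟨d, hd⟩ : ∃ d, (2 * σ w - 1) * d = u - v := ⟨_, mul_div_cancel₀ _ hσw2⟩
  obtain ⟨c, hc⟩ : ∃ c, c = u - σ w * d := ⟨_, rfl⟩
  have hu' : u = c + σ w * d := by linear_combination -hc
  have hv' : v = c + (1 - σ w) * d := by linear_combination hu' + hd
  rw [hu'] at hu
  rw [hv'] at hv
  have hB : 2 * c * d + d * d - d + algebraMap k _ n₁ = 0 := by
    refine mul_left_cancel₀ hσw2 ?_
    linear_combination hu - hv
  have hA : c * c - algebraMap k _ m * (d * d) - c + algebraMap k _ n₀ = 0 := by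
    linear_combination hu - σ w * hB - d * d * hσw
  have hfin : FiniteDimensional k (IntermediateField.adjoin k {c, d}) :=
    IntermediateField.finiteDimensional_adjoin fun x _ => Algebra.IsIntegral.isIntegral x
  have hle := finrank_adjoin_pair_le_four hσw2 hσw hA hB
  have hroot := hw.exists_root_tensor
    (c := (⟨c, IntermediateField.subset_adjoin _ _ (by simp)⟩ : IntermediateField.adjoin k {c, d}))
    (d := ⟨d, IntermediateField.subset_adjoin _ _ (by simp)⟩)
    (Subtype.ext hA) (Subtype.ext hB)
  rw [← hn01] at hroot
  refine ⟨IntermediateField.adjoin k {c, d}, inferInstance, inferInstance, hfin, inferInstance, ?_,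
    hroot⟩
  have hpos : 0 < Module.finrank k (IntermediateField.adjoin k {c, d}) := Module.finrank_pos
  have hodd : ¬ Odd (Module.finrank k (IntermediateField.adjoin k {c, d})) := fun hodd => by
    obtain ⟨r, hr⟩ := hroot
    obtain ⟨-, h1⟩ := quadNorm_tensor_anisotropic hw hodd hn (-r) 1 (by
      rw [quadNorm]
      linear_combination hr)
    let _ : Field (K ⊗[k] (IntermediateField.adjoin k {c, d})) :=
      (isField_tensor_of_odd hw hodd).toField
    exact one_ne_zero h1
  rw [Nat.not_odd_iff_even, even_iff_two_dvd] at hodd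
  generalize Module.finrank k (IntermediateField.adjoin k {c, d}) = e at *
  obtain rfl | rfl : e = 2 ∨ e = 4 := by omega
  · norm_num
  · norm_num

lemma exists_quadNorm_tensor_map {k K F E : Type*} [Field k] [Field K] [Field F] [Field E]
    [Algebra k K] [Algebra k F] [Algebra k E] (φ : F →ₐ[k] E) {n β : K}
    (h : ∃ a b : K ⊗[k] F, quadNorm (algebraMap K _ n) a b = algebraMap K _ β) :
    ∃ a b : K ⊗[k] E, quadNorm (algebraMap K _ n) a b = algebraMap K _ β := by
  obtain ⟨a, b, hab⟩ := h
  let ψ : K ⊗[k] F →ₐ[K] K ⊗[k] E := Algebra.TensorProduct.map (AlgHom.id K K) φ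
  refine ⟨ψ a, ψ b, ?_⟩
  rw [← ψ.commutes, ← ψ.commutes, ← hab]
  exact (map_quadNorm ψ.toRingHom _ _ _).symm

/-- If the Albert form is anisotropic, then `β` only becomes a norm in degrees divisible by `4`. -/
lemma four_dvd_finrank {k K F : Type} [Field k] [Field K] [Field F] [Algebra k K] [Algebra k F]
    [FiniteDimensional k F] [Algebra.IsSeparable k F] {w : K} {m : k} (hw : IsQuadGen w m)
    {n β : K} (hn : ∀ a b : K, quadNorm n a b = 0 → a = 0 ∧ b = 0)
    (hβ : ¬ ∃ a b : K, quadNorm n a b = β) (hA : ¬ AlbertIsotropic k w n β)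
    (h : ∃ a b : K ⊗[k] F, quadNorm (algebraMap K _ n) a b = algebraMap K _ β) :
    4 ∣ Module.finrank k F := by
  have hodd : ¬ Odd (Module.finrank k F) := fun hodd =>
    hβ (exists_quadNorm_eq_of_odd hw hodd hn h)
  have htwo : Module.finrank k F % 4 ≠ 2 := fun h2 => by
    obtain ⟨M, E, _, _, _, _, _, _, _, _, hM, hE, _, ⟨φ⟩⟩ := exists_odd_quadratic_tower h2
    obtain ⟨θ, ν, hθ⟩ := exists_isQuadGen M E hE
    exact hA (albertIsotropic_of_odd hw hM n β
      (albertIsotropic_of_quadratic hw hM hθ hn hβ (exists_quadNorm_tensor_map φ h)))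
  rw [Nat.not_odd_iff_even, even_iff_two_dvd] at hodd
  omega

theorem stmt0 (k K L : Type) [Field k] [Field K] [Field L]
    [Algebra k K] [Algebra k L] [Algebra K L] [IsScalarTower k K L]
    [Algebra.IsSeparable k L]
    (hKk : Module.finrank k K = 2) (hLK : Module.finrank K L = 2)
    (huniq : ∀ M : IntermediateField k L,
      M = ⊥ ∨ M = ⊤ ∨ M = (IsScalarTower.toAlgHom k K L).fieldRange)
    (β : Kˣ) :
    ∃ (F : Type) (_ : Field F) (_ : Algebra k F),
      FiniteDimensional k F ∧ Algebra.IsSeparable k F ∧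
      IsNormFrom k K L F (β : K) ∧
      ∀ (F' : Type) (_ : Field F') (_ : Algebra k F'),
        FiniteDimensional k F' → Algebra.IsSeparable k F' →
        IsNormFrom k K L F' (β : K) →
        Module.finrank k F ∣ Module.finrank k F' := by
  have : Algebra.IsSeparable k K := Algebra.isSeparable_tower_bot_of_isSeparable k K L
  have : Algebra.IsSeparable K L := Algebra.isSeparable_tower_top_of_isSeparable k K L
  obtain ⟨w, m, hw⟩ := exists_isQuadGen k K hKk
  obtain ⟨u, n, hu⟩ := exists_isQuadGen K L hLK
  have hn : ∀ a b : K, quadNorm n a b = 0 → a = 0 ∧ b = 0 := fun _ _ =>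
    hu.eq_zero_of_quadNorm_eq_zero
  have hdisc : 1 - 4 * n ≠ 0 := hu.disc_ne_zero
  have hβ0 : (β : K) ≠ 0 := β.ne_zero
  simp only [isNormFrom_iff hu hβ0]
  by_cases hβ : ∃ a b : K, quadNorm n a b = β
  · obtain ⟨a, b, hab⟩ := hβ
    refine ⟨k, inferInstance, inferInstance, inferInstance, inferInstance,
      ⟨algebraMap K _ a, algebraMap K _ b, ?_⟩, fun F' _ _ _ _ _ => by simp⟩
    rw [← map_quadNorm, hab]
  by_cases hA : AlbertIsotropic k w n β
  · obtain ⟨F, _, _, hfin, hsep, hdeg, hF⟩ :=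
      exists_quadratic_of_albertIsotropic hw hdisc hβ0 hn hβ hA
    refine ⟨F, inferInstance, inferInstance, hfin, hsep, hF, fun F' _ _ _ _ hF' => ?_⟩
    rw [hdeg, ← even_iff_two_dvd, ← Nat.not_odd_iff_even]
    exact fun hodd => hβ (exists_quadNorm_eq_of_odd hw hodd hn hF')
  · obtain ⟨F, _, _, hfin, hsep, hdeg, r, hr⟩ := exists_quartic_root_tensor hw hdisc hn
    exact ⟨F, inferInstance, inferInstance, hfin, hsep, exists_quadNorm_eq_of_root hdisc r hr β,
      fun F' _ _ _ _ hF' => hdeg.trans (four_dvd_finrank hw hn hβ hA hF')⟩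
end

section
/- Let k ⊆ K ⊆ L be a tower of fields with [L:K] = [K:k] = 2 and L/k separable, and suppose K is the unique field strictly between k and L. Let β ∈ Kˣ with β ∉ N_{L/K}(Lˣ). Suppose there is a tower of finite separable field extensions k ⊆ E ⊆ E' with [E:k] odd and [E':E] = 2 such that the image of β in (K ⊗_k E')ˣ is a norm from (L ⊗_k E')ˣ. Then there exists a separable field extension F/k of degree 2 such that the image of β in (K ⊗_k F)ˣ is a norm from (L ⊗_k F)ˣ. -/
open TensorProduct

open Polynomial in
/-- A polynomial of odd degree over a field has an irreducible factor of odd degree. -/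
theorem Polynomial.exists_irreducible_odd_natDegree_dvd {k : Type*} [Field k] (h : k[X])
    (hodd : Odd h.natDegree) : ∃ p : k[X], Irreducible p ∧ Odd p.natDegree ∧ p ∣ h := by
  induction h using WfDvdMonoid.induction_on_irreducible with
  | zero => simp at hodd
  | unit u hu => simp [natDegree_eq_zero_of_isUnit hu] at hodd
  | mul a i ha hi ih =>
    rcases Nat.even_or_odd i.natDegree with hev | hiodd
    · rw [natDegree_mul hi.ne_zero ha, Nat.odd_add'] at hodd
      obtain ⟨p, hp, hpodd, hpa⟩ := ih (hodd.2 hev)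
      exact ⟨p, hp, hpodd, hpa.mul_left i⟩
    · exact ⟨i, hi, hiodd, dvd_mul_right i a⟩

open Polynomial in
/-- Springer's theorem, in terms of congruences modulo an irreducible polynomial of odd degree. -/
theorem exists_isotropic_of_irreducible_dvd {k ι : Type*} [Field k] [Fintype ι] (a : ι → ι → k)
    (f : k[X]) (hf : Irreducible f) (hodd : Odd f.natDegree) (v : ι → k[X])
    (hv : ∃ i, ¬ f ∣ v i) (hdvd : f ∣ ∑ i, ∑ j, C (a i j) * (v i * v j)) :
    ∃ w : ι → k, w ≠ 0 ∧ ∑ i, ∑ j, a i j * (w i * w j) = 0 := by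
  classical
  induction hn : f.natDegree using Nat.strong_induction_on generalizing f v with
  | _ n IH =>
  obtain ⟨i₀, hi₀⟩ := hv
  -- reduce the entries modulo `f` and divide by their greatest common divisor
  obtain ⟨w, hw, hgcd⟩ := Finset.extract_gcd (s := Finset.univ) (fun i => v i % f)
    ⟨i₀, Finset.mem_univ i₀⟩
  set g := Finset.univ.gcd (fun i => v i % f)
  replace hw : ∀ i, v i % f = g * w i := fun i => hw i (Finset.mem_univ i)
  have hmod : ∀ i, f ∣ v i - g * w i := fun i => by
    rw [← hw, sub_eq_iff_eq_add.2 (EuclideanDomain.div_add_mod (v i) f).symm]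
    exact dvd_mul_right _ _
  have hfg : ¬ f ∣ g := fun h => hi₀ <| by
    simpa using dvd_add (hmod i₀) (h.mul_right (w i₀))
  have hg : g ≠ 0 := fun h => hfg (h ▸ dvd_zero f)
  have hQ : f ∣ ∑ i, ∑ j, C (a i j) * (w i * w j) := by
    have h1 : f ∣ g ^ 2 * ∑ i, ∑ j, C (a i j) * (w i * w j) := by
      refine (dvd_sub_right hdvd).1 ?_
      rw [Finset.mul_sum, ← Finset.sum_sub_distrib]
      refine Finset.dvd_sum fun i _ => ?_
      rw [Finset.mul_sum, ← Finset.sum_sub_distrib]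
      refine Finset.dvd_sum fun j _ => ?_
      obtain ⟨c, hc⟩ := hmod i
      obtain ⟨d, hd⟩ := hmod j
      refine ⟨C (a i j) * (c * v j + g * w i * d), ?_⟩
      linear_combination C (a i j) * v j * hc + C (a i j) * g * w i * hd
    exact (hf.prime.dvd_or_dvd h1).resolve_left fun h => hfg (hf.prime.dvd_of_dvd_pow h)
  have hdeg : ∀ i, (w i).natDegree < n := fun i => by
    rcases eq_or_ne (w i) 0 with h0 | h0
    · rw [h0, natDegree_zero, ← hn]; exact hodd.pos
    · have := natDegree_mod_lt (v i) hodd.pos.ne'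
      rw [hw, natDegree_mul hg h0] at this
      omega
  -- compare leading coefficients
  obtain ⟨m, hm⟩ : ∃ m, m = Finset.univ.sup fun i => (w i).natDegree := ⟨_, rfl⟩
  have hle : ∀ i, (w i).natDegree ≤ m := fun i =>
    hm ▸ Finset.le_sup (f := fun i => (w i).natDegree) (Finset.mem_univ i)
  obtain ⟨i₁, -, hi₁⟩ := Finset.exists_mem_eq_sup Finset.univ ⟨i₀, Finset.mem_univ i₀⟩
    fun i => (w i).natDegree
  have hmn : m < n := by rw [hm, hi₁]; exact hdeg i₁
  by_cases hlead : ∑ i, ∑ j, a i j * ((w i).coeff m * (w j).coeff m) = 0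
  · refine ⟨fun i => (w i).coeff m, fun h0 => ?_, hlead⟩
    have hall : ∀ i, (w i).coeff m = 0 := congrFun h0
    have hz : w i₁ = 0 := by
      rw [← leadingCoeff_eq_zero, leadingCoeff, ← hi₁, ← hm]; exact hall i₁
    have hm0 : m = 0 := by rw [hm, hi₁, hz, natDegree_zero]
    have hw0 : ∀ i, w i = 0 := fun i => by
      have h1 := eq_C_of_natDegree_le_zero ((hle i).trans hm0.le)
      rw [h1, ← hm0, hall, C_0]
    exact one_ne_zero (hgcd.symm.trans (Finset.gcd_eq_zero_iff.2 fun i _ => hw0 i))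
  have hcoeff : (∑ i, ∑ j, C (a i j) * (w i * w j)).coeff (m + m) =
      ∑ i, ∑ j, a i j * ((w i).coeff m * (w j).coeff m) := by
    simp only [finsetSum_coeff, coeff_C_mul]
    refine Finset.sum_congr rfl fun i _ => Finset.sum_congr rfl fun j _ => ?_
    rw [coeff_mul_add_eq_of_natDegree_le (hle i) (hle j)]
  have hdegQ : (∑ i, ∑ j, C (a i j) * (w i * w j)).natDegree = m + m := by
    refine natDegree_eq_of_le_of_coeff_ne_zero ?_ (hcoeff ▸ hlead)
    refine natDegree_sum_le_of_forall_le _ _ fun i _ =>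
      natDegree_sum_le_of_forall_le _ _ fun j _ => ?_
    exact (natDegree_C_mul_le _ _).trans (natDegree_mul_le_of_le (hle i) (hle j))
  obtain ⟨h, hh⟩ := hQ
  have hh0 : h ≠ 0 := by
    rintro rfl
    rw [hh, mul_zero, coeff_zero] at hcoeff
    exact hlead hcoeff.symm
  rw [hh, natDegree_mul hf.ne_zero hh0] at hdegQ
  obtain ⟨p, hp, hpodd, hph⟩ := Polynomial.exists_irreducible_odd_natDegree_dvd h <| by
    rw [← Nat.not_even_iff_odd]
    intro hev
    have : Odd (m + m) := hdegQ ▸ hodd.add_even hev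
    exact (Nat.not_even_iff_odd.2 this) ⟨m, rfl⟩
  refine IH p.natDegree ?_ p hp hpodd w ?_ (hh ▸ hph.mul_left f) rfl
  · have := natDegree_le_of_dvd hph hh0
    omega
  · by_contra! hall
    refine hp.not_isUnit (isUnit_of_dvd_one ?_)
    rw [← hgcd]
    exact Finset.dvd_gcd fun i _ => hall i

/-- Springer's theorem: a quadratic form, given by a matrix of coefficients, which is isotropic over
a separable extension of odd degree is isotropic. -/
theorem exists_isotropic_of_odd_finrank {k E ι : Type*} [Field k] [Field E] [Algebra k E]
    [FiniteDimensional k E] [Algebra.IsSeparable k E] (hE : Odd (Module.finrank k E))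
    [Fintype ι] (a : ι → ι → k) (v : ι → E) (hv : v ≠ 0)
    (h : ∑ i, ∑ j, a i j • (v i * v j) = 0) :
    ∃ w : ι → k, w ≠ 0 ∧ ∑ i, ∑ j, a i j * (w i * w j) = 0 := by
  obtain ⟨γ, hγ⟩ := Field.exists_primitive_element k E
  have h_int : IsIntegral k γ := IsIntegral.of_finite k γ
  have hsurj : ∀ x : E, ∃ p : Polynomial k, Polynomial.aeval γ p = x := fun x => by
    have hx : x ∈ (IntermediateField.adjoin k {γ}).toSubalgebra := hγ ▸ IntermediateField.mem_top
    rw [IntermediateField.adjoin_simple_toSubalgebra_of_isAlgebraic h_int.isAlgebraic,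
      Algebra.adjoin_singleton_eq_range_aeval] at hx
    exact hx
  choose p hp using fun i => hsurj (v i)
  obtain ⟨i, hi⟩ := Function.ne_iff.1 hv
  refine exists_isotropic_of_irreducible_dvd a (minpoly k γ) (minpoly.irreducible h_int) ?_ p
    ⟨i, fun hd => hi ?_⟩ (minpoly.dvd k γ ?_)
  · rwa [(Field.primitive_element_iff_minpoly_natDegree_eq k γ).1 hγ]
  · rw [← hp, (minpoly.dvd_iff).1 hd]; rfl
  · simpa [hp, Algebra.smul_def] using h

/-- In a quadratic extension, `1` and any element outside the base field form a basis. -/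
theorem exists_basis_one_of_notMem_range {k K : Type*} [Field k] [Field K] [Algebra k K]
    (h : Module.finrank k K = 2) (x : K) (hx : x ∉ Set.range (algebraMap k K)) :
    ∃ b : Module.Basis (Fin 2) k K, b 0 = 1 ∧ b 1 = x := by
  have hli : LinearIndependent k ![1, x] := by
    rw [LinearIndependent.pair_iff' one_ne_zero]
    intro a ha
    exact hx ⟨a, by rw [← ha, Algebra.smul_def, mul_one]⟩
  refine ⟨basisOfLinearIndependentOfCardEqFinrank hli (by simp [h]), ?_, ?_⟩ <;> simp

theorem exists_basis_one {k K : Type*} [Field k] [Field K] [Algebra k K]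
    (h : Module.finrank k K = 2) : ∃ b : Module.Basis (Fin 2) k K, b 0 = 1 := by
  by_contra! hb
  have hall : ∀ x : K, x ∈ Set.range (algebraMap k K) := fun x => by
    by_contra hx
    obtain ⟨b, hb0, -⟩ := exists_basis_one_of_notMem_range h x hx
    exact hb b hb0
  have h1 : (⊥ : Subalgebra k K) = ⊤ := by
    refine (Algebra.eq_top_iff.2 fun x => ?_)
    exact Algebra.mem_bot.2 (hall x)
  rw [Subalgebra.bot_eq_top_iff_finrank_eq_one, h] at h1
  omega

theorem Module.Basis.exists_eq_add_of_zero_eq_one {R S : Type*} [CommRing R] [CommRing S]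
    [Algebra R S] (b : Module.Basis (Fin 2) R S) (hb : b 0 = 1) (x : S) :
    ∃ p q : R, x = algebraMap R S p + algebraMap R S q * b 1 := by
  refine ⟨b.repr x 0, b.repr x 1, ?_⟩
  conv_lhs => rw [← b.sum_repr x]
  simp [Fin.sum_univ_two, hb, Algebra.smul_def]

theorem Module.Basis.eq_zero_of_add_eq_zero_of_zero_eq_one {R S : Type*} [CommRing R] [CommRing S]
    [Algebra R S] (b : Module.Basis (Fin 2) R S) (hb : b 0 = 1) {p q : R}
    (h : algebraMap R S p + algebraMap R S q * b 1 = 0) : p = 0 ∧ q = 0 := by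
  have := Fintype.linearIndependent_iff.1 b.linearIndependent ![p, q]
    (by simpa [Fin.sum_univ_two, hb, Algebra.smul_def] using h)
  exact ⟨this 0, this 1⟩

/-- A separable quadratic extension is generated by a root of a polynomial `X² - X + m`. -/
theorem exists_basis_sq_eq_sub {k K : Type*} [Field k] [Field K] [Algebra k K]
    [Algebra.IsSeparable k K] (h : Module.finrank k K = 2) :
    ∃ (b : Module.Basis (Fin 2) k K) (m : k), b 0 = 1 ∧ b 1 ^ 2 = b 1 - algebraMap k K m := by
  obtain ⟨b, hb⟩ := exists_basis_one h
  have hnot : b 1 ∉ Set.range (algebraMap k K) := by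
    rintro ⟨c, hc⟩
    have := (b.eq_zero_of_add_eq_zero_of_zero_eq_one hb (p := c) (q := -1)
      (by rw [hc]; simp)).2
    simp at this
  suffices hθ : ∃ (θ : K) (m : k), θ ∉ Set.range (algebraMap k K) ∧
      θ ^ 2 = θ - algebraMap k K m by
    obtain ⟨θ, m, hθ, hm⟩ := hθ
    obtain ⟨b', h0, h1⟩ := exists_basis_one_of_notMem_range h θ hθ
    exact ⟨b', m, h0, by rw [h1, hm]⟩
  obtain ⟨p, t, hp⟩ := b.exists_eq_add_of_zero_eq_one hb (b 1 ^ 2)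
  by_cases ht : t = 0
  · by_cases h2 : (2 : k) = 0
    · exfalso
      have hmin : Polynomial.X ^ 2 - Polynomial.C p = minpoly k (b 1) := by
        refine minpoly.eq_of_irreducible_of_monic ?_ (by simp [hp, ht])
          (Polynomial.monic_X_pow_sub_C p two_ne_zero)
        rw [Polynomial.irreducible_iff_roots_eq_zero_of_degree_le_three
          (by rw [Polynomial.natDegree_X_pow_sub_C]) (by rw [Polynomial.natDegree_X_pow_sub_C]; lia),
          Multiset.eq_zero_iff_forall_notMem]
        intro r hr
        rw [Polynomial.mem_roots (Polynomial.X_pow_sub_C_ne_zero two_pos p)] at hr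
        simp only [Polynomial.IsRoot, Polynomial.eval_sub, Polynomial.eval_pow,
          Polynomial.eval_X, Polynomial.eval_C, sub_eq_zero] at hr
        rw [ht, ← hr] at hp
        have h2' : (2 : K) = 0 := by simpa only [map_ofNat, map_zero] using congrArg (algebraMap k K) h2
        have : (b 1 - algebraMap k K r) ^ 2 = 0 := by
          simp only [map_zero, map_pow] at hp
          linear_combination hp + (algebraMap k K r ^ 2 - b 1 * algebraMap k K r) * h2'
        exact hnot ⟨r, (sub_eq_zero.1 (pow_eq_zero_iff two_ne_zero |>.1 this)).symm⟩
      have hsep := Algebra.IsSeparable.isSeparable k (b 1)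
      rw [IsSeparable, ← hmin, Polynomial.separable_def] at hsep
      simp only [Polynomial.derivative_sub, Polynomial.derivative_X_pow, Polynomial.derivative_C,
        Nat.cast_ofNat, h2, map_zero, zero_mul, sub_zero, isCoprime_zero_right] at hsep
      have := Polynomial.natDegree_eq_zero_of_isUnit hsep
      simp at this
    · have h2' : (2 : K) ≠ 0 := by
        simpa only [map_ofNat] using (map_ne_zero (algebraMap k K)).2 h2
      refine ⟨(1 + b 1) / 2, (1 - p) / 4, ?_, ?_⟩
      · rintro ⟨c, hc⟩
        refine hnot ⟨2 * c - 1, ?_⟩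
        rw [map_sub, map_mul, hc, map_ofNat, map_one (algebraMap k K)]
        field_simp
        ring
      · have h4 : (4 : K) ≠ 0 := by
          have : (4 : K) = 2 * 2 := by norm_num
          rw [this]; exact mul_ne_zero h2' h2'
        rw [ht] at hp
        simp only [map_div₀, map_sub, map_one, map_ofNat]
        field_simp
        simp only [map_zero] at hp
        linear_combination 4 * hp
  · have ht' : algebraMap k K t ≠ 0 := (map_ne_zero _).2 ht
    refine ⟨b 1 / algebraMap k K t, -p / t ^ 2, ?_, ?_⟩
    · rintro ⟨c, hc⟩
      exact hnot ⟨c * t, by rw [map_mul, hc, div_mul_cancel₀ _ ht']⟩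
    · simp only [map_div₀, map_neg, map_pow]
      field_simp
      linear_combination hp

/-- The norm form of a quadratic algebra generated by `θ` with `θ² = θ - m`. -/
theorem Algebra.norm_add_mul_of_sq_eq_sub {R S : Type*} [CommRing R] [CommRing S] [Algebra R S]
    (b : Module.Basis (Fin 2) R S) (hb : b 0 = 1) {m : R} (hm : b 1 ^ 2 = b 1 - algebraMap R S m)
    (p q : R) :
    Algebra.norm R (algebraMap R S p + algebraMap R S q * b 1) = p ^ 2 + p * q + m * q ^ 2 := by
  have h0 : (algebraMap R S p + algebraMap R S q * b 1) * b 0 = p • b 0 + q • b 1 := by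
    simp [hb, Algebra.smul_def]
  have h1 : (algebraMap R S p + algebraMap R S q * b 1) * b 1 =
      (-(q * m)) • b 0 + (p + q) • b 1 := by
    simp only [hb, Algebra.smul_def, map_neg, map_mul, map_add]
    linear_combination algebraMap R S q * hm
  rw [Algebra.norm_eq_matrix_det b, Matrix.det_fin_two]
  simp only [Algebra.leftMulMatrix_eq_repr_mul, h0, h1]
  simp
  ring

theorem TensorProduct.exists_eq_sum_basis_tmul {k M F ι : Type*} [Field k] [AddCommGroup M]
    [Module k M] [AddCommGroup F] [Module k F] [Fintype ι] (b : Module.Basis ι k M)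
    (x : M ⊗[k] F) : ∃ c : ι → F, x = ∑ i, b i ⊗ₜ[k] c i := by
  obtain ⟨c, hc⟩ := TensorProduct.eq_repr_basis_left b x
  exact ⟨c, by rw [← hc, Finsupp.sum_fintype _ _ (by simp)]⟩

theorem TensorProduct.eq_zero_of_sum_basis_tmul_eq_zero {k M F ι : Type*} [Field k]
    [AddCommGroup M] [Module k M] [AddCommGroup F] [Module k F] [Fintype ι]
    (b : Module.Basis ι k M) {c : ι → F} (h : ∑ i, b i ⊗ₜ[k] c i = 0) (i : ι) : c i = 0 := by
  have := TensorProduct.sum_tmul_basis_left_eq_zero b (Finsupp.equivFunOnFinite.symm c)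
    (by rw [Finsupp.sum_fintype _ _ (by simp)]; simpa using h)
  simpa using DFunLike.congr_fun this i

section Tower

variable {k K L : Type} [Field k] [Field K] [Field L] [Algebra k K] [Algebra k L] [Algebra K L]
  [IsScalarTower k K L]

/-- A basis `1, θ` of `L` over `K` is also one of `L ⊗ F` over `K ⊗ F`: existence of coordinates. -/
theorem exists_eq_map_add_map_mul (F : Type) [Field F] [Algebra k F]
    (b : Module.Basis (Fin 2) K L) (hb : b 0 = 1) (x : L ⊗[k] F) :
    ∃ A B : K ⊗[k] F,
      x = Algebra.TensorProduct.map (IsScalarTower.toAlgHom k K L) (AlgHom.id k F) A +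
        Algebra.TensorProduct.map (IsScalarTower.toAlgHom k K L) (AlgHom.id k F) B *
          (b 1 ⊗ₜ[k] 1) := by
  induction x with
  | zero => exact ⟨0, 0, by simp⟩
  | tmul y f =>
    obtain ⟨p, q, h⟩ := b.exists_eq_add_of_zero_eq_one hb y
    exact ⟨p ⊗ₜ f, q ⊗ₜ f, by simp [h, TensorProduct.add_tmul]⟩
  | add x y hx hy =>
    obtain ⟨A, B, rfl⟩ := hx
    obtain ⟨A', B', rfl⟩ := hy
    exact ⟨A + A', B + B', by simp only [map_add]; ring⟩

/-- A basis `1, θ` of `L` over `K` is also one of `L ⊗ F` over `K ⊗ F`: linear independence. -/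
theorem eq_zero_of_map_add_map_mul_eq_zero [FiniteDimensional k K] (F : Type) [Field F] [Algebra k F]
    (b : Module.Basis (Fin 2) K L) (hb : b 0 = 1) {A B : K ⊗[k] F}
    (h : Algebra.TensorProduct.map (IsScalarTower.toAlgHom k K L) (AlgHom.id k F) A +
        Algebra.TensorProduct.map (IsScalarTower.toAlgHom k K L) (AlgHom.id k F) B *
          (b 1 ⊗ₜ[k] 1) = 0) : A = 0 ∧ B = 0 := by
  obtain ⟨p, rfl⟩ := TensorProduct.exists_eq_sum_basis_tmul (Module.finBasis k K) A
  obtain ⟨q, rfl⟩ := TensorProduct.exists_eq_sum_basis_tmul (Module.finBasis k K) B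
  have key := TensorProduct.eq_zero_of_sum_basis_tmul_eq_zero
    ((Module.finBasis k K).smulTower b) (c := fun ij => ![p ij.1, q ij.1] ij.2) (by
      rw [← h]
      simp [Fintype.sum_prod_type, hb, Finset.sum_add_distrib, Finset.sum_mul, Algebra.smul_def])
  exact ⟨Finset.sum_eq_zero fun i _ => by simpa using congrArg (_ ⊗ₜ[k] ·) (key (i, 0)),
    Finset.sum_eq_zero fun i _ => by simpa using congrArg (_ ⊗ₜ[k] ·) (key (i, 1))⟩

/-- In coordinates with respect to a basis `1, θ` with `θ² = θ - m`, being a norm from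
`L ⊗ F` means being represented by the form `A² + A B + m B²` over `K ⊗ F`. -/
theorem isNormFrom_iff_s1 [FiniteDimensional k K] (F : Type) [Field F] [Algebra k F]
    (b : Module.Basis (Fin 2) K L) (hb : b 0 = 1) {m : K} (hm : b 1 ^ 2 = b 1 - algebraMap K L m)
    {β : K} (hβ : β ≠ 0) :
    IsNormFrom k K L F β ↔
      ∃ A B : K ⊗[k] F, A ^ 2 + A * B + (m ⊗ₜ[k] 1) * B ^ 2 = β ⊗ₜ[k] 1 := by
  let _ : Algebra (K ⊗[k] F) (L ⊗[k] F) :=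
    ((Algebra.TensorProduct.map (IsScalarTower.toAlgHom k K L) (AlgHom.id k F)).toRingHom).toAlgebra
  let c : Module.Basis (Fin 2) (K ⊗[k] F) (L ⊗[k] F) := .mk (v := ![1, b 1 ⊗ₜ[k] 1])
    (by
      rw [Fintype.linearIndependent_iff]
      intro g hg
      simp only [Fin.sum_univ_two, Algebra.smul_def, Matrix.cons_val_zero, Matrix.cons_val_one,
        mul_one] at hg
      have := eq_zero_of_map_add_map_mul_eq_zero F b hb hg
      exact Fin.forall_fin_two.2 this)
    (by
      rintro x -
      obtain ⟨A, B, hx⟩ := exists_eq_map_add_map_mul F b hb x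
      have hx' : x = A • (1 : L ⊗[k] F) + B • (b 1 ⊗ₜ[k] 1) := by
        simp only [Algebra.smul_def, mul_one]; exact hx
      rw [hx']
      exact add_mem (Submodule.smul_mem _ _ (Submodule.subset_span ⟨0, rfl⟩))
        (Submodule.smul_mem _ _ (Submodule.subset_span ⟨1, rfl⟩)))
  have hc0 : c 0 = 1 := by simp [c]
  have hc1 : c 1 = b 1 ⊗ₜ[k] 1 := by simp [c]
  have hcm : c 1 ^ 2 = c 1 - algebraMap (K ⊗[k] F) (L ⊗[k] F) (m ⊗ₜ[k] 1) := by
    have : algebraMap (K ⊗[k] F) (L ⊗[k] F) (m ⊗ₜ[k] 1) = algebraMap K L m ⊗ₜ[k] 1 :=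
      Algebra.TensorProduct.map_tmul _ _ _ _
    rw [hc1, this, Algebra.TensorProduct.tmul_pow, hm, one_pow, TensorProduct.sub_tmul]
  constructor
  · rintro ⟨x, hx⟩
    obtain ⟨A, B, h⟩ := c.exists_eq_add_of_zero_eq_one hc0 (x : L ⊗[k] F)
    refine ⟨A, B, ?_⟩
    rw [← hx, h, Algebra.norm_add_mul_of_sq_eq_sub c hc0 hcm]
  · rintro ⟨A, B, h⟩
    have hmul : (algebraMap _ (L ⊗[k] F) A + algebraMap _ (L ⊗[k] F) B * c 1) *
        ((algebraMap _ (L ⊗[k] F) A + algebraMap _ (L ⊗[k] F) B - algebraMap _ (L ⊗[k] F) B * c 1) *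
          algebraMap _ (L ⊗[k] F) (β⁻¹ ⊗ₜ[k] (1 : F))) = 1 := by
      have h' := congrArg (algebraMap (K ⊗[k] F) (L ⊗[k] F)) h
      have hβ' : algebraMap (K ⊗[k] F) (L ⊗[k] F) (β ⊗ₜ[k] 1) *
          algebraMap (K ⊗[k] F) (L ⊗[k] F) (β⁻¹ ⊗ₜ[k] (1 : F)) = 1 := by
        rw [← map_mul, Algebra.TensorProduct.tmul_mul_tmul, mul_inv_cancel₀ hβ, one_mul,
          ← Algebra.TensorProduct.one_def, map_one]
      simp only [map_add, map_mul, map_pow] at h'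
      linear_combination hβ' + algebraMap _ (L ⊗[k] F) (β⁻¹ ⊗ₜ[k] (1 : F)) * h' -
        algebraMap _ (L ⊗[k] F) (β⁻¹ ⊗ₜ[k] (1 : F)) * algebraMap _ (L ⊗[k] F) B ^ 2 * hcm
    refine ⟨Units.mkOfMulEqOne _ _ hmul, ?_⟩
    rw [← h, ← Algebra.norm_add_mul_of_sq_eq_sub c hc0 hcm]
    rfl

end Tower

/-- The tensor product of two field extensions of coprime degrees is a domain. -/
theorem isDomain_tensorProduct_of_coprime_finrank {k L E : Type*} [Field k] [Field L] [Field E]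
    [Algebra k L] [Algebra k E] [FiniteDimensional k L] [FiniteDimensional k E]
    (h : (Module.finrank k L).Coprime (Module.finrank k E)) : IsDomain (L ⊗[k] E) := by
  let fa : L →ₐ[k] AlgebraicClosure k := IsAlgClosed.lift
  let fb : E →ₐ[k] AlgebraicClosure k := IsAlgClosed.lift
  refine IntermediateField.LinearDisjoint.isDomain' (fa := fa) (fb := fb)
    (IntermediateField.LinearDisjoint.of_finrank_coprime ?_)
  have ha : Module.finrank k L = Module.finrank k fa.fieldRange :=
    (AlgEquiv.ofInjectiveField fa).toLinearEquiv.finrank_eq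
  have hb : Module.finrank k E = Module.finrank k fb.fieldRange :=
    (AlgEquiv.ofInjectiveField fb).toLinearEquiv.finrank_eq
  rwa [← ha, ← hb]

/-- If `1, θ` are linearly independent and `θ² = θ - m` in a domain, the norm form is anisotropic. -/
theorem eq_zero_of_normForm_eq_zero {R S : Type*} [CommRing R] [CommRing S] [IsDomain S]
    (f : R →+* S) (θ : S) {m : R} (hθ : θ ^ 2 = θ - f m)
    (hli : ∀ A B : R, f A + f B * θ = 0 → A = 0 ∧ B = 0) {A B : R}
    (h : A ^ 2 + A * B + m * B ^ 2 = 0) : A = 0 ∧ B = 0 := by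
  have h' := congrArg f h
  simp only [map_add, map_mul, map_pow, map_zero] at h'
  have hmul : (f A + f B * θ) * (f (A + B) + f (-B) * θ) = 0 := by
    simp only [map_add, map_neg]
    linear_combination h' - f B ^ 2 * hθ
  rcases mul_eq_zero.1 hmul with h0 | h0
  · exact hli A B h0
  · obtain ⟨h1, h2⟩ := hli _ _ h0
    rw [neg_eq_zero] at h2
    exact ⟨by simpa [h2] using h1, h2⟩

/-- The values of the norm form are stable under division by invertible values. -/
theorem exists_normForm_eq_of_mul {R : Type*} [CommRing R] {m β p q x y i : R}
    (h : p ^ 2 + p * q + m * q ^ 2 = β * (x ^ 2 + x * y + m * y ^ 2))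
    (hi : (x ^ 2 + x * y + m * y ^ 2) * i = 1) :
    ∃ A B : R, A ^ 2 + A * B + m * B ^ 2 = β := by
  refine ⟨(p * (x + y) + m * q * y) * i, (q * x - p * y) * i, ?_⟩
  linear_combination (x ^ 2 + x * y + m * y ^ 2) * i ^ 2 * h +
    β * ((x ^ 2 + x * y + m * y ^ 2) * i + 1) * hi

/-- Suppose `β` is the norm of `u + v α`, where `α² = τ α - ν`. Then there are `y` and `z ≠ 0` such
that `y` has trace `t` and `N(y) - β N(z) = n`, where `(t, n)` is `(τ, ν)` or `(0, 0)`. -/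
theorem exists_trace_norm_of_isField {H : Type*} [CommRing H] (hH : IsField H)
    {m β τ ν A₀ B₀ A₁ B₁ : H}
    (haniso : ∀ A B : H, A ^ 2 + A * B + m * B ^ 2 = 0 → A = 0 ∧ B = 0)
    (hD : 1 - 4 * m ≠ 0) (hβ : β ≠ 0)
    (h₀ : A₀ ^ 2 + A₀ * B₀ + m * B₀ ^ 2 - ν * (A₁ ^ 2 + A₁ * B₁ + m * B₁ ^ 2) = β)
    (h₁ : 2 * A₀ * A₁ + A₀ * B₁ + A₁ * B₀ + 2 * m * B₀ * B₁ +
      τ * (A₁ ^ 2 + A₁ * B₁ + m * B₁ ^ 2) = 0) :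
    ∃ t n a x y : H, ((t = τ ∧ n = ν) ∨ (t = 0 ∧ n = 0)) ∧ (x ≠ 0 ∨ y ≠ 0) ∧
      a ^ 2 + a * (t - 2 * a) + m * (t - 2 * a) ^ 2 - β * (x ^ 2 + x * y + m * y ^ 2) = n := by
  have := hH.isDomain
  by_cases hv : A₁ ^ 2 + A₁ * B₁ + m * B₁ ^ 2 = 0
  · obtain ⟨rfl, rfl⟩ := haniso _ _ hv
    refine ⟨0, 0, β, A₀ + B₀ - 2 * m * B₀, -2 * A₀ - B₀, .inr ⟨rfl, rfl⟩, ?_, ?_⟩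
    · by_contra! hz
      refine mul_ne_zero hβ hD ?_
      linear_combination -(A₀ + B₀ - 2 * m * B₀ + (-2 * A₀ - B₀)) * hz.1 -
        m * (-2 * A₀ - B₀) * hz.2 - (1 - 4 * m) * h₀
    · linear_combination β * (1 - 4 * m) * h₀
  · obtain ⟨i, hi⟩ := hH.mul_inv_cancel hv
    have hb : τ - 2 * (-(A₀ * A₁ + A₀ * B₁ + m * B₀ * B₁) * i) = (A₀ * B₁ - A₁ * B₀) * i := by
      linear_combination i * h₁ - τ * hi
    refine ⟨τ, ν, -(A₀ * A₁ + A₀ * B₁ + m * B₀ * B₁) * i, (A₁ + B₁) * i, -B₁ * i,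
      .inl ⟨rfl, rfl⟩, ?_, ?_⟩
    · by_contra! hz
      have hB : B₁ = 0 := by
        linear_combination -B₁ * hi - (A₁ ^ 2 + A₁ * B₁ + m * B₁ ^ 2) * hz.2
      have hA : A₁ = 0 := by
        linear_combination -(A₁ + B₁) * hi + (A₁ ^ 2 + A₁ * B₁ + m * B₁ ^ 2) * hz.1 - hB
      exact hv (by rw [hA, hB]; ring)
    · rw [hb]
      linear_combination i ^ 2 * (A₁ ^ 2 + A₁ * B₁ + m * B₁ ^ 2) * h₀ +
        ν * ((A₁ ^ 2 + A₁ * B₁ + m * B₁ ^ 2) * i + 1) * hi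

section Descent

variable {k K E E' : Type} [Field k] [Field K] [Field E] [Field E'] [Algebra k K] [Algebra k E]
  [Algebra E E'] [Algebra k E'] [IsScalarTower k E E']

theorem exists_eq_map_add_map_mul_right (c : Module.Basis (Fin 2) E E') (hc : c 0 = 1)
    (x : K ⊗[k] E') :
    ∃ P Q : K ⊗[k] E,
      x = Algebra.TensorProduct.map (AlgHom.id k K) (IsScalarTower.toAlgHom k E E') P +
        Algebra.TensorProduct.map (AlgHom.id k K) (IsScalarTower.toAlgHom k E E') Q *
          (1 ⊗ₜ[k] c 1) := by
  induction x with
  | zero => exact ⟨0, 0, by simp⟩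
  | tmul y f =>
    obtain ⟨p, q, h⟩ := c.exists_eq_add_of_zero_eq_one hc f
    exact ⟨y ⊗ₜ p, y ⊗ₜ q, by simp [h, TensorProduct.tmul_add]⟩
  | add x y hx hy =>
    obtain ⟨A, B, rfl⟩ := hx
    obtain ⟨A', B', rfl⟩ := hy
    exact ⟨A + A', B + B', by simp only [map_add]; ring⟩

theorem eq_zero_of_map_add_map_mul_right_eq_zero [FiniteDimensional k K]
    (c : Module.Basis (Fin 2) E E') (hc : c 0 = 1) {P Q : K ⊗[k] E}
    (h : Algebra.TensorProduct.map (AlgHom.id k K) (IsScalarTower.toAlgHom k E E') P +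
        Algebra.TensorProduct.map (AlgHom.id k K) (IsScalarTower.toAlgHom k E E') Q *
          (1 ⊗ₜ[k] c 1) = 0) : P = 0 ∧ Q = 0 := by
  obtain ⟨p, rfl⟩ := TensorProduct.exists_eq_sum_basis_tmul (Module.finBasis k K) P
  obtain ⟨q, rfl⟩ := TensorProduct.exists_eq_sum_basis_tmul (Module.finBasis k K) Q
  have key := TensorProduct.eq_zero_of_sum_basis_tmul_eq_zero (Module.finBasis k K)
    (c := fun i => algebraMap E E' (p i) + algebraMap E E' (q i) * c 1) (by
      rw [← h]
      simp [Finset.sum_add_distrib, Finset.sum_mul, TensorProduct.tmul_add])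
  have key' := fun i => c.eq_zero_of_add_eq_zero_of_zero_eq_one hc (key i)
  exact ⟨Finset.sum_eq_zero fun i _ => by rw [(key' i).1, TensorProduct.tmul_zero],
    Finset.sum_eq_zero fun i _ => by rw [(key' i).2, TensorProduct.tmul_zero]⟩

/-- If `β` becomes a norm over a quadratic extension of `E`, then over `E` there are `y` and
`z ≠ 0` such that the trace of `y` and `N(y) - β N(z)` are scalars. -/
theorem exists_trace_norm_of_quadratic [FiniteDimensional k K] (hE' : Module.finrank E E' = 2)
    (hH : IsField (K ⊗[k] E)) {m β : K}
    (haniso : ∀ A B : K ⊗[k] E, A ^ 2 + A * B + (m ⊗ₜ[k] 1) * B ^ 2 = 0 → A = 0 ∧ B = 0)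
    (hD : 1 - 4 * m ≠ 0) (hβ : β ≠ 0)
    (h : ∃ A B : K ⊗[k] E', A ^ 2 + A * B + (m ⊗ₜ[k] 1) * B ^ 2 = β ⊗ₜ[k] 1) :
    ∃ (t n : E) (a x y : K ⊗[k] E), (x ≠ 0 ∨ y ≠ 0) ∧
      a ^ 2 + a * ((1 ⊗ₜ[k] t) - 2 * a) + (m ⊗ₜ[k] 1) * ((1 ⊗ₜ[k] t) - 2 * a) ^ 2 -
        (β ⊗ₜ[k] 1) * (x ^ 2 + x * y + (m ⊗ₜ[k] 1) * y ^ 2) = 1 ⊗ₜ[k] n := by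
  have hinj : Function.Injective (Algebra.TensorProduct.includeLeft : K →ₐ[k] K ⊗[k] E) := by
    have := hH.nontrivial
    exact (Algebra.TensorProduct.includeLeft : K →ₐ[k] K ⊗[k] E).toRingHom.injective
  obtain ⟨c, hc⟩ := exists_basis_one hE'
  obtain ⟨A, B, hAB⟩ := h
  obtain ⟨A₀, A₁, rfl⟩ := exists_eq_map_add_map_mul_right c hc A
  obtain ⟨B₀, B₁, rfl⟩ := exists_eq_map_add_map_mul_right c hc B
  obtain ⟨ν, τ, hα⟩ := c.exists_eq_add_of_zero_eq_one hc (c 1 ^ 2)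
  let j := Algebra.TensorProduct.map (AlgHom.id k K) (IsScalarTower.toAlgHom k E E')
  have hjm : m ⊗ₜ[k] (1 : E') = j (m ⊗ₜ[k] 1) := by simp [j]
  have hjβ : β ⊗ₜ[k] (1 : E') = j (β ⊗ₜ[k] 1) := by simp [j]
  have hα' : ((1 : K) ⊗ₜ[k] c 1) ^ 2 = j (1 ⊗ₜ[k] ν) + j (1 ⊗ₜ[k] τ) * ((1 : K) ⊗ₜ[k] c 1) := by
    simp [j, Algebra.TensorProduct.tmul_pow, hα, TensorProduct.tmul_add]
  rw [hjm, hjβ] at hAB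
  obtain ⟨h₀, h₁⟩ := eq_zero_of_map_add_map_mul_right_eq_zero c hc
    (P := A₀ ^ 2 + A₀ * B₀ + (m ⊗ₜ[k] 1) * B₀ ^ 2 +
      (1 ⊗ₜ[k] ν) * (A₁ ^ 2 + A₁ * B₁ + (m ⊗ₜ[k] 1) * B₁ ^ 2) - β ⊗ₜ[k] 1)
    (Q := 2 * A₀ * A₁ + A₀ * B₁ + A₁ * B₀ + 2 * (m ⊗ₜ[k] 1) * B₀ * B₁ +
      (1 ⊗ₜ[k] τ) * (A₁ ^ 2 + A₁ * B₁ + (m ⊗ₜ[k] 1) * B₁ ^ 2)) (by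
      change j _ + j _ * _ = 0
      change (j A₀ + j A₁ * _) ^ 2 + (j A₀ + j A₁ * _) * (j B₀ + j B₁ * _) +
        j _ * (j B₀ + j B₁ * _) ^ 2 = _ at hAB
      simp only [map_add, map_sub, map_mul, map_pow, map_ofNat]
      linear_combination hAB - (j A₁ ^ 2 + j A₁ * j B₁ + j (m ⊗ₜ[k] 1) * j B₁ ^ 2) * hα')
  obtain ⟨t, n, a, x, y, htn, hxy, heq⟩ := exists_trace_norm_of_isField hH
    (β := β ⊗ₜ[k] 1) (ν := -(1 ⊗ₜ[k] ν)) haniso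
    (fun h0 => hD (hinj (by
      rw [map_zero, ← h0, map_sub, map_mul, map_one, map_ofNat]; rfl)))
    (fun h0 => hβ (hinj (by rw [map_zero]; exact h0)))
    (by linear_combination h₀) h₁
  rcases htn with ⟨rfl, rfl⟩ | ⟨rfl, rfl⟩
  · exact ⟨τ, -ν, a, x, y, hxy, by rw [heq, TensorProduct.tmul_neg]⟩
  · exact ⟨0, 0, a, x, y, hxy, by rw [TensorProduct.tmul_zero, heq]⟩

/-- The matrix of coefficients of the quadratic map
`t² m + (1 - 4 m) (a ω t - a² ω²) - β (x² + x y + m y²)` in the coordinates `t, a` and those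
of `x, y` with respect to `1, ω`. -/
def albertCoeff (m β ω : K) (i j : Fin 6) : K :=
  let t : Fin 6 → K := ![1, 0, 0, 0, 0, 0]
  let a : Fin 6 → K := ![0, 1, 0, 0, 0, 0]
  let x : Fin 6 → K := ![0, 0, 1, ω, 0, 0]
  let y : Fin 6 → K := ![0, 0, 0, 0, 1, ω]
  t i * t j * m + (1 - 4 * m) * (a i * t j * ω - a i * a j * ω ^ 2) -
    β * (x i * x j + x i * y j + m * (y i * y j))

theorem sum_albertCoeff {R : Type*} [CommRing R] (f : K →+* R) (m β ω : K) (w : Fin 6 → R) :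
    ∑ i, ∑ j, f (albertCoeff m β ω i j) * (w i * w j) =
      w 0 ^ 2 * f m + (1 - 4 * f m) * (w 1 * f ω * w 0 - w 1 ^ 2 * f ω ^ 2) -
        f β * ((w 2 + w 3 * f ω) ^ 2 + (w 2 + w 3 * f ω) * (w 4 + w 5 * f ω) +
          f m * (w 4 + w 5 * f ω) ^ 2) := by
  simp only [albertCoeff, map_add, map_sub, map_mul, map_pow, map_one, map_ofNat,
    Fin.sum_univ_six]
  simp
  ring

/-- Descent of `exists_trace_norm_of_quadratic` along an extension of odd degree. -/
theorem exists_trace_norm_of_odd_finrank [FiniteDimensional k E] [Algebra.IsSeparable k E]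
    (hE : Odd (Module.finrank k E)) (b : Module.Basis (Fin 2) k K) (hb : b 0 = 1) {m β : K}
    {t n : E} {a x y : K ⊗[k] E} (hxy : x ≠ 0 ∨ y ≠ 0)
    (h : a ^ 2 + a * ((1 ⊗ₜ[k] t) - 2 * a) + (m ⊗ₜ[k] 1) * ((1 ⊗ₜ[k] t) - 2 * a) ^ 2 -
        (β ⊗ₜ[k] 1) * (x ^ 2 + x * y + (m ⊗ₜ[k] 1) * y ^ 2) = 1 ⊗ₜ[k] n) :
    ∃ (t a n : k) (x y : K), (t ≠ 0 ∨ a ≠ 0 ∨ x ≠ 0 ∨ y ≠ 0) ∧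
      algebraMap k K t ^ 2 * m + (1 - 4 * m) * (algebraMap k K a * b 1 * algebraMap k K t -
        algebraMap k K a ^ 2 * b 1 ^ 2) - β * (x ^ 2 + x * y + m * y ^ 2) = algebraMap k K n := by
  let f : K →ₐ[k] K ⊗[k] E := Algebra.TensorProduct.includeLeft
  let g : E →ₐ[k] K ⊗[k] E := Algebra.TensorProduct.includeRight
  have hfg : ∀ (c : K) (e : E), c ⊗ₜ[k] e = f c * g e := fun c e => by simp [f, g]
  obtain ⟨p, hp⟩ := TensorProduct.exists_eq_sum_basis_tmul b a
  obtain ⟨q, hq⟩ := TensorProduct.exists_eq_sum_basis_tmul b x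
  obtain ⟨r, hr⟩ := TensorProduct.exists_eq_sum_basis_tmul b y
  simp only [Fin.sum_univ_two, hb, hfg, map_one, one_mul, mul_one] at hp hq hr h
  let s : K ⊗[k] E →ₗ[k] E := (TensorProduct.lid k E).toLinearMap ∘ₗ (b.coord 1).rTensor E
  have hs : ∀ (c : K) (e : E), s (c ⊗ₜ[k] e) = b.coord 1 c • e := fun c e => by simp [s]
  let v : Fin 6 → E := ![t - 2 * p 0, p 1, q 0, q 1, r 0, r 1]
  have hv : v ≠ 0 := fun h0 => by
    have h2 : q 0 = 0 := congrFun h0 2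
    have h3 : q 1 = 0 := congrFun h0 3
    have h4 : r 0 = 0 := congrFun h0 4
    have h5 : r 1 = 0 := congrFun h0 5
    rcases hxy with hx | hy
    · exact hx (by rw [hq, h2, h3]; simp)
    · exact hy (by rw [hr, h4, h5]; simp)
  have hsum : ∑ i, ∑ j, albertCoeff m β (b 1) i j ⊗ₜ[k] (v i * v j) =
      1 ⊗ₜ[k] (n - p 0 * t + p 0 ^ 2) := by
    simp only [hfg, map_mul g]
    refine (sum_albertCoeff f.toRingHom m β (b 1) (fun i => g (v i))).trans ?_
    change g (t - 2 * p 0) ^ 2 * f m + (1 - 4 * f m) * (g (p 1) * f (b 1) * g (t - 2 * p 0) -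
        g (p 1) ^ 2 * f (b 1) ^ 2) -
        f β * ((g (q 0) + g (q 1) * f (b 1)) ^ 2 +
          (g (q 0) + g (q 1) * f (b 1)) * (g (r 0) + g (r 1) * f (b 1)) +
          f m * (g (r 0) + g (r 1) * f (b 1)) ^ 2) = _
    rw [hp, hq, hr] at h
    simp only [map_add, map_sub, map_mul, map_pow, map_ofNat, map_one, one_mul]
    linear_combination h
  have hsE := congrArg s hsum
  simp only [map_sum, hs] at hsE
  rw [show b.coord 1 (1 : K) = 0 by rw [← hb]; simp, zero_smul] at hsE
  obtain ⟨w, hw, hw0⟩ := exists_isotropic_of_odd_finrank hE _ v hv hsE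
  have hcoord : b.coord 1 (∑ i, ∑ j, albertCoeff m β (b 1) i j *
      (algebraMap k K (w i) * algebraMap k K (w j))) = 0 := by
    rw [← hw0]
    simp only [map_sum]
    refine Finset.sum_congr rfl fun i _ => Finset.sum_congr rfl fun j _ => ?_
    rw [← map_mul, mul_comm, ← Algebra.smul_def, map_smul, smul_eq_mul, mul_comm]
  obtain ⟨n', n₁, hn'⟩ := b.exists_eq_add_of_zero_eq_one hb (∑ i, ∑ j,
    albertCoeff m β (b 1) i j * (algebraMap k K (w i) * algebraMap k K (w j)))
  have hn₁ : n₁ = 0 := by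
    rw [hn', ← mul_one (algebraMap k K n'), ← hb, ← Algebra.smul_def, ← Algebra.smul_def] at hcoord
    simpa using hcoord
  rw [hn₁, map_zero, zero_mul, add_zero] at hn'
  refine ⟨w 0, w 1, n', algebraMap k K (w 2) + algebraMap k K (w 3) * b 1,
    algebraMap k K (w 4) + algebraMap k K (w 5) * b 1, ?_, ?_⟩
  · by_contra! hall
    obtain ⟨h0, h1, h23, h45⟩ := hall
    obtain ⟨h2, h3⟩ := b.eq_zero_of_add_eq_zero_of_zero_eq_one hb h23
    obtain ⟨h4, h5⟩ := b.eq_zero_of_add_eq_zero_of_zero_eq_one hb h45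
    exact hw (by ext i; fin_cases i <;> assumption)
  · rw [← hn']
    exact (sum_albertCoeff (RingHom.id K) m β (b 1) (fun i => algebraMap k K (w i))).symm

end Descent

section Base

variable {k K L : Type} [Field k] [Field K] [Field L] [Algebra k K] [Algebra k L] [Algebra K L]
  [IsScalarTower k K L]

/-- If `K` is the only quadratic subextension of `L`, then elements of `L` which are roots of
quadratic polynomials over `k` lie in `K`. -/
theorem mem_range_of_quadratic [FiniteDimensional k L] (hL : Module.finrank k L = 4)
    (huniq : ∀ M : IntermediateField k L,
      M = ⊥ ∨ M = ⊤ ∨ M = (IsScalarTower.toAlgHom k K L).fieldRange)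
    {y : L} {t n : k} (hy : y ^ 2 - algebraMap k L t * y + algebraMap k L n = 0) :
    y ∈ Set.range (algebraMap K L) := by
  have hmem := IntermediateField.mem_adjoin_simple_self k y
  rcases huniq (IntermediateField.adjoin k {y}) with h | h | h
  · rw [h, IntermediateField.mem_bot] at hmem
    obtain ⟨c, hc⟩ := hmem
    exact ⟨algebraMap k K c, by rw [← hc, ← IsScalarTower.algebraMap_apply]⟩
  · exfalso
    have h_int : IsIntegral k y := .of_finite k y
    have hfin := IntermediateField.adjoin.finrank h_int
    rw [h, IntermediateField.finrank_top', hL] at hfin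
    let f : Polynomial k := .X ^ 2 - .C t * .X + .C n
    have hdeg : f.natDegree = 2 := by simp only [f]; compute_degree!
    have hdvd : minpoly k y ∣ f := minpoly.dvd k y (by simpa [f] using hy)
    have := Polynomial.natDegree_le_of_dvd hdvd (by rintro h0; simp [h0] at hdeg)
    omega
  · rw [h] at hmem
    exact hmem

/-- The restriction of the form to the coordinates `t` and `a` is anisotropic. -/
theorem eq_zero_of_trace_norm_eq [FiniteDimensional k L] (hL : Module.finrank k L = 4)
    (huniq : ∀ M : IntermediateField k L,
      M = ⊥ ∨ M = ⊤ ∨ M = (IsScalarTower.toAlgHom k K L).fieldRange)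
    (b : Module.Basis (Fin 2) k K) (hb : b 0 = 1) {r : k} (hr : b 1 ^ 2 = b 1 - algebraMap k K r)
    (c : Module.Basis (Fin 2) K L) (hc : c 0 = 1) {m : K} (hm : c 1 ^ 2 = c 1 - algebraMap K L m)
    {t a n : k}
    (h : algebraMap k K t ^ 2 * m + (1 - 4 * m) * (algebraMap k K a * b 1 * algebraMap k K t -
        algebraMap k K a ^ 2 * b 1 ^ 2) = algebraMap k K n) : t = 0 ∧ a = 0 := by
  let g := algebraMap K L
  have h' := congrArg g h
  simp only [map_add, map_sub, map_mul, map_pow, map_one, map_ofNat] at h'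
  have hgk : ∀ x : k, algebraMap k L x = g (algebraMap k K x) :=
    IsScalarTower.algebraMap_apply k K L
  have hy : (g (algebraMap k K a * b 1) +
      g (algebraMap k K t - 2 * (algebraMap k K a * b 1)) * c 1) ∈ Set.range g := by
    refine mem_range_of_quadratic hL huniq (t := t) (n := n) ?_
    rw [hgk, hgk, ← h']
    simp only [map_sub, map_mul, map_ofNat]
    linear_combination (g (algebraMap k K t) - 2 * (g (algebraMap k K a) * g (b 1))) ^ 2 * hm
  obtain ⟨d, hd⟩ := hy
  have h0 := (c.eq_zero_of_add_eq_zero_of_zero_eq_one hc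
    (p := algebraMap k K a * b 1 - d) (q := algebraMap k K t - 2 * (algebraMap k K a * b 1))
    (by change g _ + g _ * _ = 0; rw [map_sub, hd]; ring)).2
  obtain ⟨ht, ha⟩ := b.eq_zero_of_add_eq_zero_of_zero_eq_one hb (p := t) (q := -2 * a)
    (by rw [← h0, map_mul, map_neg, map_ofNat]; ring)
  have ha' : (2 : K) * algebraMap k K a = 0 := by
    have := congrArg (algebraMap k K) ha
    rw [map_mul, map_neg, map_ofNat, map_zero] at this
    linear_combination -this
  refine ⟨ht, ?_⟩
  have := (b.eq_zero_of_add_eq_zero_of_zero_eq_one hb (p := a ^ 2 * r - n) (q := -a ^ 2) (by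
    rw [ht, map_zero] at h
    simp only [map_sub, map_neg, map_mul, map_pow]
    linear_combination h + algebraMap k K a ^ 2 * hr -
      2 * m * b 1 ^ 2 * algebraMap k K a * ha')).2
  simpa using this

/-- In characteristic two, an isotropic vector with `t = 0` can be moved to one with `t = 1`. -/
theorem exists_trace_one_of_two_eq_zero (h2 : (2 : k) = 0) (b : Module.Basis (Fin 2) k K)
    (hb : b 0 = 1) {m β x y : K} (hβ : β ≠ 0) (hxy : x ≠ 0 ∨ y ≠ 0) {a n : k}
    (h : (1 - 4 * m) * -(algebraMap k K a ^ 2 * b 1 ^ 2) - β * (x ^ 2 + x * y + m * y ^ 2) =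
      algebraMap k K n) :
    ∃ (a n : k) (x y : K), m + (1 - 4 * m) * (algebraMap k K a * b 1 -
        algebraMap k K a ^ 2 * b 1 ^ 2) - β * (x ^ 2 + x * y + m * y ^ 2) = algebraMap k K n := by
  have h2' : (2 : K) = 0 := by simpa only [map_ofNat, map_zero] using congrArg (algebraMap k K) h2
  obtain ⟨x', y', hpolar⟩ : ∃ x' y' : K,
      β * (x * y' + y * x') = (1 - algebraMap k K a) * b 1 := by
    rcases hxy with hx | hy
    · exact ⟨0, (1 - algebraMap k K a) * b 1 / (β * x), by field_simp; ring⟩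
    · exact ⟨(1 - algebraMap k K a) * b 1 / (β * y), 0, by field_simp; ring⟩
  obtain ⟨g, q, hg⟩ := b.exists_eq_add_of_zero_eq_one hb
    (m - β * (x' ^ 2 + x' * y' + m * y' ^ 2))
  refine ⟨-q * a, g + q ^ 2 * n, x' - algebraMap k K q * x, y' - algebraMap k K q * y, ?_⟩
  simp only [map_add, map_mul, map_neg, map_pow]
  set Q := algebraMap k K q
  set A := algebraMap k K a
  linear_combination hg + Q ^ 2 * h + Q * hpolar +
    (2 * m * Q * A * b 1 + Q * b 1 * (1 - A) + β * Q * (x * x' + m * y * y')) * h2'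

open Polynomial in
/-- An isotropic vector whose trace polynomial is separable provides a quadratic extension over
which `β` becomes represented by the norm form. -/
theorem exists_quadratic_of_trace_norm_eq {m β : K}
    (haniso : ∀ A B : K, A ^ 2 + A * B + m * B ^ 2 = 0 → A = 0 ∧ B = 0)
    (hβ : ∀ A B : K, A ^ 2 + A * B + m * B ^ 2 ≠ β) {t n : k} {a x y : K} (hxy : x ≠ 0 ∨ y ≠ 0)
    (ht : (2 : k) ≠ 0 ∨ t ≠ 0)
    (h : algebraMap k K t ^ 2 * m + (1 - 4 * m) * (a * algebraMap k K t - a ^ 2) -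
      β * (x ^ 2 + x * y + m * y ^ 2) = algebraMap k K n) :
    ∃ (F : Type) (_ : Field F) (_ : Algebra k F),
      Algebra.IsSeparable k F ∧ Module.finrank k F = 2 ∧
      ∃ A B : K ⊗[k] F, A ^ 2 + A * B + (m ⊗ₜ[k] 1) * B ^ 2 = β ⊗ₜ[k] 1 := by
  have hz : x ^ 2 + x * y + m * y ^ 2 ≠ 0 := fun h0 => by
    obtain ⟨hx, hy⟩ := haniso x y h0
    rcases hxy with h | h <;> contradiction
  let f : k[X] := X ^ 2 - C t * X + C n
  have hdeg : f.natDegree = 2 := by simp only [f]; compute_degree!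
  have hmonic : f.Monic := by simp only [f]; monicity!
  have hirr : Irreducible f := by
    rw [irreducible_iff_roots_eq_zero_of_degree_le_three hdeg.ge (by lia),
      Multiset.eq_zero_iff_forall_notMem]
    intro r hr
    have hroot : r ^ 2 - t * r + n = 0 := by
      simpa [f] using (mem_roots hmonic.ne_zero).1 hr
    have hroot' := congrArg (algebraMap k K) hroot
    simp only [map_add, map_sub, map_mul, map_pow, map_zero] at hroot'
    obtain ⟨A, B, hAB⟩ := exists_normForm_eq_of_mul (m := m) (β := β)
      (p := a - algebraMap k K r) (q := algebraMap k K t - 2 * a)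
      (by linear_combination h + hroot') (mul_inv_cancel₀ hz)
    exact hβ A B hAB
  have : Fact (Irreducible f) := ⟨hirr⟩
  have hsep : f.Separable := by
    rw [separable_iff_derivative_ne_zero hirr]
    intro h0
    have hder : f.derivative = C 2 * X - C t := by
      simp [f, one_add_one_eq_two]
    rw [hder] at h0
    have h1 : (2 : k) = 0 := by simpa using congrArg (coeff · 1) h0
    have h2 : t = 0 := by simpa using congrArg (coeff · 0) h0
    rcases ht with h | h <;> contradiction
  refine ⟨AdjoinRoot f, inferInstance, inferInstance, ?_, ?_, ?_⟩
  · have hroot : IsSeparable k (AdjoinRoot.root f) := by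
      rw [IsSeparable, AdjoinRoot.minpoly_root hmonic.ne_zero, hmonic.leadingCoeff]
      simpa using hsep
    rw [← AlgEquiv.Algebra.isSeparable_iff IntermediateField.topEquiv,
      ← IntermediateField.adjoin_root_eq_top f]
    exact (IntermediateField.isSeparable_adjoin_simple_iff_isSeparable _ _).2 hroot
  · rw [(AdjoinRoot.powerBasis hmonic.ne_zero).finrank, AdjoinRoot.powerBasis_dim, hdeg]
  · let j : K →ₐ[k] K ⊗[k] AdjoinRoot f := Algebra.TensorProduct.includeLeft
    let i : AdjoinRoot f →ₐ[k] K ⊗[k] AdjoinRoot f := Algebra.TensorProduct.includeRight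
    let α := i (AdjoinRoot.root f)
    have hα : α ^ 2 - j (algebraMap k K t) * α + j (algebraMap k K n) = 0 := by
      have hroot : AdjoinRoot.root f ^ 2 - algebraMap k _ t * AdjoinRoot.root f +
          algebraMap k _ n = 0 := by
        have := AdjoinRoot.eval₂_root f
        simpa [f] using this
      have := congrArg i hroot
      simpa only [map_add, map_sub, map_mul, map_pow, map_zero, AlgHom.commutes] using this
    have h' := congrArg j h
    have hi := congrArg j (mul_inv_cancel₀ hz)
    simp only [map_add, map_sub, map_mul, map_pow, map_one, map_ofNat] at h' hi
    refine exists_normForm_eq_of_mul (m := j m) (β := j β) (p := j a - α)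
      (q := j (algebraMap k K t) - 2 * j a) ?_ hi
    linear_combination h' + hα

end Base

theorem stmt1 (k K L : Type) [Field k] [Field K] [Field L]
    [Algebra k K] [Algebra k L] [Algebra K L] [IsScalarTower k K L]
    [Algebra.IsSeparable k L]
    (hKk : Module.finrank k K = 2) (hLK : Module.finrank K L = 2)
    (huniq : ∀ M : IntermediateField k L,
      M = ⊥ ∨ M = ⊤ ∨ M = (IsScalarTower.toAlgHom k K L).fieldRange)
    (β : Kˣ) (hβ : ¬ ∃ x : Lˣ, Algebra.norm K (x : L) = (β : K))
    (E E' : Type) [Field E] [Field E']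
    [Algebra k E] [Algebra E E'] [Algebra k E'] [IsScalarTower k E E']
    [FiniteDimensional k E'] [Algebra.IsSeparable k E']
    (hE : Odd (Module.finrank k E)) (hE' : Module.finrank E E' = 2)
    (hnorm : IsNormFrom k K L E' (β : K)) :
    ∃ (F : Type) (_ : Field F) (_ : Algebra k F),
      Algebra.IsSeparable k F ∧ Module.finrank k F = 2 ∧
      IsNormFrom k K L F (β : K) := by
  have : FiniteDimensional k K := .of_finrank_pos (by omega)
  have : FiniteDimensional K L := .of_finrank_pos (by omega)
  have : FiniteDimensional k L := .trans k K L
  have hL : Module.finrank k L = 4 := by rw [← Module.finrank_mul_finrank k K L, hKk, hLK]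
  have : Algebra.IsSeparable k K := Algebra.isSeparable_tower_bot_of_isSeparable k K L
  have : Algebra.IsSeparable K L := Algebra.isSeparable_tower_top_of_isSeparable k K L
  have : Algebra.IsSeparable k E := Algebra.isSeparable_tower_bot_of_isSeparable k E E'
  have : FiniteDimensional k E := .left k E E'
  obtain ⟨b, r, hb, hr⟩ := exists_basis_sq_eq_sub hKk
  obtain ⟨c, m, hc, hm⟩ := exists_basis_sq_eq_sub hLK
  have hanisoK : ∀ A B : K, A ^ 2 + A * B + m * B ^ 2 = 0 → A = 0 ∧ B = 0 := fun A B =>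
    eq_zero_of_normForm_eq_zero (algebraMap K L) (c 1) hm
      fun A B => c.eq_zero_of_add_eq_zero_of_zero_eq_one hc
  have hβK : ∀ A B : K, A ^ 2 + A * B + m * B ^ 2 ≠ β := fun A B hAB => by
    rw [← Algebra.norm_add_mul_of_sq_eq_sub c hc hm] at hAB
    refine hβ ⟨Units.mk0 _ fun h0 => β.ne_zero ?_, hAB⟩
    rw [← hAB, h0, Algebra.norm_zero]
  have hD : 1 - 4 * m ≠ 0 := fun h0 => by
    have := hanisoK 1 (-2) (by linear_combination -h0)
    exact one_ne_zero this.1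
  -- `L ⊗ E` is a domain, so that the norm form stays anisotropic over `E`
  have hdom : IsDomain (L ⊗[k] E) := isDomain_tensorProduct_of_coprime_finrank <| by
    rw [hL]; exact Nat.Coprime.pow_left 2 hE.coprime_two_left
  let f := Algebra.TensorProduct.map (IsScalarTower.toAlgHom k K L) (AlgHom.id k E)
  have hli : ∀ A B : K ⊗[k] E, f A + f B * (c 1 ⊗ₜ[k] 1) = 0 → A = 0 ∧ B = 0 := fun A B =>
    eq_zero_of_map_add_map_mul_eq_zero E c hc
  have hanisoE : ∀ A B : K ⊗[k] E, A ^ 2 + A * B + (m ⊗ₜ[k] 1) * B ^ 2 = 0 → A = 0 ∧ B = 0 :=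
    fun A B => eq_zero_of_normForm_eq_zero f.toRingHom (c 1 ⊗ₜ[k] 1)
      (by
        have hfm : f.toRingHom (m ⊗ₜ[k] 1) = algebraMap K L m ⊗ₜ[k] 1 :=
          Algebra.TensorProduct.map_tmul _ _ _ _
        rw [hfm, Algebra.TensorProduct.tmul_pow, hm, one_pow, TensorProduct.sub_tmul]) hli
  have hinj : Function.Injective f :=
    (injective_iff_map_eq_zero f).2 fun A hA => (hli A 0 (by simp [hA])).1
  have : IsDomain (K ⊗[k] E) := hinj.isDomain f.toRingHom
  have hH : IsField (K ⊗[k] E) := by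
    have : IsArtinianRing (K ⊗[k] E) := .of_finite k _
    exact IsArtinianRing.isField_of_isDomain _
  obtain ⟨t₀, n₀, a₀, x₀, y₀, hxy₀, h₀⟩ := exists_trace_norm_of_quadratic hE' hH hanisoE hD β.ne_zero
    ((isNormFrom_iff_s1 E' c hc hm β.ne_zero).1 hnorm)
  obtain ⟨t, a, n, x, y, hne, h⟩ := exists_trace_norm_of_odd_finrank hE b hb hxy₀ h₀
  simp only [isNormFrom_iff_s1 _ c hc hm β.ne_zero]
  have hz : ∀ {t a n : k} {x y : K}, (t ≠ 0 ∨ a ≠ 0 ∨ x ≠ 0 ∨ y ≠ 0) →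
      algebraMap k K t ^ 2 * m + (1 - 4 * m) * (algebraMap k K a * b 1 * algebraMap k K t -
        algebraMap k K a ^ 2 * b 1 ^ 2) - β * (x ^ 2 + x * y + m * y ^ 2) = algebraMap k K n →
      x ≠ 0 ∨ y ≠ 0 := by
    intro t a n x y hne h
    by_contra! hxy
    obtain ⟨rfl, rfl⟩ := hxy
    obtain ⟨rfl, rfl⟩ := eq_zero_of_trace_norm_eq hL huniq b hb hr c hc hm (t := t) (a := a) (n := n)
      (by linear_combination h)
    simp at hne
  have hfinish : ∀ {t a n : k} {x y : K}, (t ≠ 0 ∨ a ≠ 0 ∨ x ≠ 0 ∨ y ≠ 0) →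
      ((2 : k) ≠ 0 ∨ t ≠ 0) →
      algebraMap k K t ^ 2 * m + (1 - 4 * m) * (algebraMap k K a * b 1 * algebraMap k K t -
        algebraMap k K a ^ 2 * b 1 ^ 2) - β * (x ^ 2 + x * y + m * y ^ 2) = algebraMap k K n →
      ∃ (F : Type) (_ : Field F) (_ : Algebra k F),
        Algebra.IsSeparable k F ∧ Module.finrank k F = 2 ∧
        ∃ A B : K ⊗[k] F, A ^ 2 + A * B + (m ⊗ₜ[k] 1) * B ^ 2 = (β : K) ⊗ₜ[k] 1 :=
    fun {t a n x y} hne ht h => exists_quadratic_of_trace_norm_eq hanisoK hβK (hz hne h) ht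
      (t := t) (n := n) (m := m) (x := x) (y := y) (a := algebraMap k K a * b 1) (by linear_combination h)
  by_cases ht : (2 : k) ≠ 0 ∨ t ≠ 0
  · exact hfinish hne ht h
  · push Not at ht
    obtain ⟨h2, rfl⟩ := ht
    obtain ⟨a', n', x', y', h'⟩ := exists_trace_one_of_two_eq_zero h2 b hb β.ne_zero (hz hne h)
      (a := a) (n := n) (m := m) (β := β) (x := x) (y := y) (by rw [map_zero] at h; linear_combination h)
    exact hfinish (t := 1) (a := a') (n := n') (x := x') (y := y') (.inl one_ne_zero) (.inr one_ne_zero)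
      (by rw [map_one]; linear_combination h')
end

section
/- Let k be a field with separable closure k^s and let L₁, L₂ be intermediate fields of k^s/k with [L₁:k] = [L₂:k] = 2. Then for all β₁, β₂ ∈ kˣ there exists a finite separable field extension F/k such that (i) for i = 1, 2, βᵢ ⊗ 1 is a norm from (Lᵢ ⊗_k F)ˣ to Fˣ, and (ii) for every finite separable field extension F'/k for which both β₁ ⊗ 1 is a norm from (L₁ ⊗_k F')ˣ and β₂ ⊗ 1 is a norm from (L₂ ⊗_k F')ˣ, the degree [F:k] divides [F':k]. -/
open TensorProduct

/-- `β ∈ k` is a norm from `(L ⊗[k] F)ˣ` to `Fˣ`, where `L ⊗[k] F` is regarded as an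
`F`-algebra via the right tensor factor. -/
def IsBaseNorm (k L F : Type) [Field k] [Field L] [Field F]
    [Algebra k L] [Algebra k F] (β : k) : Prop :=
  letI : Algebra F (L ⊗[k] F) :=
    (Algebra.TensorProduct.includeRight (R := k) (A := L) (B := F)).toRingHom.toAlgebra
  ∃ x : (L ⊗[k] F)ˣ, Algebra.norm F (x : L ⊗[k] F) = algebraMap k F β

open scoped Quaternion

/-- A finite-dimensional space over a division ring carrying a `σ`-semilinear map with square `β`
is even-dimensional when `β` is not of the form `σ d * d`. -/
theorem even_finrank_of_semilinear_sq {D : Type*} [DivisionRing D] {σ : D →+* D} {β : D}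
    (hβ : ∀ d, σ d * d ≠ β) {V : Type*} [AddCommGroup V] [Module D V] [Module.Finite D V]
    (φ : V →ₛₗ[σ] V) (hφ : ∀ v, φ (φ v) = β • v) : Even (Module.finrank D V) := by
  induction hn : Module.finrank D V using Nat.strong_induction_on generalizing V with
  | _ n ih =>
  subst hn
  rcases subsingleton_or_nontrivial V with h | h
  · simp [Module.finrank_zero_of_subsingleton]
  obtain ⟨v, hv⟩ := exists_ne (0 : V)
  have hli : LinearIndependent D ![v, φ v] := by
    rw [LinearIndependent.pair_iff' hv]
    intro d hd
    apply hβ d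
    have h1 := hφ v
    rw [← hd, map_smulₛₗ, ← hd, smul_smul] at h1
    exact smul_left_injective D hv h1
  set W : Submodule D V := Submodule.span D (Set.range ![v, φ v]) with hW
  have hWrank : Module.finrank D W = 2 := by
    simpa using finrank_span_eq_card hli
  have hWφ : W ≤ W.comap φ := by
    rw [hW, Submodule.span_le]
    rintro _ ⟨i, rfl⟩
    fin_cases i
    · exact Submodule.subset_span ⟨1, rfl⟩
    · change φ (φ v) ∈ Submodule.span D (Set.range ![v, φ v])
      rw [hφ]
      exact Submodule.smul_mem _ _ (Submodule.subset_span ⟨0, rfl⟩)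
  have hq := W.finrank_quotient_add_finrank
  have := ih (Module.finrank D (V ⧸ W)) (by omega) (W.mapQ W φ hWφ) (by
    intro x
    obtain ⟨x, rfl⟩ := Submodule.Quotient.mk_surjective W x
    simp only [Submodule.mapQ_apply, hφ, Submodule.Quotient.mk_smul]) rfl
  rw [← hq, hWrank]
  exact this.add even_two

/-- The norm form `x² + qxy - py²` of the quadratic algebra `k[ω]`, `ω² = p + qω`, represents `β`
over `F`. -/
def RepresentsNorm {k : Type*} (F : Type*) [Field k] [Field F] [Algebra k F] (p q β : k) : Prop :=
  ∃ x y : F, x ^ 2 + algebraMap k F q * x * y - algebraMap k F p * y ^ 2 = algebraMap k F β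

theorem isBaseNorm_iff_representsNorm {k L F : Type} [Field k] [Field L] [Field F] [Algebra k L]
    [Algebra k F] (b : Module.Basis (Fin 2) k L) (hb : b 0 = 1) {p q β : k}
    (hω : b 1 ^ 2 = algebraMap k L p + algebraMap k L q * b 1) (hβ : β ≠ 0) :
    IsBaseNorm k L F β ↔ RepresentsNorm F p q β := by
  let alg : Algebra F (L ⊗[k] F) :=
    (Algebra.TensorProduct.includeRight (R := k) (A := L) (B := F)).toRingHom.toAlgebra
  let e : F ⊗[k] L ≃ₐ[F] L ⊗[k] F :=
    AlgEquiv.ofRingEquiv (f := (Algebra.TensorProduct.comm k F L).toRingEquiv) fun x => by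
      simp [alg, RingHom.algebraMap_toAlgebra]
  let B : Module.Basis (Fin 2) F (F ⊗[k] L) := b.baseChange F
  have hB0 : B 0 = 1 := by simp [B, hb, Algebra.TensorProduct.one_def]
  have hB1 : B 1 * B 1 = algebraMap k F p • B 0 + algebraMap k F q • B 1 := by
    simp only [B, Module.Basis.baseChange_apply, Algebra.TensorProduct.tmul_mul_tmul, ← pow_two (b 1),
      hω, TensorProduct.tmul_add, hb, smul_mul_assoc, one_mul, Algebra.algebraMap_eq_smul_one,
      TensorProduct.tmul_smul, mul_one, smul_assoc, one_smul]
  have hnorm (x y : F) : Algebra.norm F (x • B 0 + y • B 1) =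
      x ^ 2 + algebraMap k F q * x * y - algebraMap k F p * y ^ 2 := by
    have h0 : (x • B 0 + y • B 1) * B 0 = x • B 0 + y • B 1 := by rw [hB0, mul_one]
    have h1 : (x • B 0 + y • B 1) * B 1 =
        (y * algebraMap k F p) • B 0 + (x + y * algebraMap k F q) • B 1 := by
      rw [add_mul, smul_mul_assoc, smul_mul_assoc, hB1, hB0, one_mul]
      module
    rw [Algebra.norm_eq_matrix_det B, Matrix.det_fin_two]
    simp only [Algebra.leftMulMatrix_eq_repr_mul, h0, h1]
    simp
    ring
  constructor
  · rintro ⟨x, hx⟩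
    refine ⟨B.repr (e.symm x) 0, B.repr (e.symm x) 1, ?_⟩
    rw [← hx, ← hnorm, ← Algebra.norm_eq_of_algEquiv e]
    congr 1
    rw [← Fin.sum_univ_two (f := fun i => B.repr (e.symm x) i • B i), B.sum_repr]
    simp
  · rintro ⟨x, y, hxy⟩
    have hN : Algebra.norm F (e (x • B 0 + y • B 1)) = algebraMap k F β := by
      rw [Algebra.norm_eq_of_algEquiv, hnorm, hxy]
    have hmul : (x • B 0 + y • B 1) * ((x + algebraMap k F q * y) • B 0 - y • B 1) =
        algebraMap k F β • 1 := by
      rw [← hxy, add_mul, mul_sub, mul_sub]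
      simp only [smul_mul_smul_comm, hB1]
      simp only [hB0, one_mul, mul_one]
      module
    have hu : IsUnit (x • B 0 + y • B 1) := by
      refine IsUnit.of_mul_eq_one ((algebraMap k F β)⁻¹ •
        ((x + algebraMap k F q * y) • B 0 - y • B 1)) ?_
      rw [mul_smul_comm, hmul, smul_smul, inv_mul_cancel₀ (by simpa using hβ), one_smul]
    exact ⟨(hu.map e).unit, hN⟩

namespace RepresentsNorm

variable {k F : Type*} [Field k] [Field F] [Algebra k F] {p q β : k}

theorem map {F' : Type*} [Field F'] [Algebra k F'] (f : F →ₐ[k] F') (h : RepresentsNorm F p q β) :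
    RepresentsNorm F' p q β := by
  obtain ⟨x, y, h⟩ := h
  exact ⟨f x, f y, by simpa using congrArg f h⟩

theorem of_root (hd : q ^ 2 + 4 * p ≠ 0) {θ : F}
    (hθ : θ ^ 2 = algebraMap k F p + algebraMap k F q * θ) : RepresentsNorm F p q β := by
  have hne : 2 * θ - algebraMap k F q ≠ 0 := by
    intro h
    apply hd
    apply FaithfulSMul.algebraMap_injective k F
    simp only [map_add, map_pow, map_mul, map_ofNat, map_zero]
    linear_combination (2 * θ - algebraMap k F q) * h - 4 * hθ
  set Q := algebraMap k F q
  set P := algebraMap k F p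
  set b := algebraMap k F β
  refine ⟨b - (b - 1) / (2 * θ - Q) * θ, (b - 1) / (2 * θ - Q), ?_⟩
  have hy : (b - 1) / (2 * θ - Q) * (2 * θ - Q) = b - 1 := div_mul_cancel₀ _ hne
  set y := (b - 1) / (2 * θ - Q)
  linear_combination (-b) * hy + y ^ 2 * hθ

/-- The Pfister form of the quaternion algebra `(p, q, β)` is isotropic only if `β` is a norm. -/
theorem of_isotropic (hd : q ^ 2 + 4 * p ≠ 0) {x y z w : F}
    (hne : x ≠ 0 ∨ y ≠ 0 ∨ z ≠ 0 ∨ w ≠ 0)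
    (h : x ^ 2 + algebraMap k F q * x * y - algebraMap k F p * y ^ 2 =
      algebraMap k F β * (z ^ 2 + algebraMap k F q * z * w - algebraMap k F p * w ^ 2)) :
    RepresentsNorm F p q β := by
  have key {x y : F} (hxy : x ≠ 0 ∨ y ≠ 0)
      (h : x ^ 2 + algebraMap k F q * x * y - algebraMap k F p * y ^ 2 = 0) :
      RepresentsNorm F p q β := by
    have hy : y ≠ 0 := by
      rintro rfl
      simp_all
    refine of_root hd (θ := -(x / y)) ?_
    field_simp
    linear_combination h
  by_cases hzw : z ^ 2 + algebraMap k F q * z * w - algebraMap k F p * w ^ 2 = 0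
  · rw [hzw, mul_zero] at h
    rcases hne with hx | hy | hz | hw
    · exact key (.inl hx) h
    · exact key (.inr hy) h
    · exact key (.inl hz) hzw
    · exact key (.inr hw) hzw
  · set n := z ^ 2 + algebraMap k F q * z * w - algebraMap k F p * w ^ 2 with hn
    refine ⟨(x * (z + algebraMap k F q * w) + algebraMap k F p * y * w * (-1)) / n,
      (y * z - x * w) / n, ?_⟩
    field_simp
    rw [hn] at h ⊢
    linear_combination (z ^ 2 + algebraMap k F q * z * w - algebraMap k F p * w ^ 2) * h

/-- If `F` contains a root of the characteristic polynomial of a non-central element of the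
quaternion algebra `(p, q, β)`, then `β` is a norm over `F`. -/
theorem of_root_of_quaternion (hd : q ^ 2 + 4 * p ≠ 0) {x y z w : k}
    (hne : y ≠ 0 ∨ z ≠ 0 ∨ w ≠ 0) {t n : k} (ht : t = 2 * x + q * y)
    (hn : n = β * (z ^ 2 + q * z * w - p * w ^ 2) - (x ^ 2 + q * x * y - p * y ^ 2)) {θ : F}
    (hθ : θ ^ 2 = algebraMap k F n + algebraMap k F t * θ) : RepresentsNorm F p q β := by
  refine of_isotropic hd (x := algebraMap k F x - θ) (y := algebraMap k F y)
    (z := algebraMap k F z) (w := algebraMap k F w) (by simp [hne]) ?_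
  subst ht hn
  simp only [map_add, map_sub, map_mul, map_pow, map_ofNat] at hθ
  linear_combination hθ

end RepresentsNorm

/-- A quadratic polynomial of nonzero discriminant has a root in a separable extension of degree
at most two. -/
theorem exists_separable_root {k : Type} [Field k] {p q : k} (hd : q ^ 2 + 4 * p ≠ 0) :
    ∃ (F : Type) (_ : Field F) (_ : Algebra k F), FiniteDimensional k F ∧ Algebra.IsSeparable k F ∧
      Module.finrank k F ∣ 2 ∧ ∃ θ : F, θ ^ 2 = algebraMap k F p + algebraMap k F q * θ := by
  by_cases hr : ∃ r : k, r ^ 2 = p + q * r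
  · exact ⟨k, inferInstance, inferInstance, inferInstance, inferInstance, by simp, hr⟩
  push Not at hr
  have : Fact (∀ r : k, r ^ 2 ≠ p + q * r) := ⟨hr⟩
  refine ⟨QuadraticAlgebra k p q, inferInstance, inferInstance, inferInstance, ⟨fun z => ?_⟩,
    by simp [QuadraticAlgebra.finrank_eq_two], QuadraticAlgebra.omega, ?_⟩
  · by_cases hz : z.im = 0
    · have : z = algebraMap k _ z.re := by ext <;> simp [hz]
      rw [this]
      exact isSeparable_algebraMap _
    · let f : Polynomial k := .X ^ 2 - .C z.trace * .X + .C z.norm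
      have hf : f.Separable := by
        have hD : z.trace ^ 2 - 4 * z.norm ≠ 0 := by
          have : z.trace ^ 2 - 4 * z.norm = z.im ^ 2 * (q ^ 2 + 4 * p) := by
            simp only [QuadraticAlgebra.trace_def, QuadraticAlgebra.norm_def]
            ring
          rw [this]
          positivity
        refine ⟨-.C (4 * (z.trace ^ 2 - 4 * z.norm)⁻¹),
          .C (z.trace ^ 2 - 4 * z.norm)⁻¹ * (2 * .X - .C z.trace), ?_⟩
        have hC : Polynomial.C (z.trace ^ 2 - 4 * z.norm)⁻¹ *
            (.C z.trace ^ 2 - 4 * .C z.norm) = 1 := by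
          rw [← Polynomial.C_pow, ← Polynomial.C_ofNat, ← Polynomial.C_mul, ← Polynomial.C_sub,
            ← Polynomial.C_mul, inv_mul_cancel₀ hD, Polynomial.C_1]
        simp only [f, Polynomial.derivative_add, Polynomial.derivative_sub,
          Polynomial.derivative_X_pow, Polynomial.derivative_C_mul, Polynomial.derivative_X,
          Polynomial.derivative_C, Polynomial.C_mul, Polynomial.C_ofNat]
        simp only [Nat.cast_ofNat, Nat.add_one_sub_one, pow_one, mul_one, add_zero]
        have h2 : Polynomial.C (2 : k) = 2 := map_ofNat _ 2
        linear_combination hC + Polynomial.C (z.trace ^ 2 - 4 * z.norm)⁻¹ *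
          (2 * .X ^ 2 - .X * .C z.trace) * h2
      refine hf.of_dvd (minpoly.dvd _ _ ?_)
      have := QuadraticAlgebra.sq_sub_trace_smul_add_norm_eq_zero z
      simpa [f, Algebra.smul_def] using this
  · rw [pow_two, QuadraticAlgebra.omega_mul_omega_eq_algebraMap]

theorem exists_smul_eq_of_cross_eq_zero {k : Type*} [Field k] {a₁ a₂ a₃ b₁ b₂ b₃ : k}
    (h₁₂ : a₁ * b₂ = a₂ * b₁) (h₁₃ : a₁ * b₃ = a₃ * b₁) (h₂₃ : a₂ * b₃ = a₃ * b₂) :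
    ∃ c₁ c₂ c₃ r s : k, (c₁ ≠ 0 ∨ c₂ ≠ 0 ∨ c₃ ≠ 0) ∧ a₁ = r * c₁ ∧ a₂ = r * c₂ ∧ a₃ = r * c₃ ∧
      b₁ = s * c₁ ∧ b₂ = s * c₂ ∧ b₃ = s * c₃ := by
  by_cases ha₁ : a₁ = 0
  · by_cases ha₂ : a₂ = 0
    · by_cases ha₃ : a₃ = 0
      · by_cases hb : b₁ ≠ 0 ∨ b₂ ≠ 0 ∨ b₃ ≠ 0
        · exact ⟨b₁, b₂, b₃, 0, 1, hb, by simp [*]⟩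
        · push Not at hb
          exact ⟨1, 0, 0, 0, 0, by simp, by simp [*]⟩
      · refine ⟨a₁, a₂, a₃, 1, b₃ / a₃, by simp [*], by simp, by simp, by simp, ?_, ?_, ?_⟩ <;>
          field_simp <;> grind
    · refine ⟨a₁, a₂, a₃, 1, b₂ / a₂, by simp [*], by simp, by simp, by simp, ?_, ?_, ?_⟩ <;>
        field_simp <;> grind
  · refine ⟨a₁, a₂, a₃, 1, b₁ / a₁, by simp [*], by simp, by simp, by simp, ?_, ?_, ?_⟩ <;>
      field_simp <;> grind

/-- Commuting elements of a quaternion algebra have proportional pure parts. -/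
theorem QuaternionAlgebra.exists_eq_smul_of_commute {k : Type*} [Field k] {p q β : k}
    (hd : q ^ 2 + 4 * p ≠ 0) (hβ : β ≠ 0) {a b : ℍ[k,p,q,β]} (hab : a * b = b * a) :
    ∃ (y z w r s : k), (y ≠ 0 ∨ z ≠ 0 ∨ w ≠ 0) ∧
      a = ⟨a.re, r * y, r * z, r * w⟩ ∧ b = ⟨b.re, s * y, s * z, s * w⟩ := by
  have h0 := congrArg QuaternionAlgebra.re hab
  have hI := congrArg QuaternionAlgebra.imI hab
  have hJ := congrArg QuaternionAlgebra.imJ hab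
  have hK := congrArg QuaternionAlgebra.imK hab
  simp only [re_mul, imI_mul, imJ_mul, imK_mul] at h0 hI hJ hK
  obtain ⟨y, z, w, r, s, hne, h₁, h₂, h₃, h₄, h₅, h₆⟩ :=
    exists_smul_eq_of_cross_eq_zero (a₁ := a.imI) (a₂ := a.imJ) (a₃ := a.imK) (b₁ := b.imI)
      (b₂ := b.imJ) (b₃ := b.imK)
      (mul_left_cancel₀ hd (by linear_combination (-q) * hJ + 2 * p * hK))
      (mul_left_cancel₀ hd (by linear_combination 2 * hJ + q * hK))
      (mul_left_cancel₀ (mul_ne_zero hβ hd) (by linear_combination q * h0 - 2 * p * hI))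
  exact ⟨y, z, w, r, s, hne, QuaternionAlgebra.ext rfl h₁ h₂ h₃,
    QuaternionAlgebra.ext rfl h₄ h₅ h₆⟩

/-- Every extension of `k` with a root of `X² - tX - n` makes `β` a value of the norm form of
`k[ω]`, `ω² = p + qω`. -/
def SplitByQuadratic {k : Type} [Field k] (p q β t n : k) : Prop :=
  ∀ (F : Type) [Field F] [Algebra k F] (θ : F),
    θ ^ 2 = algebraMap k F n + algebraMap k F t * θ → RepresentsNorm F p q β

section Linkage

variable {k : Type} [Field k] {p₁ q₁ β₁ p₂ q₂ β₂ : k}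

/-- In characteristic `2`, two quaternion algebras sharing an inseparable quadratic subfield
share a separable quadratic splitting field. -/
theorem exists_separable_of_inseparable [CharP k 2] (hd₁ : q₁ ^ 2 + 4 * p₁ ≠ 0)
    (hd₂ : q₂ ^ 2 + 4 * p₂ ≠ 0) (hβ₁ : β₁ ≠ 0) {r y z s u v : k}
    (hyz : y ≠ 0 ∨ z ≠ 0)
    (h₁ : r ^ 2 + β₁ * (y ^ 2 + q₁ * y * z - p₁ * z ^ 2) = s)
    (h₂ : β₂ * (u ^ 2 + q₂ * u * v - p₂ * v ^ 2) = s) :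
    ∃ t n : k, t ^ 2 + 4 * n ≠ 0 ∧ SplitByQuadratic p₁ q₁ β₁ t n ∧
      SplitByQuadratic p₂ q₂ β₂ t n := by
  have two : (2 : k) = 0 := CharTwo.two_eq_zero
  have four : (4 : k) = 0 := by linear_combination 2 * two
  have hq₁ : q₁ ≠ 0 := by
    rintro rfl
    simp [four] at hd₁
  have hq₂ : q₂ ≠ 0 := by
    rintro rfl
    simp [four] at hd₂
  obtain ⟨e, f, hef⟩ : ∃ e f : k, β₁ * q₁ * (e * z + f * y) = 1 + r := by
    rcases hyz with h | h
    · exact ⟨0, (1 + r) / (β₁ * q₁ * y), by field_simp; ring⟩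
    · exact ⟨(1 + r) / (β₁ * q₁ * z), 0, by field_simp; ring⟩
  obtain ⟨m, hm⟩ : ∃ m, m = p₁ / q₁ ^ 2 + β₁ * (e ^ 2 + q₁ * e * f - p₁ * f ^ 2) + p₂ / q₂ ^ 2 :=
    ⟨_, rfl⟩
  refine ⟨1, p₂ / q₂ ^ 2 + m ^ 2 * s, by simp [four], fun F _ _ θ hθ => ?_, fun F _ _ θ hθ => ?_⟩
  · refine RepresentsNorm.of_root_of_quaternion hd₁ (x := m * r) (y := q₁⁻¹) (z := e + m * y)
      (w := f + m * z) (.inl (inv_ne_zero hq₁)) ?_ ?_ hθ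
    · rw [mul_inv_cancel₀ hq₁, two]; ring
    · have : q₁ * q₁⁻¹ = 1 := mul_inv_cancel₀ hq₁
      have hp : p₁ / q₁ ^ 2 = p₁ * q₁⁻¹ ^ 2 := by field_simp
      rw [hp] at hm
      linear_combination (-m ^ 2) * h₁ + hm - m * hef + m * r * this +
        (p₂ / q₂ ^ 2 - m + m ^ 2 * r ^ 2 - m * β₁ * (e * y - p₁ * f * z)) * two
  · refine RepresentsNorm.of_root_of_quaternion hd₂ (x := 0) (y := q₂⁻¹) (z := m * u)
      (w := m * v) (.inl (inv_ne_zero hq₂)) ?_ ?_ hθ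
    · rw [mul_inv_cancel₀ hq₂]; ring
    · field_simp
      linear_combination (-m ^ 2) * q₂ ^ 2 * h₂

/-- If `β₁` is a value of the norm form of `k[ω₁]` on a commuting pair of elements of the quaternion
algebra `(p₂, q₂, β₂)`, then a single separable quadratic extension splits both
`(p₁, q₁, β₁)` and `(p₂, q₂, β₂)`. -/
theorem exists_separable_of_commute (hd₁ : q₁ ^ 2 + 4 * p₁ ≠ 0)
    (hd₂ : q₂ ^ 2 + 4 * p₂ ≠ 0) (hβ₁ : β₁ ≠ 0) (hβ₂ : β₂ ≠ 0) {a b : ℍ[k,p₂,q₂,β₂]}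
    (hab : a * b = b * a)
    (h : a * a + q₁ • (a * b) - p₁ • (b * b) = algebraMap k _ β₁) :
    ∃ t n : k, t ^ 2 + 4 * n ≠ 0 ∧ SplitByQuadratic p₁ q₁ β₁ t n ∧
      SplitByQuadratic p₂ q₂ β₂ t n := by
  obtain ⟨y, z, w, r, s, hne, ha, hb⟩ :=
    QuaternionAlgebra.exists_eq_smul_of_commute hd₂ hβ₂ hab
  generalize a.re = a₀ at ha
  generalize b.re = b₀ at hb
  subst ha hb
  simp only [QuaternionAlgebra.mk_mul_mk, QuaternionAlgebra.smul_mk,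
    QuaternionAlgebra.mk_add_mk, QuaternionAlgebra.mk_sub_mk, QuaternionAlgebra.algebraMap_eq,
    QuaternionAlgebra.mk.injEq, smul_eq_mul] at h
  obtain ⟨h0, hI, hJ, hK⟩ := h
  set t := q₂ * y with ht
  set n := β₂ * (z ^ 2 + q₂ * z * w - p₂ * w ^ 2) + p₂ * y ^ 2 with hn
  have hlin : 2 * a₀ * r + t * r ^ 2 + q₁ * (a₀ * s + r * b₀ + t * r * s) -
      p₁ * (2 * b₀ * s + t * s ^ 2) = 0 := by
    rcases hne with h | h | h <;> refine mul_left_cancel₀ h ?_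
    · linear_combination hI
    · linear_combination hJ
    · linear_combination hK
  have hconst : a₀ ^ 2 + q₁ * a₀ * b₀ - p₁ * b₀ ^ 2 +
      n * (r ^ 2 + q₁ * r * s - p₁ * s ^ 2) = β₁ := by
    linear_combination h0
  have hsplit₂ : SplitByQuadratic p₂ q₂ β₂ t n := fun F _ _ θ hθ =>
    RepresentsNorm.of_root_of_quaternion hd₂ (x := 0) hne (by rw [ht]; ring) (by rw [hn]; ring) hθ
  by_cases hdisc : t ^ 2 + 4 * n = 0
  swap
  · refine ⟨t, n, hdisc, fun F _ _ θ hθ => ?_, hsplit₂⟩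
    refine ⟨algebraMap k F a₀ + algebraMap k F r * θ, algebraMap k F b₀ + algebraMap k F s * θ, ?_⟩
    have h1 := congrArg (algebraMap k F) hlin
    have h2 := congrArg (algebraMap k F) hconst
    simp only [map_add, map_sub, map_mul, map_pow, map_ofNat, map_zero] at h1 h2
    generalize algebraMap k F = f at *
    linear_combination h2 + θ * h1 + (f r ^ 2 + f q₁ * f r * f s - f p₁ * f s ^ 2) * hθ
  by_cases two : (2 : k) = 0
  swap
  · refine ⟨q₁, p₁, hd₁, fun F _ _ θ hθ => .of_root hd₁ hθ, fun F _ _ θ hθ => ?_⟩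
    refine hsplit₂ F (algebraMap k F (t / 2)) ?_
    rw [← map_pow, ← map_mul, ← map_add]
    congr 1
    field_simp
    linear_combination -hdisc
  have : CharP k 2 := CharTwo.of_one_ne_zero_of_two_eq_zero one_ne_zero two
  have four : (4 : k) = 0 := by linear_combination 2 * two
  have ht0 : t = 0 := by
    rw [four, zero_mul, add_zero] at hdisc
    exact pow_eq_zero_iff two_ne_zero |>.mp hdisc
  have hq₁ : q₁ ≠ 0 := by
    rintro rfl
    simp [four] at hd₁
  have hq₂ : q₂ ≠ 0 := by
    rintro rfl
    simp [four] at hd₂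
  have hy : y = 0 := by simpa [ht, hq₂] using ht0
  have hcross : a₀ * s = r * b₀ := by
    refine mul_left_cancel₀ hq₁ ?_
    rw [ht0] at hlin
    linear_combination hlin + (p₁ * b₀ * s - a₀ * r - q₁ * r * b₀) * two
  by_cases hrs : r = 0 ∧ s = 0
  · refine ⟨q₂, p₂, hd₂, fun F _ _ θ hθ => ?_, fun F _ _ θ hθ => .of_root hd₂ hθ⟩
    refine ⟨algebraMap k F a₀, algebraMap k F b₀, ?_⟩
    rw [← hconst, hrs.1, hrs.2]
    simp
  obtain ⟨c, hca, hcb⟩ : ∃ c, a₀ = c * r ∧ b₀ = c * s := by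
    by_cases hr : r = 0
    · have hs : s ≠ 0 := fun hs => hrs ⟨hr, hs⟩
      exact ⟨b₀ / s, by field_simp; linear_combination hcross, by field_simp⟩
    · exact ⟨a₀ / r, by field_simp, by field_simp; linear_combination -hcross⟩
  set N := r ^ 2 + q₁ * r * s - p₁ * s ^ 2 with hN
  have hcN : (c ^ 2 + n) * N = β₁ := by
    rw [← hconst, hca, hcb, hN]; ring
  have hN0 : N ≠ 0 := by
    intro h
    rw [h, mul_zero] at hcN
    exact hβ₁ hcN.symm
  refine exists_separable_of_inseparable hd₁ hd₂ hβ₁ (r := c) (y := r / N) (z := s / N) (s := n)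
    (u := z) (v := w) ?_ ?_ ?_
  · by_contra! h
    simp [hN0] at h
    exact hrs h
  · have : (r / N) ^ 2 + q₁ * (r / N) * (s / N) - p₁ * (s / N) ^ 2 = N⁻¹ := by
      field_simp
      rw [hN]
      ring
    rw [this, ← hcN, mul_assoc, mul_inv_cancel₀ hN0]
    linear_combination c ^ 2 * two
  · rw [hn, hy]; ring

end Linkage

namespace QuaternionAlgebra

/-- The map of quaternion algebras induced by a ring homomorphism. -/
@[simps]
def mapRingHom {R S : Type*} [CommRing R] [CommRing S] (f : R →+* S) {a b c : R} {a' b' c' : S}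
    (ha : f a = a') (hb : f b = b') (hc : f c = c') : ℍ[R,a,b,c] →+* ℍ[S,a',b',c'] where
  toFun x := ⟨f x.re, f x.imI, f x.imJ, f x.imK⟩
  map_one' := by ext <;> simp
  map_zero' := by ext <;> simp
  map_add' x y := by ext <;> simp
  map_mul' x y := by subst ha hb hc; ext <;> simp

theorem isUnit_or_eq_zero {R : Type*} [Field R] {a b c : R}
    (h : ∀ x y z w : R, x ^ 2 + b * x * y - a * y ^ 2 = c * (z ^ 2 + b * z * w - a * w ^ 2) →
      x = 0 ∧ y = 0 ∧ z = 0 ∧ w = 0) (x : ℍ[R,a,b,c]) : IsUnit x ∨ x = 0 := by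
  set n := x.re ^ 2 + b * x.re * x.imI - a * x.imI ^ 2 -
    c * (x.imJ ^ 2 + b * x.imJ * x.imK - a * x.imK ^ 2) with hn
  have hx : star x * x = algebraMap R _ n := by
    ext <;> simp [algebraMap_eq, hn] <;> ring
  have hx' : x * star x = algebraMap R _ n := by
    ext <;> simp [algebraMap_eq, hn] <;> ring
  by_cases h0 : n = 0
  · right
    obtain ⟨h₁, h₂, h₃, h₄⟩ := h _ _ _ _ (sub_eq_zero.mp h0)
    ext <;> assumption
  · left
    rw [isUnit_iff_exists]
    refine ⟨n⁻¹ • star x, ?_, ?_⟩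
    · rw [mul_smul_comm, hx', Algebra.algebraMap_eq_smul_one, smul_smul, inv_mul_cancel₀ h0, one_smul]
    · rw [smul_mul_assoc, hx, Algebra.algebraMap_eq_smul_one, smul_smul, inv_mul_cancel₀ h0, one_smul]

/-- The action of the quaternion algebra `(a, b, c)` on `M × M` coming from a presentation of `c` as
a value of the norm form over `M`. -/
@[simps]
def Basis.ofNormEq {E M : Type*} [CommRing E] [CommRing M] [Algebra E M] {a b c : E} {X Y : M}
    (h : X ^ 2 + algebraMap E M b * X * Y - algebraMap E M a * Y ^ 2 = algebraMap E M c) :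
    Basis (Module.End E (M × M)) a b c where
  i :=
    { toFun v := (algebraMap E M a * v.2, v.1 + algebraMap E M b * v.2)
      map_add' v w := by ext <;> simp <;> ring
      map_smul' r v := by ext <;> simp [Algebra.smul_def] <;> ring }
  j :=
    { toFun v := (X * (v.1 + algebraMap E M b * v.2) - algebraMap E M a * Y * v.2,
        Y * v.1 - X * v.2)
      map_add' v w := by ext <;> simp <;> ring
      map_smul' r v := by ext <;> simp [Algebra.smul_def] <;> ring }
  k :=
    { toFun v := (algebraMap E M a * (Y * v.1 - X * v.2),
        X * v.1 + (algebraMap E M b * Y * v.1 - algebraMap E M a * Y * v.2))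
      map_add' v w := by ext <;> simp <;> ring
      map_smul' r v := by ext <;> simp [Algebra.smul_def] <;> ring }
  i_mul_i := by
    refine LinearMap.ext fun v => Prod.ext ?_ ?_ <;> simp [Algebra.smul_def]
    ring
  j_mul_j := by
    refine LinearMap.ext fun v => Prod.ext ?_ ?_ <;> simp [Algebra.smul_def, ← h] <;> ring
  i_mul_j := by
    refine LinearMap.ext fun v => Prod.ext ?_ ?_ <;> simp
    ring
  j_mul_i := by
    refine LinearMap.ext fun v => Prod.ext ?_ ?_ <;> simp [Algebra.smul_def] <;> ring

end QuaternionAlgebra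

theorem even_finrank_of_conj_mul_ne {k E F : Type*} [Field k] [Field E] [Field F] [Algebra k E]
    [Algebra k F] [FiniteDimensional k F] (σ : E →ₐ[k] E) (hσ : ∀ e, σ (σ e) = e) {β : k}
    (hβ : ∀ d, σ d * d ≠ algebraMap k E β) {m : E ⊗[k] F}
    (hm : m * Algebra.TensorProduct.map σ (.id k F) m = algebraMap k _ β) :
    Even (Module.finrank k F) := by
  set s := Algebra.TensorProduct.map σ (.id k F) with hs
  have hss (v : E ⊗[k] F) : s (s v) = v := by
    induction v with
    | zero => simp
    | add x y hx hy => simp [hx, hy]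
    | tmul x y => simp [hs, hσ]
  have hsalg (e : E) : s (algebraMap E _ e) = algebraMap E _ (σ e) := by
    simp [hs, Algebra.TensorProduct.algebraMap_apply]
  let φ : (E ⊗[k] F) →ₛₗ[(σ : E →+* E)] (E ⊗[k] F) :=
    { toFun v := m * s v
      map_add' v w := by simp [mul_add]
      map_smul' e v := by
        rw [Algebra.smul_def, map_mul, hsalg, Algebra.smul_def]
        exact mul_left_comm _ _ _ }
  rw [← Module.finrank_baseChange (R := E) (S := k) (M' := F)]
  refine even_finrank_of_semilinear_sq hβ φ fun v => ?_
  change m * s (m * s v) = _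
  rw [map_mul, hss, ← mul_assoc, hm, Algebra.smul_def, ← IsScalarTower.algebraMap_apply]

theorem four_dvd_finrank_of_conj_mul_ne {k E F : Type*} [Field k] [Field E] [Field F] [Algebra k E]
    [Algebra k F] [FiniteDimensional k F] (σ : E →ₐ[k] E) (hσ : ∀ e, σ (σ e) = e) {p q β β' : k}
    (hunit : ∀ x : ℍ[E,algebraMap k E p,algebraMap k E q,algebraMap k E β'], IsUnit x ∨ x = 0)
    (hβ : ∀ d : ℍ[E,algebraMap k E p,algebraMap k E q,algebraMap k E β'],
      QuaternionAlgebra.mapRingHom (σ : E →+* E) (σ.commutes p) (σ.commutes q) (σ.commutes β') d * d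
        ≠ algebraMap k _ β) {m : E ⊗[k] F}
    (hm : m * Algebra.TensorProduct.map σ (.id k F) m = algebraMap k _ β)
    (hβ' : RepresentsNorm F p q β') :
    4 ∣ Module.finrank k F := by
  set s := Algebra.TensorProduct.map σ (.id k F) with hs
  have hss (v : E ⊗[k] F) : s (s v) = v := by
    induction v with
    | zero => simp
    | add x y hx hy => simp [hx, hy]
    | tmul x y => simp [hs, hσ]
  have hsalg (e : E) : s (algebraMap E _ e) = algebraMap E _ (σ e) := by
    simp [hs, Algebra.TensorProduct.algebraMap_apply]
  obtain ⟨x, y, hxy⟩ := hβ'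
  let ι : F →ₐ[k] E ⊗[k] F := Algebra.TensorProduct.includeRight
  have hsι (z : F) : s (ι z) = ι z := by simp [hs, ι]
  have hXY : (ι x) ^ 2 + algebraMap E (E ⊗[k] F) (algebraMap k E q) * ι x * ι y -
      algebraMap E (E ⊗[k] F) (algebraMap k E p) * (ι y) ^ 2 =
      algebraMap E (E ⊗[k] F) (algebraMap k E β') := by
    simp only [← IsScalarTower.algebraMap_apply]
    simpa using congrArg ι hxy
  let D := ℍ[E,algebraMap k E p,algebraMap k E q,algebraMap k E β']
  let V := (E ⊗[k] F) × (E ⊗[k] F)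
  let B := QuaternionAlgebra.Basis.ofNormEq hXY
  let : DivisionRing D := DivisionRing.ofIsUnitOrEqZero hunit
  let : Module D V := Module.compHom V (B.liftHom : D →+* Module.End E V)
  have hsmul (d : D) (v : V) : d • v = B.liftHom d v := rfl
  have : IsScalarTower E D V := ⟨fun e d v => by
    rw [hsmul, hsmul, map_smul, LinearMap.smul_apply]⟩
  have : Module.Finite D V := Module.Finite.of_restrictScalars_finite E D V
  let σD : D →+* D :=
    QuaternionAlgebra.mapRingHom (σ : E →+* E) (σ.commutes p) (σ.commutes q) (σ.commutes β')
  have hσD (d : D) : σD d = ⟨σ d.re, σ d.imI, σ d.imJ, σ d.imK⟩ := rfl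
  let φ : V →ₛₗ[σD] V :=
    { toFun v := (m * s v.1, m * s v.2)
      map_add' v w := Prod.ext
        (by change m * s (v.1 + w.1) = m * s v.1 + m * s w.1; rw [map_add, mul_add])
        (by change m * s (v.2 + w.2) = m * s v.2 + m * s w.2; rw [map_add, mul_add])
      map_smul' d v := by
        rw [hsmul, hsmul, hσD]
        ext <;> simp [B, QuaternionAlgebra.Basis.liftHom, QuaternionAlgebra.Basis.lift,
          Algebra.smul_def, hsalg, hsι, -Algebra.TensorProduct.algebraMap_apply] <;> ring }
  have heven : Even (Module.finrank D V) := by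
    refine even_finrank_of_semilinear_sq (σ := σD) (β := algebraMap k D β) hβ φ fun v => ?_
    have h1 (v : E ⊗[k] F) : m * s (m * s v) = algebraMap k _ β * v := by
      rw [map_mul, hss, ← mul_assoc, hm]
    have h2 : algebraMap k D β • v = algebraMap k E β • v := by
      rw [← smul_one_smul D (algebraMap k E β) v]
      congr 1
      rw [← Algebra.algebraMap_eq_smul_one]
      rfl
    rw [h2]
    refine Prod.ext ?_ ?_
    · change m * s (m * s v.1) = algebraMap k E β • v.1
      rw [h1, Algebra.smul_def, ← IsScalarTower.algebraMap_apply]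
    · change m * s (m * s v.2) = algebraMap k E β • v.2
      rw [h1, Algebra.smul_def, ← IsScalarTower.algebraMap_apply]
  have h1 := Module.finrank_mul_finrank E D V
  have h2 : Module.finrank E V = 2 * Module.finrank k F := by
    rw [Module.finrank_prod, Module.finrank_baseChange]; ring
  have h3 : Module.finrank E D = 4 := QuaternionAlgebra.finrank_eq_four _ _ _
  obtain ⟨c, hc⟩ := heven
  rw [h2, h3, hc] at h1
  exact ⟨c, by omega⟩

/-- Conjugation `ω ↦ q - ω` on `k[ω]`, as an algebra homomorphism. -/
@[simps]
def QuadraticAlgebra.conj (k : Type*) [CommRing k] (p q : k) :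
    QuadraticAlgebra k p q →ₐ[k] QuadraticAlgebra k p q where
  toFun := star
  map_one' := star_one _
  map_zero' := star_zero _
  map_add' := star_add
  map_mul' x y := by rw [star_mul, mul_comm]
  commutes' r := by ext <;> simp

/-- A representation of `β` over `F` gives an element of `k[ω] ⊗ F` of relative norm `β`. -/
theorem RepresentsNorm.exists_mul_conj_eq {k F : Type*} [Field k] [Field F] [Algebra k F] {p q β : k}
    (h : RepresentsNorm F p q β) : ∃ m : QuadraticAlgebra k p q ⊗[k] F,
      m * Algebra.TensorProduct.map (QuadraticAlgebra.conj k p q) (.id k F) m =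
        algebraMap k _ β := by
  obtain ⟨x, y, h⟩ := h
  let ι : F →ₐ[k] QuadraticAlgebra k p q ⊗[k] F := Algebra.TensorProduct.includeRight
  let κ : QuadraticAlgebra k p q →ₐ[k] QuadraticAlgebra k p q ⊗[k] F :=
    Algebra.TensorProduct.includeLeft
  let w : QuadraticAlgebra k p q := QuadraticAlgebra.omega
  have hι (z : F) : Algebra.TensorProduct.map (QuadraticAlgebra.conj k p q) (.id k F) (ι z) =
      ι z := by simp [ι]
  have hκ : Algebra.TensorProduct.map (QuadraticAlgebra.conj k p q) (.id k F) (κ w) =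
      algebraMap k _ q - κ w := by
    have : QuadraticAlgebra.conj k p q w = algebraMap k _ q - w := by ext <;> simp [w]
    rw [← AlgHom.commutes κ q, ← map_sub, ← this]
    simp [κ]
  have hw : κ w * κ w = algebraMap k _ p + algebraMap k _ q * κ w := by
    rw [← map_mul, QuadraticAlgebra.omega_mul_omega_eq_algebraMap]
    simp only [map_add, map_mul, AlgHom.commutes, w]
  refine ⟨ι x + κ w * ι y, ?_⟩
  have h' := congrArg ι h
  simp only [map_add, map_sub, map_mul, map_pow, AlgHom.commutes] at h'
  rw [map_add, map_mul, hι, hι, hκ]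
  linear_combination h' - (ι y) ^ 2 * hw

section Divisibility

variable {k F : Type} [Field k] [Field F] [Algebra k F] [FiniteDimensional k F]

/-- A finite extension over which a binary norm form acquires a new value has even degree. -/
theorem RepresentsNorm.two_dvd_finrank {p q β : k} (hr : ∀ r : k, r ^ 2 ≠ p + q * r)
    (h : ¬ RepresentsNorm k p q β) (hF : RepresentsNorm F p q β) : 2 ∣ Module.finrank k F := by
  have : Fact (∀ r : k, r ^ 2 ≠ p + q * r) := ⟨hr⟩
  obtain ⟨m, hm⟩ := hF.exists_mul_conj_eq
  refine (even_finrank_of_conj_mul_ne (QuadraticAlgebra.conj k p q) (by simp) (fun d hd => h ?_)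
    hm).two_dvd
  refine ⟨d.re, d.im, ?_⟩
  have := congrArg QuadraticAlgebra.re hd
  simp at this
  simp
  linear_combination this

/-- If no extension of degree dividing `2` makes both norm forms represent the given values,
then every extension that does has degree divisible by `4`. -/
theorem RepresentsNorm.four_dvd_finrank {p₁ q₁ β₁ p₂ q₂ β₂ : k} (hd₁ : q₁ ^ 2 + 4 * p₁ ≠ 0)
    (hd₂ : q₂ ^ 2 + 4 * p₂ ≠ 0) (hβ₁ : β₁ ≠ 0) (hβ₂ : β₂ ≠ 0)
    (hr₁ : ∀ r : k, r ^ 2 ≠ p₁ + q₁ * r)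
    (h : ∀ (K : Type) [Field K] [Algebra k K], FiniteDimensional k K → Algebra.IsSeparable k K →
      Module.finrank k K ∣ 2 → RepresentsNorm K p₁ q₁ β₁ → ¬ RepresentsNorm K p₂ q₂ β₂)
    (hF₁ : RepresentsNorm F p₁ q₁ β₁) (hF₂ : RepresentsNorm F p₂ q₂ β₂) :
    4 ∣ Module.finrank k F := by
  have : Fact (∀ r : k, r ^ 2 ≠ p₁ + q₁ * r) := ⟨hr₁⟩
  obtain ⟨m, hm⟩ := hF₁.exists_mul_conj_eq
  refine four_dvd_finrank_of_conj_mul_ne (QuadraticAlgebra.conj k p₁ q₁) (by simp) ?_ ?_ hm hF₂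
  · refine QuaternionAlgebra.isUnit_or_eq_zero fun x y z w hxy => ?_
    by_contra hne
    have hE : RepresentsNorm (QuadraticAlgebra k p₁ q₁) p₂ q₂ β₂ :=
      .of_isotropic hd₂ (by tauto) hxy
    obtain ⟨K, _, _, hfin, hsep, hdeg, θ, hθ⟩ := exists_separable_root hd₁
    refine h K hfin hsep hdeg (.of_root hd₁ hθ) (hE.map (QuadraticAlgebra.lift ⟨θ, ?_⟩))
    rw [← pow_two, hθ, Algebra.smul_def, Algebra.smul_def, mul_one]
  · intro d hd
    change (⟨star d.re, star d.imI, star d.imJ, star d.imK⟩ : ℍ[_,_,_,_]) * d = _ at hd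
    have h0 := congrArg QuaternionAlgebra.re hd
    have hI := congrArg QuaternionAlgebra.imI hd
    have hJ := congrArg QuaternionAlgebra.imJ hd
    have hK := congrArg QuaternionAlgebra.imK hd
    have h0r := congrArg QuadraticAlgebra.re h0
    have h0i := congrArg QuadraticAlgebra.im h0
    have hIr := congrArg QuadraticAlgebra.re hI
    have hIi := congrArg QuadraticAlgebra.im hI
    have hJr := congrArg QuadraticAlgebra.re hJ
    have hJi := congrArg QuadraticAlgebra.im hJ
    have hKr := congrArg QuadraticAlgebra.re hK
    have hKi := congrArg QuadraticAlgebra.im hK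
    clear h0 hI hJ hK hd
    simp [IsScalarTower.algebraMap_apply k (QuadraticAlgebra k p₁ q₁) ℍ[_,_,_,_],
      QuaternionAlgebra.algebraMap_eq] at h0r h0i hIr hIi hJr hJi hKr hKi
    let a : ℍ[k,p₂,q₂,β₂] := ⟨d.re.re, d.imI.re, d.imJ.re, d.imK.re⟩
    let b : ℍ[k,p₂,q₂,β₂] := ⟨d.re.im, d.imI.im, d.imJ.im, d.imK.im⟩
    have hab : a * b = b * a := by
      ext <;> simp [a, b]
      · linear_combination h0i
      · linear_combination hIi
      · linear_combination hJi
      · linear_combination hKi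
    have hN : a * a + q₁ • (b * a) - p₁ • (b * b) = algebraMap k _ β₁ := by
      ext <;> simp [a, b, QuaternionAlgebra.algebraMap_eq]
      · linear_combination h0r
      · linear_combination hIr
      · linear_combination hJr
      · linear_combination hKr
    rw [← hab] at hN
    obtain ⟨t, n, htn, h₁, h₂⟩ := exists_separable_of_commute hd₁ hd₂ hβ₁ hβ₂ hab hN
    obtain ⟨K, _, _, hfin, hsep, hdeg, θ, hθ⟩ := exists_separable_root htn
    exact h K hfin hsep hdeg (h₁ K θ hθ) (h₂ K θ hθ)

end Divisibility

/-- A separable quadratic extension has a basis `1, ω` with `ω² = p + q ω`, where `X² - qX - p`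
has nonzero discriminant and no root in the base field. -/
theorem exists_basis_one_of_finrank_eq_two {k L : Type*} [Field k] [Field L] [Algebra k L]
    [Algebra.IsSeparable k L] (h : Module.finrank k L = 2) :
    ∃ (b : Module.Basis (Fin 2) k L) (p q : k), b 0 = 1 ∧
      b 1 ^ 2 = algebraMap k L p + algebraMap k L q * b 1 ∧ q ^ 2 + 4 * p ≠ 0 ∧
      ∀ r : k, r ^ 2 ≠ p + q * r := by
  obtain ⟨θ, hθ⟩ : ∃ θ : L, θ ∉ (⊥ : Subalgebra k L) := by
    by_contra! hall
    have : (⊥ : Subalgebra k L) = ⊤ := eq_top_iff.mpr fun x _ => hall x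
    have := Subalgebra.bot_eq_top_iff_finrank_eq_one.mp this
    omega
  have hθ' (r : k) : algebraMap k L r ≠ θ := fun hr => hθ (Algebra.mem_bot.mpr ⟨r, hr⟩)
  have hli : LinearIndependent k ![1, θ] := by
    rw [LinearIndependent.pair_iff' one_ne_zero]
    intro r hr
    exact hθ' r (by rw [← hr, Algebra.algebraMap_eq_smul_one])
  let b := basisOfLinearIndependentOfCardEqFinrank hli (by simp [h])
  have hb0 : b 0 = 1 := by simp [b]
  have hb1 : b 1 = θ := by simp [b]
  have hsum := b.sum_repr (θ ^ 2)
  rw [Fin.sum_univ_two, hb0, hb1, Algebra.smul_def, Algebra.smul_def, mul_one] at hsum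
  set p := b.repr (θ ^ 2) 0
  set q := b.repr (θ ^ 2) 1
  have hr (r : k) : r ^ 2 ≠ p + q * r := by
    intro hr
    have hr' := congrArg (algebraMap k L) hr
    simp only [map_add, map_mul, map_pow] at hr'
    have : (θ - algebraMap k L r) * (θ + algebraMap k L r - algebraMap k L q) = 0 := by
      linear_combination -hsum - hr'
    rcases mul_eq_zero.mp this with h0 | h0
    · exact hθ' r (sub_eq_zero.mp h0).symm
    · refine hθ' (q - r) ?_
      rw [map_sub]
      linear_combination -h0
  refine ⟨b, p, q, hb0, by rw [hb1, hsum], fun hd => ?_, hr⟩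
  have hd' := congrArg (algebraMap k L) hd
  simp only [map_add, map_mul, map_pow, map_ofNat, map_zero] at hd'
  have hder : 2 * θ = algebraMap k L q := by
    have : (2 * θ - algebraMap k L q) ^ 2 = 0 := by
      linear_combination -4 * hsum + hd'
    exact sub_eq_zero.mp (pow_eq_zero_iff two_ne_zero |>.mp this)
  have h2 : (2 : k) = 0 := by
    by_contra h2
    refine hθ' (q / 2) ?_
    have h2L : (2 : L) ≠ 0 := by
      rw [← map_ofNat (algebraMap k L) 2]
      exact (map_ne_zero _).mpr h2
    rw [map_div₀, map_ofNat, ← hder]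
    field_simp
  have hq : q = 0 := by
    apply FaithfulSMul.algebraMap_injective k L
    rw [← hder, map_zero, ← map_ofNat (algebraMap k L) 2, h2, map_zero, zero_mul]
  have : CharP k 2 := CharTwo.of_one_ne_zero_of_two_eq_zero one_ne_zero h2
  have : ExpChar k 2 := .prime Nat.prime_two
  have hmem : θ ∈ perfectClosure k L := (mem_perfectClosure_iff_pow_mem 2).mpr
    ⟨1, p, by rw [pow_one, ← hsum, hq, map_zero, zero_mul, add_zero]⟩
  rw [perfectClosure.eq_bot_of_isSeparable] at hmem
  obtain ⟨r, hr⟩ := IntermediateField.mem_bot.mp hmem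
  exact hθ' r hr

theorem stmt4 (k ks : Type) [Field k] [Field ks] [Algebra k ks] [IsSepClosure k ks]
    (L₁ L₂ : IntermediateField k ks)
    (h1 : Module.finrank k L₁ = 2) (h2 : Module.finrank k L₂ = 2)
    (β₁ β₂ : kˣ) :
    ∃ (F : Type) (_ : Field F) (_ : Algebra k F),
      FiniteDimensional k F ∧ Algebra.IsSeparable k F ∧
      IsBaseNorm k L₁ F (β₁ : k) ∧ IsBaseNorm k L₂ F (β₂ : k) ∧
      ∀ (F' : Type) (_ : Field F') (_ : Algebra k F'),
        FiniteDimensional k F' → Algebra.IsSeparable k F' →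
        IsBaseNorm k L₁ F' (β₁ : k) → IsBaseNorm k L₂ F' (β₂ : k) →
        Module.finrank k F ∣ Module.finrank k F' := by
  have : Algebra.IsSeparable k ks := IsSepClosure.separable
  have : Algebra.IsSeparable k L₁ := Algebra.isSeparable_tower_bot_of_isSeparable k L₁ ks
  have : Algebra.IsSeparable k L₂ := Algebra.isSeparable_tower_bot_of_isSeparable k L₂ ks
  obtain ⟨b₁, p₁, q₁, hb₁, hω₁, hd₁, hr₁⟩ := exists_basis_one_of_finrank_eq_two h1
  obtain ⟨b₂, p₂, q₂, hb₂, hω₂, hd₂, hr₂⟩ := exists_basis_one_of_finrank_eq_two h2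
  simp only [isBaseNorm_iff_representsNorm b₁ hb₁ hω₁ β₁.ne_zero,
    isBaseNorm_iff_representsNorm b₂ hb₂ hω₂ β₂.ne_zero]
  by_cases hk : RepresentsNorm k p₁ q₁ (β₁ : k) ∧ RepresentsNorm k p₂ q₂ (β₂ : k)
  · exact ⟨k, inferInstance, inferInstance, inferInstance, inferInstance, hk.1, hk.2,
      fun F' _ _ _ _ _ _ => by simp⟩
  by_cases hK : ∃ (K : Type) (_ : Field K) (_ : Algebra k K), FiniteDimensional k K ∧
      Algebra.IsSeparable k K ∧ Module.finrank k K ∣ 2 ∧ RepresentsNorm K p₁ q₁ (β₁ : k) ∧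
      RepresentsNorm K p₂ q₂ (β₂ : k)
  · obtain ⟨K, _, _, hfin, hsep, hdeg, hK₁, hK₂⟩ := hK
    refine ⟨K, _, _, hfin, hsep, hK₁, hK₂, fun F' _ _ _ _ hF₁ hF₂ => hdeg.trans ?_⟩
    rcases not_and_or.mp hk with hk | hk
    · exact hF₁.two_dvd_finrank hr₁ hk
    · exact hF₂.two_dvd_finrank hr₂ hk
  push Not at hK
  have : FiniteDimensional k L₁ := .of_finrank_pos (by omega)
  have : FiniteDimensional k L₂ := .of_finrank_pos (by omega)
  refine ⟨(L₁ ⊔ L₂ : IntermediateField k ks), inferInstance, inferInstance, inferInstance,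
    Algebra.isSeparable_tower_bot_of_isSeparable k _ ks, ?_, ?_, fun F' _ _ _ _ hF₁ hF₂ => ?_⟩
  · refine .of_root hd₁ (θ := IntermediateField.inclusion le_sup_left (b₁ 1)) ?_
    simpa using congrArg (IntermediateField.inclusion (le_sup_left : L₁ ≤ L₁ ⊔ L₂)) hω₁
  · refine .of_root hd₂ (θ := IntermediateField.inclusion le_sup_right (b₂ 1)) ?_
    simpa using congrArg (IntermediateField.inclusion (le_sup_right : L₂ ≤ L₁ ⊔ L₂)) hω₂
  · have h4 : Module.finrank k (L₁ ⊔ L₂ : IntermediateField k ks) ∣ 4 := by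
      obtain ⟨c, hc⟩ := IntermediateField.finrank_dvd_of_le_right (le_sup_left : L₁ ≤ L₁ ⊔ L₂)
      have hle := IntermediateField.finrank_sup_le L₁ L₂
      have hpos : 0 < Module.finrank k (L₁ ⊔ L₂ : IntermediateField k ks) := Module.finrank_pos
      rw [h1] at hc
      rw [h1, h2] at hle
      rw [hc] at hle hpos ⊢
      have : c = 1 ∨ c = 2 := by omega
      rcases this with rfl | rfl <;> norm_num
    exact h4.trans (RepresentsNorm.four_dvd_finrank hd₁ hd₂ β₁.ne_zero β₂.ne_zero hr₁
      (fun K _ _ => hK K _ _) hF₁ hF₂)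
end
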